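/- Let G be a Jordan domain with rectifiable boundary L of length l, fix ζ ∈ G, and for n ∈ ℕ set Q_n(z) = ((l/2π)·Σ_{k=0}^n |p_k(ζ)|²)^{−1/2} · Σ_{k=0}^n conj(p_k(ζ))·p_k(z), so that J'_{2n+1} = Q_n². Then ‖φ − J_{2n+1}‖_∞ ≤ √(2πl) · ‖√(φ') − Q_n‖₂, where √(φ') is the analytic branch of the square root of φ' on G with √(φ'(ζ)) > 0. -/

import Mathlib

open Complex MeasureTheory Set Filter Metric

noncomputable section

/-- A bounded Jordan domain `G ⊆ ℂ` whose boundary is a rectifiable Jordan curve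
of length `l`, given together with a unit-speed (arclength) parametrization `γ`
of the boundary curve `L = frontier G`. -/
structure JordanDomain where
  /-- the domain -/
  G : Set ℂ
  isOpen : IsOpen G
  nonempty : G.Nonempty
  bounded : Bornology.IsBounded G
  connected : IsConnected G
  simplyConnected : SimplyConnectedSpace ↥G
  /-- the length of the boundary curve -/
  l : ℝ
  l_pos : 0 < l
  /-- arclength parametrization of the boundary curve -/
  γ : ℝ → ℂ
  γ_cont : Continuous γ
  γ_periodic : Function.Periodic γ l
  γ_injOn : InjOn γ (Ico 0 l)
  γ_boundary : γ '' Ico 0 l = frontier G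
  /-- `γ` is a unit-speed (arclength) parametrization; in particular the boundary
  is rectifiable with length `l`. -/
  γ_unitSpeed : ∀ s t : ℝ, s ≤ t → t ≤ s + l →
    eVariationOn γ (Icc s t) = ENNReal.ofReal (t - s)

/-- The `E₂(G)`-norm of (the boundary trace of) a function, computed through the
arclength parametrization of the boundary: `‖g‖₂ = ((1/l) ∫₀^l ‖g(s)‖² ds)^{1/2}`. -/
def JordanDomain.bnorm (D : JordanDomain) (g : ℝ → ℂ) : ℝ :=
  Real.sqrt ((1 / D.l) * ∫ s in (0:ℝ)..D.l, ‖g s‖ ^ 2)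

/-- `p` is the sequence of orthonormal polynomials of `E₂(G)` obtained by Gram–Schmidt
orthonormalization of the monomials `1, z, z², …`: `deg p k = k`, the leading
coefficients are positive reals, and the polynomials are orthonormal with respect to
the arclength inner product `(f,g) = (1/l) ∫_L f conj(g) |dz|`. -/
def JordanDomain.IsONPolys (D : JordanDomain) (p : ℕ → Polynomial ℂ) : Prop :=
  (∀ k, (p k).natDegree = k) ∧
  (∀ k, ∃ c : ℝ, 0 < c ∧ (p k).leadingCoeff = (c : ℂ)) ∧
  (∀ j k, (1 / (D.l : ℂ)) * (∫ s in (0:ℝ)..D.l,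
      (p j).eval (D.γ s) * (starRingEnd ℂ) ((p k).eval (D.γ s))) =
    if j = k then 1 else 0)

/-- The `n`-th partial sum `Σ_{k=0}^n conj(p_k(ζ))·p_k(z)` of the Szegő kernel expansion. -/
def partialSum (p : ℕ → Polynomial ℂ) (ζ : ℂ) (n : ℕ) : ℂ → ℂ := fun z =>
  ∑ k ∈ Finset.range (n + 1), (starRingEnd ℂ) ((p k).eval ζ) * (p k).eval z

/-- The Szegő kernel `K(z,ζ) = Σ_{k=0}^∞ conj(p_k(ζ))·p_k(z)`. -/
def szegoKernel (p : ℕ → Polynomial ℂ) (ζ z : ℂ) : ℂ :=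
  ∑' k : ℕ, (starRingEnd ℂ) ((p k).eval ζ) * (p k).eval z

/-- The approximating polynomials
`J_{2n+1}(z) = (2π/l)·(∫_ζ^z (Σ_{k=0}^n conj(p_k(ζ))p_k(t))² dt) / (Σ_{k=0}^n |p_k(ζ)|²)`;
the (path-independent) integral of the polynomial integrand is written out explicitly,
using `∫_ζ^z t^i dt = (z^{i+1} - ζ^{i+1})/(i+1)`. -/
def Jfun (D : JordanDomain) (p : ℕ → Polynomial ℂ) (ζ : ℂ) (n : ℕ) : ℂ → ℂ := fun z =>
  let S : Polynomial ℂ :=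
    (∑ k ∈ Finset.range (n + 1), Polynomial.C ((starRingEnd ℂ) ((p k).eval ζ)) * p k) ^ 2
  (((2 * Real.pi / D.l : ℝ) : ℂ) / (∑ k ∈ Finset.range (n + 1), ((‖(p k).eval ζ‖ : ℂ)) ^ 2)) *
    ∑ i ∈ Finset.range (S.natDegree + 1),
      S.coeff i * ((z ^ (i + 1) - ζ ^ (i + 1)) / ((i : ℂ) + 1))

/-- `Q_n(z) = ((l/2π)·Σ_{k=0}^n |p_k(ζ)|²)^{-1/2} · Σ_{k=0}^n conj(p_k(ζ))·p_k(z)`,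
so that `J'_{2n+1} = Q_n²`. -/
def Qfun (D : JordanDomain) (p : ℕ → Polynomial ℂ) (ζ : ℂ) (n : ℕ) : ℂ → ℂ := fun z =>
  ((Real.sqrt ((D.l / (2 * Real.pi)) *
      ∑ k ∈ Finset.range (n + 1), ‖(p k).eval ζ‖ ^ 2) : ℝ) : ℂ)⁻¹ * partialSum p ζ n z

/-- The sup norm `⨆_{z ∈ K} ‖f(z)‖` on a set `K ⊆ ℂ`. -/
def supNormOn (K : Set ℂ) (f : ℂ → ℂ) : ℝ := ⨆ z : K, ‖f (z : ℂ)‖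

/-- `g` has nontangential limit `v` at the boundary point `w` of `G`:
`g(z) → v` as `z → w` inside every cone `{z ∈ G : ‖z - w‖ ≤ M·dist(z, ∂G)}`. -/
def NTLim (G : Set ℂ) (g : ℂ → ℂ) (w v : ℂ) : Prop :=
  ∀ M : ℝ, 1 < M →
    Tendsto g (nhdsWithin w {z | z ∈ G ∧ ‖z - w‖ ≤ M * infDist z (frontier G)}) (nhds v)

/-- `φ` is the conformal map of `G` onto the unit disk `D` normalized by
`φ(ζ) = 0` and `φ'(ζ) > 0`. -/
structure ConformalOnto (G : Set ℂ) (φ : ℂ → ℂ) (ζ : ℂ) : Prop where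
  differentiable : ∀ z ∈ G, DifferentiableAt ℂ φ z
  bijOn : BijOn φ G (ball (0 : ℂ) 1)
  map_center : φ ζ = 0
  deriv_center_pos : ∃ c : ℝ, 0 < c ∧ deriv φ ζ = (c : ℂ)

/-- `G` is a Smirnov domain: for any conformal map `ψ` of the unit disk onto `G`,
`log|ψ'|` is represented by the Poisson integral of its (radial) boundary values.
(By the Keldysh–Lavrentiev theorem this is equivalent to polynomials being dense
in the Smirnov classes `E_p(G)`.) -/
def IsSmirnovDomain (G : Set ℂ) : Prop :=
  ∀ ψ : ℂ → ℂ,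
    (∀ w ∈ ball (0 : ℂ) 1, DifferentiableAt ℂ ψ w) →
    BijOn ψ (ball (0 : ℂ) 1) G →
    ∃ h : ℝ → ℝ,
      IntervalIntegrable h volume 0 (2 * Real.pi) ∧
      (∀ᵐ (θ : ℝ) ∂(volume.restrict (Ioc (0 : ℝ) (2 * Real.pi))),
        Tendsto (fun r : ℝ => Real.log ‖deriv ψ ((r : ℂ) * Complex.exp ((θ : ℂ) * Complex.I))‖)
          (nhdsWithin 1 (Iio 1)) (nhds (h θ))) ∧
      (∀ w ∈ ball (0 : ℂ) 1,
        Real.log ‖deriv ψ w‖ =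
          (1 / (2 * Real.pi)) * ∫ θ in (0 : ℝ)..(2 * Real.pi),
            ((1 - ‖w‖ ^ 2) / ‖Complex.exp ((θ : ℂ) * Complex.I) - w‖ ^ 2) * h θ)

/-- The (interior) opening angle of `G` at the boundary point `z₀` equals `a`:
the angular measure of the set of directions in which `G` is seen from `z₀`
at distance `r` tends to `a` as `r → 0⁺`. -/
def HasCornerAngle (G : Set ℂ) (z₀ : ℂ) (a : ℝ) : Prop :=
  Tendsto (fun r : ℝ =>
      (volume {θ : ℝ | θ ∈ Ico 0 (2 * Real.pi) ∧
        z₀ + (r : ℂ) * Complex.exp ((θ : ℂ) * Complex.I) ∈ G}).toReal)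
    (nhdsWithin 0 (Ioi 0)) (nhds a)

/-- The boundary of the Jordan domain `D` is piecewise analytic: it is a union of
finitely many analytic arcs `τ i '' [0,1]` (each `τ i` is conformal, i.e. injective
and holomorphic, on an open neighborhood `U i` of the segment `[0,1]`), consecutive
arcs are joined at the junction points `τ i 1 = τ (i+1) 0`, and at the junction
point `τ i 1` the exterior angle of `G` is `extAngle i · π` (so the interior
opening angle there is `(2 - extAngle i) · π`). -/
structure PiecewiseAnalyticBoundary (D : JordanDomain) where
  /-- number of analytic arcs -/
  m : ℕ
  m_pos : 0 < m
  /-- conformal parametrizations of the arcs -/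
  τ : Fin m → ℂ → ℂ
  /-- neighborhoods of the segment `[0,1]` on which the `τ i` are conformal -/
  U : Fin m → Set ℂ
  U_open : ∀ i, IsOpen (U i)
  seg_sub : ∀ i, (Complex.ofReal '' Icc (0 : ℝ) 1) ⊆ U i
  analytic : ∀ i, DifferentiableOn ℂ (τ i) (U i)
  inj : ∀ i, InjOn (τ i) (U i)
  cover : (⋃ i, τ i '' (Complex.ofReal '' Icc (0 : ℝ) 1)) = frontier D.G
  junction : ∀ i : Fin m,
    τ i 1 = τ (Fin.mk ((i.val + 1) % m) (Nat.mod_lt _ m_pos)) 0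
  /-- `extAngle i · π` is the exterior angle at the junction point `τ i 1` -/
  extAngle : Fin m → ℝ
  extAngle_mem : ∀ i, extAngle i ∈ Ioo (0 : ℝ) 2
  extAngle_spec : ∀ i, HasCornerAngle D.G (τ i 1) ((2 - extAngle i) * Real.pi)

end

/-!
Set `Δ = φ - J`, where `J' = Q²`, and let `V` be the boundary trace of `√φ'`. Since `Δ` vanishes at
`ζ`, the maximum principle bounds `|Δ|` on `G` by the oscillation of `Δ` on the boundary curve `γ`,
and the oscillation of a function along a closed curve is at most half of its variation:
`|Δ| ≤ ½ ∫ |V² - Q²| ds = ½ ∫ |V - Q| |V + Q| ds`. As `V` and `Q` both have norm at most `√(2π)` in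
`L²(ds)`, the Cauchy–Schwarz inequality turns this into `√(2π) ‖V - Q‖_{L²(ds)}`.

The variation of `φ ∘ γ` can be computed from `V` for the following reasons. The preimage under `φ`
of a lens of the disc near a boundary point is connected, so `φ ∘ γ` takes each value on one arc
only, and `φ ∘ γ = φ (γ 0) exp (i θ)` with `θ` monotone. As in the theorem of F. and M. Riesz, the
exponential of the circle mean of `u` is bounded by a multiple of `∫ exp (u ∘ φ ∘ γ) ds`, and `u`
close to a step function shows that `θ` maps small sets to small sets, so it is absolutely
continuous. Finally, the jump of the Cauchy integral for `φ'` across a regular boundary point tends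
to the tangential derivative of `φ ∘ γ`; the integral vanishes outside and approach along the normal
is nontangential, so this derivative is `V² γ'`.
-/

/-! ### Absolutely continuous curves -/

section AbsolutelyContinuous

open scoped NNReal

theorem absolutelyContinuousOnInterval_comp_of_lipschitzOnWith {X Y : Type*} [PseudoMetricSpace X]
    [PseudoMetricSpace Y] {f : ℝ → X} {g : X → Y} {a b : ℝ} {K : ℝ≥0} {s : Set X}
    (hg : LipschitzOnWith K g s) (hf : AbsolutelyContinuousOnInterval f a b)
    (hs : MapsTo f (uIcc a b) s) : AbsolutelyContinuousOnInterval (g ∘ f) a b := by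
  rw [absolutelyContinuousOnInterval_iff] at hf ⊢
  intro ε hε
  obtain ⟨δ, hδ, hfδ⟩ := hf (ε / (K + 1)) (by positivity)
  refine ⟨δ, hδ, fun E hE hEδ => ?_⟩
  calc ∑ i ∈ Finset.range E.1, dist (g (f (E.2 i).1)) (g (f (E.2 i).2))
      ≤ ∑ i ∈ Finset.range E.1, K * dist (f (E.2 i).1) (f (E.2 i).2) :=
        Finset.sum_le_sum fun i hi =>
          hg.dist_le_mul _ (hs (hE.1 i hi).1) _ (hs (hE.1 i hi).2)
    _ ≤ (K + 1) * ∑ i ∈ Finset.range E.1, dist (f (E.2 i).1) (f (E.2 i).2) := by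
        rw [← Finset.mul_sum]
        gcongr
        linarith
    _ < ε := by
        rw [← lt_div_iff₀' (by positivity)]
        exact hfδ E hE hEδ

theorem intervalIntegrable_and_integral_eq_sub_of_real {f f' : ℝ → ℝ} {a b : ℝ}
    (hf : AbsolutelyContinuousOnInterval f a b)
    (hf' : ∀ᵐ x, x ∈ uIcc a b → HasDerivAt f (f' x) x) :
    IntervalIntegrable f' volume a b ∧ ∫ x in a..b, f' x = f b - f a := by
  have deriv_eq : ∀ᵐ x, x ∈ uIoc a b → deriv f x = f' x := by
    filter_upwards [hf'] with x hx hxm using (hx (uIoc_subset_uIcc hxm)).deriv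
  refine ⟨hf.intervalIntegrable_deriv.congr_ae ?_, ?_⟩
  · rwa [EventuallyEq, ae_restrict_iff' measurableSet_uIoc]
  · rw [← hf.integral_deriv_eq_sub]
    refine intervalIntegral.integral_congr_ae ?_
    filter_upwards [deriv_eq] with x hx hxm using (hx hxm).symm

theorem intervalIntegrable_and_integral_eq_sub {f f' : ℝ → ℂ} {a b : ℝ}
    (hf : AbsolutelyContinuousOnInterval f a b)
    (hf' : ∀ᵐ x, x ∈ uIcc a b → HasDerivAt f (f' x) x) :
    IntervalIntegrable f' volume a b ∧ ∫ x in a..b, f' x = f b - f a := by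
  have comp_clm (L : ℂ →L[ℝ] ℝ) :
      IntervalIntegrable (L ∘ f') volume a b ∧ ∫ x in a..b, L (f' x) = L (f b) - L (f a) := by
    refine intervalIntegrable_and_integral_eq_sub_of_real
      (absolutelyContinuousOnInterval_comp_of_lipschitzOnWith
        (L.lipschitz.lipschitzOnWith (s := univ)) hf (mapsTo_univ _ _)) ?_
    filter_upwards [hf'] with x hx hxm using L.hasFDerivAt.comp_hasDerivAt x (hx hxm)
  obtain ⟨int_re, eq_re⟩ := comp_clm Complex.reCLM
  obtain ⟨int_im, eq_im⟩ := comp_clm Complex.imCLM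
  have int_f' : IntervalIntegrable f' volume a b := by
    rw [intervalIntegrable_iff] at int_re int_im ⊢
    exact Integrable.re_im_iff.1 ⟨int_re, int_im⟩
  refine ⟨int_f', Complex.ext ?_ ?_⟩
  · rw [Complex.sub_re, ← Complex.reCLM_apply, ← Complex.reCLM.intervalIntegral_comp_comm int_f']
    exact eq_re
  · rw [Complex.sub_im, ← Complex.imCLM_apply, ← Complex.imCLM.intervalIntegral_comp_comm int_f']
    exact eq_im

theorem absolutelyContinuousOnInterval_comp_of_differentiableOn {f : ℝ → ℂ} {F : ℂ → ℂ} {U : Set ℂ}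
    {a b : ℝ} (hU : IsOpen U) (hF : DifferentiableOn ℂ F U)
    (hf : AbsolutelyContinuousOnInterval f a b) (hfU : MapsTo f (uIcc a b) U) :
    AbsolutelyContinuousOnInterval (F ∘ f) a b := by
  have locally_lipschitz : LocallyLipschitzOn (f '' uIcc a b) F := by
    rintro _ ⟨s, hs, rfl⟩
    have hFs : ContDiffAt ℝ 1 F (f s) :=
      ((hF.contDiffOn hU (n := 1)).contDiffAt (hU.mem_nhds (hfU hs))).restrict_scalars ℝ
    obtain ⟨K, t, ht, hK⟩ := hFs.exists_lipschitzOnWith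
    exact ⟨K, t, mem_nhdsWithin_of_mem_nhds ht, hK⟩
  obtain ⟨K, hK⟩ := locally_lipschitz.exists_lipschitzOnWith_of_compact
    (isCompact_uIcc.image_of_continuousOn hf.continuousOn)
  exact absolutelyContinuousOnInterval_comp_of_lipschitzOnWith hK hf (mapsTo_image f _)

variable {γ : ℝ → ℂ} {K : ℝ≥0} {a b : ℝ}

theorem ae_hasDerivAt_of_lipschitzWith (hγ : LipschitzWith K γ) :
    ∀ᵐ s, HasDerivAt γ (deriv γ s) s := by
  filter_upwards [hγ.ae_differentiableAt_real] with s hs using hs.hasDerivAt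

theorem intervalIntegrable_deriv_of_lipschitzWith (hγ : LipschitzWith K γ) :
    IntervalIntegrable (deriv γ) volume a b :=
  (intervalIntegrable_const (c := (K : ℝ))).mono_fun (measurable_deriv γ).aestronglyMeasurable
    (.of_forall fun s => by simpa using norm_deriv_le_of_lipschitz (x₀ := s) hγ)

theorem intervalIntegrable_mul_deriv_of_lipschitzWith (hγ : LipschitzWith K γ) {f : ℝ → ℂ}
    (hf : ContinuousOn f (uIcc a b)) :
    IntervalIntegrable (fun s => f s * deriv γ s) volume a b :=
  (intervalIntegrable_deriv_of_lipschitzWith hγ).continuousOn_mul hf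

theorem integral_comp_mul_deriv_eq_sub (hγ : LipschitzWith K γ) {U : Set ℂ} {F F' : ℂ → ℂ}
    (hU : IsOpen U) (hF : ∀ z ∈ U, HasDerivAt F (F' z) z) (hγU : MapsTo γ (uIcc a b) U) :
    ∫ s in a..b, F' (γ s) * deriv γ s = F (γ b) - F (γ a) := by
  refine (intervalIntegrable_and_integral_eq_sub (f := F ∘ γ)
    (absolutelyContinuousOnInterval_comp_of_differentiableOn hU
      (fun z hz => (hF z hz).differentiableAt.differentiableWithinAt)
      hγ.lipschitzOnWith.absolutelyContinuousOnInterval hγU) ?_).2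
  filter_upwards [ae_hasDerivAt_of_lipschitzWith hγ] with s hs hsm
  exact (hF _ (hγU hsm)).comp s hs

theorem integral_deriv_eq_sub_of_lipschitzWith (hγ : LipschitzWith K γ) :
    ∫ s in a..b, deriv γ s = γ b - γ a := by
  simpa using integral_comp_mul_deriv_eq_sub hγ isOpen_univ (F := id) (F' := 1)
    (fun z _ => hasDerivAt_id z) (mapsTo_univ _ _)

theorem eVariationOn_le_integral_norm_deriv (hγ : LipschitzWith K γ) :
    eVariationOn γ (Icc a b) ≤ ENNReal.ofReal (∫ s in a..b, ‖deriv γ s‖) := by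
  have int_norm (x y : ℝ) : IntervalIntegrable (fun s => ‖deriv γ s‖) volume x y :=
    (intervalIntegrable_deriv_of_lipschitzWith hγ).norm
  refine iSup_le fun ⟨n, u, hu, huab⟩ => ?_
  calc ∑ i ∈ Finset.range n, edist (γ (u (i + 1))) (γ (u i))
      ≤ ∑ i ∈ Finset.range n, ENNReal.ofReal (∫ s in (u i)..(u (i + 1)), ‖deriv γ s‖) := by
        refine Finset.sum_le_sum fun i _ => ?_
        rw [edist_dist, dist_eq_norm, ← integral_deriv_eq_sub_of_lipschitzWith hγ]
        exact ENNReal.ofReal_le_ofReal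
          (intervalIntegral.norm_integral_le_integral_norm (hu i.le_succ))
    _ = ENNReal.ofReal (∫ s in (u 0)..(u n), ‖deriv γ s‖) := by
        rw [← ENNReal.ofReal_sum_of_nonneg fun i _ =>
          intervalIntegral.integral_nonneg (hu i.le_succ) fun _ _ => norm_nonneg _,
          intervalIntegral.sum_integral_adjacent_intervals fun i _ => int_norm _ _]
    _ ≤ ENNReal.ofReal (∫ s in a..b, ‖deriv γ s‖) :=
        ENNReal.ofReal_le_ofReal <| intervalIntegral.integral_mono_interval (huab 0).1
          (hu n.zero_le) (huab n).2 (.of_forall fun _ => norm_nonneg _) (int_norm a b)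

theorem ae_norm_deriv_eq_one_of_eVariationOn_eq (hγ : LipschitzWith 1 γ) (hab : a ≤ b)
    (hvar : eVariationOn γ (Icc a b) = ENNReal.ofReal (b - a)) :
    ∀ᵐ s ∂volume.restrict (Ioc a b), ‖deriv γ s‖ = 1 := by
  have speed_le (s : ℝ) : ‖deriv γ s‖ ≤ 1 := norm_deriv_le_of_lipschitz hγ
  have int_norm : IntervalIntegrable (fun s => ‖deriv γ s‖) volume a b :=
    (intervalIntegrable_deriv_of_lipschitzWith hγ).norm
  have length_le : b - a ≤ ∫ s in a..b, ‖deriv γ s‖ := by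
    rw [← ENNReal.ofReal_le_ofReal_iff
      (intervalIntegral.integral_nonneg hab fun _ _ => norm_nonneg _), ← hvar]
    exact eVariationOn_le_integral_norm_deriv hγ
  have defect_eq_zero : ∫ s in a..b, (1 - ‖deriv γ s‖) = 0 := by
    refine le_antisymm ?_
      (intervalIntegral.integral_nonneg hab fun s _ => sub_nonneg.2 (speed_le s))
    rw [intervalIntegral.integral_sub intervalIntegrable_const int_norm]
    simpa using length_le
  rw [intervalIntegral.integral_of_le hab, setIntegral_eq_zero_iff_of_nonneg_ae
    (.of_forall fun s => sub_nonneg.2 (speed_le s))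
    (intervalIntegrable_const.sub int_norm).1] at defect_eq_zero
  filter_upwards [defect_eq_zero] with s hs using (sub_eq_zero.1 hs).symm

end AbsolutelyContinuous

/-! ### Jordan domains and their arclength parametrization -/

namespace JordanDomain

open scoped AddCommGroup

variable (D : JordanDomain)

theorem lipschitzWith : LipschitzWith 1 D.γ := by
  have dist_le_of_le_add {s t : ℝ} (hst : s ≤ t) (hts : t ≤ s + D.l) :
      dist (D.γ s) (D.γ t) ≤ t - s := by
    rw [← ENNReal.ofReal_le_ofReal_iff (sub_nonneg.2 hst), ← D.γ_unitSpeed s t hst hts,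
      ← edist_dist]
    exact eVariationOn.edist_le _ (left_mem_Icc.2 hst) (right_mem_Icc.2 hst)
  have dist_le {s t : ℝ} (hst : s ≤ t) : dist (D.γ s) (D.γ t) ≤ t - s := by
    rcases le_total t (s + D.l) with hts | hts
    · exact dist_le_of_le_add hst hts
    · have htl := toIcoMod_mem_Ico D.l_pos s t
      rw [← D.γ_periodic.sub_zsmul_eq (x := t) (toIcoDiv D.l_pos s t)]
      exact (dist_le_of_le_add htl.1 htl.2.le).trans
        (sub_le_sub_right (htl.2.le.trans hts) s)
  refine LipschitzWith.of_dist_le_mul fun s t => ?_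
  rw [NNReal.coe_one, one_mul]
  rcases le_total s t with hst | hts
  · exact (dist_le hst).trans (by rw [dist_comm]; exact le_abs_self _)
  · rw [dist_comm]
    exact (dist_le hts).trans (le_abs_self _)

theorem ae_norm_deriv_eq_one : ∀ᵐ s, ‖deriv D.γ s‖ = 1 := by
  rw [← Measure.restrict_univ (μ := volume), ← iUnion_Ioc_zsmul D.l_pos, ae_restrict_iUnion_iff]
  intro n
  have hn : (n + 1) • D.l = n • D.l + D.l := by rw [add_smul, one_smul]
  have hle : n • D.l ≤ (n + 1) • D.l := by linarith [D.l_pos]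
  exact ae_norm_deriv_eq_one_of_eVariationOn_eq D.lipschitzWith hle (D.γ_unitSpeed _ _ hle hn.le)

theorem γ_eq_iff {s t : ℝ} : D.γ s = D.γ t ↔ s ≡ t [PMOD D.l] := by
  rw [← toIcoMod_inj D.l_pos (c := 0), ← D.γ_periodic.sub_zsmul_eq (x := s)
    (toIcoDiv D.l_pos 0 s), ← D.γ_periodic.sub_zsmul_eq (x := t) (toIcoDiv D.l_pos 0 t)]
  exact D.γ_injOn.eq_iff (toIcoMod_mem_Ico' D.l_pos s) (toIcoMod_mem_Ico' D.l_pos t)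

theorem injOn_Ico (a : ℝ) : InjOn D.γ (Ico a (a + D.l)) := fun s hs t ht hst => by
  rwa [γ_eq_iff, ← toIcoMod_inj D.l_pos (c := a), (toIcoMod_eq_self D.l_pos).2 hs,
    (toIcoMod_eq_self D.l_pos).2 ht] at hst

theorem injOn_Ioc (a : ℝ) : InjOn D.γ (Ioc a (a + D.l)) := fun s hs t ht hst => by
  rwa [γ_eq_iff, AddCommGroup.modEq_iff_zsmul', ← toIocMod_eq_toIocMod D.l_pos (a := a),
    (toIocMod_eq_self D.l_pos).2 hs, (toIocMod_eq_self D.l_pos).2 ht] at hst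

theorem exists_mem_Ico_γ_eq (a s : ℝ) : ∃ t ∈ Ico a (a + D.l), D.γ t = D.γ s :=
  ⟨toIcoMod D.l_pos a s, toIcoMod_mem_Ico D.l_pos a s,
    D.γ_periodic.sub_zsmul_eq (toIcoDiv D.l_pos a s)⟩

theorem range_γ : range D.γ = frontier D.G := by
  rw [← D.γ_boundary]
  refine (image_subset_range _ _).antisymm' ?_
  rintro _ ⟨s, rfl⟩
  obtain ⟨t, ht, hts⟩ := D.exists_mem_Ico_γ_eq 0 s
  exact ⟨t, by rwa [zero_add] at ht, hts⟩

theorem γ_mem_frontier (s : ℝ) : D.γ s ∈ frontier D.G :=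
  D.range_γ ▸ mem_range_self s

theorem γ_mem_closure (s : ℝ) : D.γ s ∈ closure D.G :=
  frontier_subset_closure (D.γ_mem_frontier s)

theorem γ_notMem (s : ℝ) : D.γ s ∉ D.G := fun hs =>
  (D.isOpen.inter_frontier_eq).le ⟨hs, D.γ_mem_frontier s⟩

theorem mem_or_exists_γ_eq_of_mem_closure {z : ℂ} (hz : z ∈ closure D.G) :
    z ∈ D.G ∨ ∃ s, D.γ s = z := by
  rw [closure_eq_self_union_frontier, ← D.range_γ] at hz
  exact hz

theorem isCompact_closure : IsCompact (closure D.G) :=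
  D.bounded.isCompact_closure

/-- The same domain, with the parametrization of the boundary starting at `γ a`. -/
def translate (a : ℝ) : JordanDomain where
  __ := D
  γ s := D.γ (a + s)
  γ_cont := D.γ_cont.comp (continuous_const_add a)
  γ_periodic := D.γ_periodic.const_add a
  γ_injOn := by
    refine (D.injOn_Ico a).comp (add_right_injective a).injOn fun s hs => ?_
    simpa using hs
  γ_boundary := by
    rw [← D.range_γ]
    refine subset_antisymm (by rintro _ ⟨s, -, rfl⟩; exact mem_range_self _) ?_
    rintro _ ⟨s, rfl⟩
    obtain ⟨t, ht, hts⟩ := D.exists_mem_Ico_γ_eq a s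
    exact ⟨t - a, ⟨by linarith [ht.1], by linarith [ht.2]⟩, by simpa using hts⟩
  γ_unitSpeed s t hst hts := by
    rw [← Function.comp_def D.γ, eVariationOn.comp_eq_of_monotoneOn _ (a + ·)
      (fun _ _ _ _ h => add_le_add_right h a), image_const_add_Icc,
      D.γ_unitSpeed _ _ (by linarith) (by linarith), add_sub_add_left_eq_sub]

/-- The same domain, with the boundary traversed in the opposite direction. -/
def reverse : JordanDomain where
  __ := D
  γ s := D.γ (-s)
  γ_cont := D.γ_cont.comp continuous_neg
  γ_periodic s := by simpa only [neg_add] using D.γ_periodic.neg (-s)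
  γ_injOn := by
    refine (D.injOn_Ioc (-D.l)).comp neg_injective.injOn fun s hs => ?_
    simpa [and_comm] using hs
  γ_boundary := by
    rw [← D.range_γ]
    refine subset_antisymm (by rintro _ ⟨s, -, rfl⟩; exact mem_range_self _) ?_
    rintro _ ⟨s, rfl⟩
    refine ⟨toIcoMod D.l_pos 0 (-s), toIcoMod_mem_Ico' D.l_pos _, ?_⟩
    rw [D.γ_eq_iff, toIcoMod, neg_sub, sub_neg_eq_add]
    exact AddCommGroup.zsmul_add_modEq _
  γ_unitSpeed s t hst hts := by
    rw [← Function.comp_def D.γ, eVariationOn.comp_eq_of_antitoneOn _ _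
      (fun _ _ _ _ h => neg_le_neg h), image_neg_eq_neg, neg_Icc,
      D.γ_unitSpeed _ _ (by linarith) (by linarith)]
    ring_nf

end JordanDomain

/-! ### Conformal maps onto the disc and their boundary behaviour -/

section Injective

variable {φ : ℂ → ℂ} {G : Set ℂ} {z : ℂ}

theorem not_eventually_eq_const_of_injOn (hG : IsOpen G) (hinj : InjOn φ G) (hz : z ∈ G) (c : ℂ) :
    ¬ ∀ᶠ x in nhds z, φ x = c := by
  intro hconst
  have near : ∀ᶠ x in nhdsWithin z {z}ᶜ, (φ x = c ∧ x ∈ G) ∧ x ≠ z :=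
    ((hconst.and (hG.mem_nhds hz)).filter_mono nhdsWithin_le_nhds).and self_mem_nhdsWithin
  obtain ⟨x, ⟨hxc, hxG⟩, hxz⟩ := near.exists
  exact hxz (hinj hxG hz (hxc.trans hconst.self_of_nhds.symm))

theorem eventually_deriv_ne_zero_of_injOn (hG : IsOpen G) (hφ : DifferentiableOn ℂ φ G)
    (hinj : InjOn φ G) (hz : z ∈ G) : ∀ᶠ x in nhdsWithin z {z}ᶜ, deriv φ x ≠ 0 := by
  refine ((hφ.analyticOnNhd hG z hz).deriv.eventually_eq_zero_or_eventually_ne_zero).resolve_left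
    fun hzero => ?_
  obtain ⟨r, hr, hball⟩ := eventually_nhds_iff_ball.1 (hzero.and (hG.mem_nhds hz))
  refine not_eventually_eq_const_of_injOn hG hinj hz (φ z) ?_
  filter_upwards [ball_mem_nhds z hr] with x hx
  exact isOpen_ball.is_const_of_deriv_eq_zero (convex_ball z r).isPreconnected
    (hφ.mono fun y hy => (hball y hy).2) (fun y hy => (hball y hy).1) hx (mem_ball_self hr)

theorem continuousAt_invFunOn (hG : IsOpen G) (hφ : DifferentiableOn ℂ φ G) (hinj : InjOn φ G)
    (hz : z ∈ G) : ContinuousAt (Function.invFunOn φ G) (φ z) := by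
  have open_at : nhds (φ z) ≤ map φ (nhds z) :=
    (hφ.analyticOnNhd hG z hz).eventually_constant_or_nhds_le_map_nhds.resolve_left
      (not_eventually_eq_const_of_injOn hG hinj hz _)
  have left_inv : ∀ᶠ x in nhds z, (Function.invFunOn φ G ∘ φ) x = x :=
    (eventually_mem_set.2 (hG.mem_nhds hz)).mono fun x hx => hinj.leftInvOn_invFunOn hx
  rw [ContinuousAt, hinj.leftInvOn_invFunOn hz]
  exact (map_mono open_at).trans (by rw [map_map, map_congr left_inv]; exact map_id.le)

theorem differentiableAt_invFunOn (hG : IsOpen G) (hφ : DifferentiableOn ℂ φ G)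
    (hinj : InjOn φ G) (hφG : IsOpen (φ '' G)) (hz : z ∈ G) :
    DifferentiableAt ℂ (Function.invFunOn φ G) (φ z) := by
  have left_inv := hinj.leftInvOn_invFunOn
  have differentiableAt_of_deriv_ne_zero {x : ℂ} (hx : x ∈ G) (hφ' : deriv φ x ≠ 0) :
      DifferentiableAt ℂ (Function.invFunOn φ G) (φ x) := by
    refine (HasDerivAt.of_local_left_inverse (f := φ) (continuousAt_invFunOn hG hφ hinj hx) ?_ hφ'
      ?_).differentiableAt
    · rw [left_inv hx]
      exact (hφ.differentiableAt (hG.mem_nhds hx)).hasDerivAt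
    · filter_upwards [hφG.mem_nhds (mem_image_of_mem φ hx)] with w hw
      exact Function.invFunOn_eq hw
  have inv_tendsto : Tendsto (Function.invFunOn φ G) (nhdsWithin (φ z) {φ z}ᶜ)
      (nhdsWithin z {z}ᶜ) := by
    have hcont := (continuousAt_invFunOn hG hφ hinj hz).tendsto
    rw [left_inv hz] at hcont
    refine tendsto_nhdsWithin_iff.2 ⟨hcont.mono_left nhdsWithin_le_nhds, ?_⟩
    filter_upwards [nhdsWithin_le_nhds (hφG.mem_nhds (mem_image_of_mem φ hz)),
      self_mem_nhdsWithin] with w hw hwz hinv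
    exact hwz ((Function.invFunOn_eq hw).symm.trans (congrArg φ hinv))
  refine (Complex.analyticAt_of_differentiable_on_punctured_nhds_of_continuousAt ?_
    (continuousAt_invFunOn hG hφ hinj hz)).differentiableAt
  filter_upwards [inv_tendsto.eventually (eventually_deriv_ne_zero_of_injOn hG hφ hinj hz),
    nhdsWithin_le_nhds (hφG.mem_nhds (mem_image_of_mem φ hz))] with w hw hwG
  rw [← Function.invFunOn_eq hwG]
  exact differentiableAt_of_deriv_ne_zero (Function.invFunOn_mem hwG) hw

end Injective

theorem eventually_fibre_subset_of_isCompact {X Y : Type*} [TopologicalSpace X]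
    [TopologicalSpace Y] [T2Space Y] {f : X → Y} {K N : Set X} {c : Y} (hK : IsCompact K)
    (hf : ContinuousOn f K) (hN : IsOpen N) (hc : ∀ x ∈ K, f x = c → x ∈ N) :
    ∀ᶠ y in nhds c, ∀ x ∈ K, f x = y → x ∈ N := by
  have closed : IsClosed (f '' (K \ N)) :=
    ((hK.diff hN).image_of_continuousOn (hf.mono sdiff_subset)).isClosed
  have notMem : c ∉ f '' (K \ N) := by
    rintro ⟨x, ⟨hxK, hxN⟩, hxc⟩
    exact hxN (hc x hxK hxc)
  filter_upwards [closed.isOpen_compl.mem_nhds notMem] with y hy x hxK hxy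
  by_contra hxN
  exact hy ⟨x, ⟨hxK, hxN⟩, hxy⟩

/-- `φ` maps the Jordan domain `D` conformally onto the unit disc and is continuous up to the
boundary. Injectivity on the closure is not part of the definition. -/
structure RiemannMap (D : JordanDomain) (φ : ℂ → ℂ) : Prop where
  differentiableOn : DifferentiableOn ℂ φ D.G
  bijOn : BijOn φ D.G (ball 0 1)
  continuousOn : ContinuousOn φ (closure D.G)

namespace RiemannMap

variable {D : JordanDomain} {φ : ℂ → ℂ} {z w c : ℂ}

/-- The inverse, defined on the open unit disc, of a Riemann map. -/
noncomputable def inverse (_ : RiemannMap D φ) : ℂ → ℂ := Function.invFunOn φ D.G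

theorem translate (hφ : RiemannMap D φ) (a : ℝ) : RiemannMap (D.translate a) φ :=
  ⟨hφ.differentiableOn, hφ.bijOn, hφ.continuousOn⟩

theorem reverse (hφ : RiemannMap D φ) : RiemannMap D.reverse φ :=
  ⟨hφ.differentiableOn, hφ.bijOn, hφ.continuousOn⟩

variable (hφ : RiemannMap D φ)
include hφ

theorem norm_lt_one (hz : z ∈ D.G) : ‖φ z‖ < 1 :=
  mem_ball_zero_iff.1 (hφ.bijOn.mapsTo hz)

theorem inverse_mem (hw : w ∈ ball 0 1) : hφ.inverse w ∈ D.G :=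
  Function.invFunOn_mem (hφ.bijOn.surjOn hw)

theorem map_inverse (hw : w ∈ ball 0 1) : φ (hφ.inverse w) = w :=
  Function.invFunOn_eq (hφ.bijOn.surjOn hw)

theorem inverse_map (hz : z ∈ D.G) : hφ.inverse (φ z) = z :=
  hφ.bijOn.injOn.leftInvOn_invFunOn hz

theorem differentiableOn_inverse : DifferentiableOn ℂ hφ.inverse (ball 0 1) := by
  intro w hw
  rw [← hφ.map_inverse hw]
  exact (differentiableAt_invFunOn D.isOpen hφ.differentiableOn hφ.bijOn.injOn
    (hφ.bijOn.image_eq ▸ isOpen_ball) (hφ.inverse_mem hw)).differentiableWithinAt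

theorem continuousAt_inverse (hw : w ∈ ball 0 1) : ContinuousAt hφ.inverse w :=
  hφ.differentiableOn_inverse.continuousOn.continuousAt (isOpen_ball.mem_nhds hw)

theorem tendsto_nhdsWithin (hz : z ∈ closure D.G) :
    Tendsto φ (nhdsWithin z D.G) (nhds (φ z)) :=
  (hφ.continuousOn z hz).mono subset_closure

theorem continuous_comp_γ : Continuous (fun s => φ (D.γ s)) :=
  hφ.continuousOn.comp_continuous D.γ_cont D.γ_mem_closure

theorem norm_le_one (hz : z ∈ closure D.G) : ‖φ z‖ ≤ 1 := by
  have := mem_closure_iff_nhdsWithin_neBot.1 hz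
  exact le_of_tendsto (hφ.tendsto_nhdsWithin hz).norm
    (eventually_mem_nhdsWithin.mono fun x hx => (hφ.norm_lt_one hx).le)

theorem norm_eq_one_of_mem_frontier (hz : z ∈ frontier D.G) : ‖φ z‖ = 1 := by
  have hzc := frontier_subset_closure hz
  have := mem_closure_iff_nhdsWithin_neBot.1 hzc
  refine (hφ.norm_le_one hzc).eq_of_not_lt fun hlt => ?_
  rw [← mem_ball_zero_iff] at hlt
  have inverse_tendsto : Tendsto (fun x => hφ.inverse (φ x)) (nhdsWithin z D.G) (nhds z) :=
    (tendsto_id.mono_left nhdsWithin_le_nhds).congr'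
      (eventually_mem_nhdsWithin.mono fun x hx => (hφ.inverse_map hx).symm)
  have hzG : z ∈ D.G := by
    rw [← tendsto_nhds_unique ((hφ.continuousAt_inverse hlt).tendsto.comp
      (hφ.tendsto_nhdsWithin hzc)) inverse_tendsto]
    exact hφ.inverse_mem hlt
  exact D.isOpen.inter_frontier_eq.le ⟨hzG, hz⟩

theorem norm_map_γ (s : ℝ) : ‖φ (D.γ s)‖ = 1 :=
  hφ.norm_eq_one_of_mem_frontier (D.γ_mem_frontier s)

theorem exists_map_γ_eq (hc : ‖c‖ = 1) : ∃ s, φ (D.γ s) = c := by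
  have closed : IsClosed (φ '' closure D.G) :=
    (D.isCompact_closure.image_of_continuousOn hφ.continuousOn).isClosed
  have closedBall_subset : closedBall 0 1 ⊆ φ '' closure D.G := by
    rw [← closure_ball 0 one_ne_zero, ← hφ.bijOn.image_eq]
    exact closure_minimal (image_mono subset_closure) closed
  obtain ⟨z, hz, rfl⟩ := closedBall_subset (mem_closedBall_zero_iff.2 hc.le)
  rcases D.mem_or_exists_γ_eq_of_mem_closure hz with hzG | ⟨s, rfl⟩
  · exact absurd hc (hφ.norm_lt_one hzG).ne
  · exact ⟨s, rfl⟩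

theorem inverse_image_inter_nonempty {U : Set ℂ} {r : ℝ} (hr : 0 < r) (hU : IsOpen U)
    (hzU : z ∈ U) (hz : z ∈ closure D.G) :
    (hφ.inverse '' (ball 0 1 ∩ ball (φ z) r) ∩ U).Nonempty := by
  have := mem_closure_iff_nhdsWithin_neBot.1 hz
  have near_U : ∀ᶠ x in nhdsWithin z D.G, x ∈ U := mem_nhdsWithin_of_mem_nhds (hU.mem_nhds hzU)
  obtain ⟨x, hxball, hxU, hxG⟩ := (((hφ.tendsto_nhdsWithin hz).eventually
    (ball_mem_nhds _ hr)).and (near_U.and self_mem_nhdsWithin)).exists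
  exact ⟨x, ⟨φ x, ⟨hφ.bijOn.mapsTo hxG, hxball⟩, hφ.inverse_map hxG⟩, hxU⟩

theorem isPreconnected_fibre (c : ℂ) : IsPreconnected {z | z ∈ closure D.G ∧ φ z = c} := by
  rw [isPreconnected_closed_iff]
  rintro A B hA hB hAB ⟨a, ha, haA⟩ ⟨b, hb, hbB⟩
  by_contra hne
  have fibre_compact : IsCompact {z | z ∈ closure D.G ∧ φ z = c} :=
    D.isCompact_closure.of_isClosed_subset
      (hφ.continuousOn.preimage_isClosed_of_isClosed isClosed_closure isClosed_singleton)
      fun z hz => hz.1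
  obtain ⟨U, V, hU, hV, hAU, hBV, hUV⟩ := SeparatedNhds.of_isCompact_isCompact
    (fibre_compact.inter_right hA) (fibre_compact.inter_right hB)
    (disjoint_left.2 fun z hzA hzB => hne ⟨z, hzA.1, hzA.2, hzB.2⟩)
  have fibre_subset : ∀ z ∈ closure D.G, φ z = c → z ∈ U ∪ V := fun z hz hzc =>
    (hAB ⟨hz, hzc⟩).imp (fun hzA => hAU ⟨⟨hz, hzc⟩, hzA⟩) fun hzB => hBV ⟨⟨hz, hzc⟩, hzB⟩
  obtain ⟨r, hr, hball⟩ := eventually_nhds_iff_ball.1 (eventually_fibre_subset_of_isCompact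
    D.isCompact_closure hφ.continuousOn (hU.union hV) fibre_subset)
  -- The part of the disc near `c` is convex, so its preimage in `G` cannot meet both `U` and `V`.
  have lens_connected : IsPreconnected (hφ.inverse '' (ball 0 1 ∩ ball c r)) :=
    ((convex_ball _ _).inter (convex_ball _ _)).isPreconnected.image _
      (hφ.differentiableOn_inverse.continuousOn.mono inter_subset_left)
  have lens_subset : hφ.inverse '' (ball 0 1 ∩ ball c r) ⊆ U ∪ V := by
    rintro _ ⟨w, ⟨hw, hwc⟩, rfl⟩
    exact hball w hwc _ (subset_closure (hφ.inverse_mem hw)) (hφ.map_inverse hw)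
  have meets_U := ha.2 ▸ hφ.inverse_image_inter_nonempty hr hU (hAU ⟨ha, haA⟩) ha.1
  have meets_V := hb.2 ▸ hφ.inverse_image_inter_nonempty hr hV (hBV ⟨hb, hbB⟩) hb.1
  obtain ⟨x, -, hxU, hxV⟩ := lens_connected U V hU hV lens_subset meets_U meets_V
  exact disjoint_left.1 hUV hxU hxV

theorem tendsto_inverse_of_fibre_subset_singleton (h : ∀ x ∈ closure D.G, φ x = c → x = z) :
    Tendsto hφ.inverse (nhdsWithin c (ball 0 1)) (nhds z) := by
  refine (nhds_basis_opens z).tendsto_right_iff.2 fun N ⟨hzN, hN⟩ => ?_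
  filter_upwards [nhdsWithin_le_nhds (eventually_fibre_subset_of_isCompact D.isCompact_closure
    hφ.continuousOn hN fun x hx hxc => (h x hx hxc).symm ▸ hzN), self_mem_nhdsWithin] with w hw hw1
  exact hw _ (subset_closure (hφ.inverse_mem hw1)) (hφ.map_inverse hw1)

theorem map_γ_eq_or_map_γ_eq {p q s t : ℝ} (hs : s ∈ Icc p q) (ht : t ∈ Icc q (p + D.l))
    (hpq : p < q) (hq : q < p + D.l) (hst : φ (D.γ s) = φ (D.γ t)) :
    φ (D.γ p) = φ (D.γ s) ∨ φ (D.γ q) = φ (D.γ s) := by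
  have isClosed_arc (a b : ℝ) : IsClosed (D.γ '' Icc a b) :=
    (isCompact_Icc.image D.γ_cont).isClosed
  have fibre_subset : {z | z ∈ closure D.G ∧ φ z = φ (D.γ s)} ⊆
      D.γ '' Icc p q ∪ D.γ '' Icc q (p + D.l) := by
    rintro z ⟨hz, hzc⟩
    rcases D.mem_or_exists_γ_eq_of_mem_closure hz with hzG | ⟨x, rfl⟩
    · exact absurd (hzc ▸ hφ.norm_map_γ s) (hφ.norm_lt_one hzG).ne
    · obtain ⟨y, hy, hyx⟩ := D.exists_mem_Ico_γ_eq p x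
      rw [← hyx]
      exact (le_total y q).imp (fun h => ⟨y, ⟨hy.1, h⟩, rfl⟩) fun h => ⟨y, ⟨h, hy.2.le⟩, rfl⟩
  obtain ⟨z, ⟨-, hzc⟩, ⟨a, ha, rfl⟩, ⟨b, hb, hba⟩⟩ :=
    isPreconnected_closed_iff.1 (hφ.isPreconnected_fibre (φ (D.γ s))) _ _ (isClosed_arc p q)
      (isClosed_arc q (p + D.l)) fibre_subset
      ⟨_, ⟨D.γ_mem_closure s, rfl⟩, mem_image_of_mem _ hs⟩
      ⟨_, ⟨D.γ_mem_closure t, hst.symm⟩, mem_image_of_mem _ ht⟩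
  rcases hb.2.eq_or_lt with rfl | hb'
  · left
    rwa [← D.γ_periodic p, hba]
  · right
    have hab : b = a := D.injOn_Ico p ⟨hpq.le.trans hb.1, hb'⟩ ⟨ha.1, ha.2.trans_lt hq⟩ hba
    rwa [le_antisymm hb.1 (hab.le.trans ha.2), hba]

end RiemannMap

/-! ### The boundary argument -/

theorem exp_pi_add_arg_neg_mul_I {u : ℂ} (hu : ‖u‖ = 1) :
    exp ((Real.pi + arg (-u) : ℝ) * I) = u := by
  have polar := Complex.norm_mul_exp_arg_mul_I (-u)
  rw [norm_neg, hu, Complex.ofReal_one, one_mul] at polar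
  rw [Complex.ofReal_add, add_mul, Complex.exp_add, Complex.exp_pi_mul_I, polar, neg_one_mul,
    neg_neg]

theorem pi_add_arg_neg_mem_Ioo {u : ℂ} (hu : ‖u‖ = 1) (hne : u ≠ 1) :
    Real.pi + arg (-u) ∈ Ioo 0 (2 * Real.pi) := by
  refine ⟨by linarith [neg_pi_lt_arg (-u)], ?_⟩
  have arg_ne : arg (-u) ≠ Real.pi := fun harg => hne <| by
    rw [← exp_pi_add_arg_neg_mul_I hu, harg, ← two_mul, Complex.ofReal_mul, Complex.ofReal_ofNat,
      Complex.exp_two_pi_mul_I]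
  linarith [lt_of_le_of_ne (arg_le_pi (-u)) arg_ne]

theorem neg_mem_slitPlane {u : ℂ} (hu : ‖u‖ = 1) (hne : u ≠ 1) : -u ∈ slitPlane := by
  refine mem_slitPlane_iff_arg.2 ⟨?_, neg_ne_zero.2 (norm_pos_iff.1 (hu ▸ one_pos))⟩
  linarith [(pi_add_arg_neg_mem_Ioo hu hne).2]

theorem monotoneOn_or_antitoneOn_of_fibres {f : ℝ → ℝ} {a b : ℝ} (hf : ContinuousOn f (Ioo a b))
    (hfib : ∀ x ∈ Ioo a b, ∀ y ∈ Ioo a b, ∀ z ∈ Ioo a b, x < y → y < z → f x = f z → f y = f x) :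
    MonotoneOn f (Ioo a b) ∨ AntitoneOn f (Ioo a b) := by
  have no_peak (g : ℝ → ℝ) (hg : ContinuousOn g (Ioo a b)) (hgfib : ∀ x ∈ Ioo a b, ∀ y ∈ Ioo a b,
      ∀ z ∈ Ioo a b, x < y → y < z → g x = g z → g y = g x) (x y z : ℝ) (hx : x ∈ Ioo a b)
      (hy : y ∈ Ioo a b) (hz : z ∈ Ioo a b) (hxy : x ≤ y) (hyz : y ≤ z) :
      ¬ (g x < g y ∧ g z < g y) := by
    rintro ⟨hxg, hzg⟩
    obtain ⟨v, hv, hvy⟩ := exists_between (max_lt hxg hzg)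
    rw [max_lt_iff] at hv
    obtain ⟨p, hp, rfl⟩ :=
      intermediate_value_Ioo hxy (hg.mono (Icc_subset_Ioo hx.1 hy.2)) ⟨hv.1, hvy⟩
    obtain ⟨q, hq, hqp⟩ :=
      intermediate_value_Ioo' hyz (hg.mono (Icc_subset_Ioo hy.1 hz.2)) ⟨hv.2, hvy⟩
    exact hvy.ne' (hgfib p ⟨hx.1.trans hp.1, hp.2.trans hy.2⟩ y hy q
      ⟨hy.1.trans hq.1, hq.2.trans hz.2⟩ hp.2 hq.1 hqp.symm)
  by_contra! hcon
  rw [monotoneOn_iff_monotone, antitoneOn_iff_antitone] at hcon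
  obtain ⟨⟨x, hx⟩, ⟨y, hy⟩, ⟨z, hz⟩, hxy, hyz, hor⟩ :=
    not_monotone_not_antitone_iff_exists_le_le.1 hcon
  rcases hor with hpeak | hvalley
  · exact no_peak f hf hfib x y z hx hy hz hxy hyz hpeak
  · refine no_peak (-f) hf.neg (fun x hx y hy z hz hxy hyz h => ?_) x y z hx hy hz hxy hyz
      ⟨neg_lt_neg hvalley.1, neg_lt_neg hvalley.2⟩
    exact congrArg Neg.neg (hfib x hx y hy z hz hxy hyz (neg_injective h))

/-- `θ` is a monotone branch of the argument of `φ (γ s) / φ (γ 0)` over one period of `γ`,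
increasing from `0` to `2π` and taking these two values only at the ends. Outside the period
`[0, l]`, only monotonicity is required. -/
structure BoundaryArgument (D : JordanDomain) (φ : ℂ → ℂ) (θ : ℝ → ℝ) : Prop where
  monotone : Monotone θ
  map_zero : θ 0 = 0
  map_length : θ D.l = 2 * Real.pi
  mapsTo : MapsTo θ (Ioo 0 D.l) (Ioo 0 (2 * Real.pi))
  map_γ : ∀ s ∈ Icc 0 D.l, φ (D.γ s) = φ (D.γ 0) * exp (θ s * I)

namespace RiemannMap

variable {D : JordanDomain} {φ : ℂ → ℂ} (hφ : RiemannMap D φ)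
include hφ

/-- A value of `φ ∘ γ` missed at all rational parameters is attained only once per period: two
parameters attaining it could be separated by rational ones, contradicting the connectedness of
the fibre. -/
theorem exists_forall_mem_Ioo_map_γ_ne :
    ∃ a, ∀ s ∈ Ioo a (a + D.l), φ (D.γ s) ≠ φ (D.γ a) := by
  have countable : (range fun q : ℚ => arg (φ (D.γ q))).Countable := countable_range _
  obtain ⟨t, ht, htq⟩ := (countable.dense_compl ℝ).exists_mem_open isOpen_Ioo
    (nonempty_Ioo.2 (neg_lt_self Real.pi_pos))
  obtain ⟨a, ha⟩ := hφ.exists_map_γ_eq (norm_exp_ofReal_mul_I t)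
  have ne_rat (q : ℚ) : φ (D.γ q) ≠ φ (D.γ a) := fun hq => ht ⟨q, by
    dsimp only
    rw [hq, ha, arg_exp_mul_I, (toIocMod_eq_self Real.two_pi_pos).2]
    exact ⟨htq.1, htq.2.le.trans (by linarith [Real.pi_pos])⟩⟩
  refine ⟨a, fun s hs hsa => ?_⟩
  obtain ⟨p, hap, hps⟩ := exists_rat_btwn hs.1
  obtain ⟨q, hsq, hql⟩ := exists_rat_btwn hs.2
  have hper : φ (D.γ s) = φ (D.γ (a + D.l)) := by rw [D.γ_periodic, hsa]
  rcases hφ.map_γ_eq_or_map_γ_eq (p := p) (q := q) ⟨hps.le, hsq.le⟩ ⟨hql.le, by linarith⟩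
    (hps.trans hsq) (by linarith) hper with h | h
  · exact ne_rat p (h.trans hsa)
  · exact ne_rat q (h.trans hsa)

theorem norm_map_γ_div (s t : ℝ) : ‖φ (D.γ s) / φ (D.γ t)‖ = 1 := by
  rw [norm_div, hφ.norm_map_γ, hφ.norm_map_γ, div_one]

theorem map_γ_ne_zero (s : ℝ) : φ (D.γ s) ≠ 0 :=
  norm_pos_iff.1 (hφ.norm_map_γ s ▸ one_pos)

theorem exists_boundaryArgument_of_monotoneOn (hne : ∀ s ∈ Ioo 0 D.l, φ (D.γ s) ≠ φ (D.γ 0))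
    (hmono : MonotoneOn (fun s => Real.pi + arg (-(φ (D.γ s) / φ (D.γ 0)))) (Ioo 0 D.l)) :
    ∃ θ, BoundaryArgument D φ θ := by
  set α : ℝ → ℝ := fun s => Real.pi + arg (-(φ (D.γ s) / φ (D.γ 0)))
  have α_mem {s : ℝ} (hs : s ∈ Ioo 0 D.l) : α s ∈ Ioo 0 (2 * Real.pi) :=
    pi_add_arg_neg_mem_Ioo (hφ.norm_map_γ_div s 0)
      fun h => hne s hs ((div_eq_one_iff_eq (hφ.map_γ_ne_zero 0)).1 h)
  refine ⟨fun s => if s ≤ 0 then 0 else if D.l ≤ s then 2 * Real.pi else α s,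
    ⟨?_, by simp, by simp [D.l_pos.not_ge], ?_, ?_⟩⟩
  · intro s t hst
    have := Real.two_pi_pos
    dsimp only
    split_ifs with hs0 ht0 htl hsl ht0 htl ht0 htl <;> try linarith
    · exact (α_mem ⟨not_le.1 ht0, not_le.1 htl⟩).1.le
    · exact (α_mem ⟨not_le.1 hs0, not_le.1 hsl⟩).2.le
    · exact hmono ⟨not_le.1 hs0, not_le.1 hsl⟩ ⟨not_le.1 ht0, not_le.1 htl⟩ hst
  · intro s hs
    simpa only [hs.1.not_ge, hs.2.not_ge, if_false] using α_mem hs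
  · intro s hs
    split_ifs with hs0 hsl
    · simp [le_antisymm hs0 hs.1]
    · have hl : D.γ D.l = D.γ 0 := by rw [← D.γ_periodic 0, zero_add]
      rw [le_antisymm hs.2 hsl, hl, Complex.ofReal_mul, Complex.ofReal_ofNat,
        Complex.exp_two_pi_mul_I, mul_one]
    · rw [exp_pi_add_arg_neg_mul_I (hφ.norm_map_γ_div s 0),
        mul_div_cancel₀ _ (hφ.map_γ_ne_zero 0)]

theorem exists_boundaryArgument_or_reverse (hne : ∀ s ∈ Ioo 0 D.l, φ (D.γ s) ≠ φ (D.γ 0)) :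
    (∃ θ, BoundaryArgument D φ θ) ∨ ∃ θ, BoundaryArgument D.reverse φ θ := by
  set α : ℝ → ℝ := fun s => Real.pi + arg (-(φ (D.γ s) / φ (D.γ 0))) with hα
  have α_cont : ContinuousOn α (Ioo 0 D.l) := fun s hs => by
    have slit : -(φ (D.γ s) / φ (D.γ 0)) ∈ slitPlane := neg_mem_slitPlane (hφ.norm_map_γ_div s 0)
      fun h => hne s hs ((div_eq_one_iff_eq (hφ.map_γ_ne_zero 0)).1 h)
    exact (continuousAt_const.add (ContinuousAt.comp (f := fun s => -(φ (D.γ s) / φ (D.γ 0)))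
      (continuousAt_arg slit)
      (hφ.continuous_comp_γ.div_const _).neg.continuousAt)).continuousWithinAt
  have α_eq_iff (s t : ℝ) : α s = α t ↔ φ (D.γ s) = φ (D.γ t) := by
    refine ⟨fun h => ?_, fun h => by simp only [hα, h]⟩
    rw [← div_left_inj' (hφ.map_γ_ne_zero 0), ← exp_pi_add_arg_neg_mul_I (hφ.norm_map_γ_div s 0),
      ← exp_pi_add_arg_neg_mul_I (hφ.norm_map_γ_div t 0)]
    exact congrArg (fun x : ℝ => exp (x * I)) h
  have mono_or_anti : MonotoneOn α (Ioo 0 D.l) ∨ AntitoneOn α (Ioo 0 D.l) := by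
    refine monotoneOn_or_antitoneOn_of_fibres α_cont fun x hx y hy z hz hxy hyz hxz => ?_
    rw [α_eq_iff] at hxz ⊢
    refine (hφ.map_γ_eq_or_map_γ_eq ⟨hx.1.le, hxy.le⟩ ⟨hyz.le, ?_⟩ hy.1 ?_ hxz).resolve_left
      (hne x hx).symm <;> linarith [hy.2, hz.2]
  have reverse_γ (s : ℝ) : D.reverse.γ s = D.γ (D.l - s) := (D.γ_periodic.sub_eq' (x := s)).symm
  have reverse_γ_zero : D.reverse.γ 0 = D.γ 0 := congrArg D.γ neg_zero
  have sub_mem {s : ℝ} (hs : s ∈ Ioo 0 D.l) : D.l - s ∈ Ioo 0 D.l :=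
    ⟨sub_pos.2 hs.2, sub_lt_self _ hs.1⟩
  refine mono_or_anti.imp (hφ.exists_boundaryArgument_of_monotoneOn hne) fun hanti => ?_
  refine hφ.reverse.exists_boundaryArgument_of_monotoneOn (fun s hs => ?_) fun s hs t ht hst => ?_
  · rw [reverse_γ, reverse_γ_zero]
    exact hne _ (sub_mem hs)
  · simp only [reverse_γ_zero]
    rw [reverse_γ, reverse_γ]
    exact hanti (sub_mem ht) (sub_mem hs) (sub_le_sub_left hst _)

theorem exists_boundaryArgument : ∃ a θ,
    BoundaryArgument (D.translate a) φ θ ∨ BoundaryArgument (D.translate a).reverse φ θ := by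
  obtain ⟨a, ha⟩ := hφ.exists_forall_mem_Ioo_map_γ_ne
  have hne : ∀ s ∈ Ioo 0 D.l, φ (D.γ (a + s)) ≠ φ (D.γ (a + 0)) := fun s hs => by
    rw [add_zero]
    exact ha _ ⟨by linarith [hs.1], by linarith [hs.2]⟩
  rcases (hφ.translate a).exists_boundaryArgument_or_reverse hne with ⟨θ, hθ⟩ | ⟨θ, hθ⟩
  · exact ⟨a, θ, .inl hθ⟩
  · exact ⟨a, θ, .inr hθ⟩

end RiemannMap

/-! ### Cauchy's theorem along the boundary -/

theorem lt_apply_iff_of_forall_apply_eq_iff {θ : ℝ → ℝ} (hθ : Monotone θ) {t x : ℝ}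
    (hx : ∀ s, θ s = t ↔ s = x) {s : ℝ} : t < θ s ↔ x < s := by
  rw [← (hx x).2 rfl]
  refine ⟨hθ.reflect_lt, fun hxs => (hθ hxs.le).lt_of_ne fun h => hxs.ne' ?_⟩
  rw [← hx, ← (hx x).2 rfl, h]

/-- Integration by parts against a monotone function that need not be continuous: both sides are
the integral of `k t * γ' s` over `{(s, t) | t < θ s}`. -/
theorem integral_primitive_comp_mul_deriv {γ : ℝ → ℂ} {K : NNReal} (hγ : LipschitzWith K γ)
    {θ σ : ℝ → ℝ} (hθ : Monotone θ) {k : ℝ → ℂ} {a b : ℝ} (hab : a ≤ b)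
    (hk : IntervalIntegrable k volume (θ a) (θ b))
    (hσ : ∀ᵐ t, t ∈ Ioc (θ a) (θ b) → σ t ∈ Icc a b ∧ ∀ s, θ s = t ↔ s = σ t) :
    ∫ s in a..b, (∫ t in θ a..θ s, k t) * deriv γ s =
      ∫ t in θ a..θ b, k t * (γ b - γ (σ t)) := by
  set f : ℝ → ℝ → ℂ := fun s t => (Iio (θ s)).indicator (fun t => deriv γ s * k t) t with hf
  have f_integrable : Integrable (Function.uncurry f)
      ((volume.restrict (Ioc a b)).prod (volume.restrict (Ioc (θ a) (θ b)))) :=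
    ((intervalIntegrable_deriv_of_lipschitzWith hγ (a := a) (b := b)).1.mul_prod hk.1).indicator
      (measurableSet_lt measurable_snd (hθ.measurable.comp measurable_fst))
  have integral_left {s : ℝ} (hs : s ∈ Ioc a b) :
      ∫ t in Ioc (θ a) (θ b), f s t = (∫ t in θ a..θ s, k t) * deriv γ s := by
    have inter : Ioc (θ a) (θ b) ∩ Iio (θ s) = Ioo (θ a) (θ s) := by
      ext t
      have := hθ hs.2
      simp only [mem_inter_iff, mem_Ioc, mem_Iio, mem_Ioo]
      grind
    rw [setIntegral_indicator measurableSet_Iio, inter, ← integral_Ioc_eq_integral_Ioo,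
      ← intervalIntegral.integral_of_le (hθ hs.1.le), intervalIntegral.integral_const_mul, mul_comm]
  have integral_right : ∀ᵐ t ∂volume.restrict (Ioc (θ a) (θ b)),
      ∫ s in Ioc a b, f s t = k t * (γ b - γ (σ t)) := by
    rw [ae_restrict_iff' measurableSet_Ioc]
    filter_upwards [hσ] with t ht htm
    obtain ⟨σ_mem, σ_iff⟩ := ht htm
    have f_eq (s : ℝ) : f s t = (Ioi (σ t)).indicator (fun s => k t * deriv γ s) s := by
      simp only [hf, indicator, mem_Iio, mem_Ioi, lt_apply_iff_of_forall_apply_eq_iff hθ σ_iff,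
        mul_comm]
    have inter : Ioc a b ∩ Ioi (σ t) = Ioc (σ t) b := by
      ext s
      have := σ_mem.1
      simp only [mem_inter_iff, mem_Ioc, mem_Ioi]
      grind
    simp only [f_eq]
    rw [setIntegral_indicator measurableSet_Ioi, inter, ← intervalIntegral.integral_of_le σ_mem.2,
      intervalIntegral.integral_const_mul, integral_deriv_eq_sub_of_lipschitzWith hγ]
  rw [intervalIntegral.integral_of_le hab, intervalIntegral.integral_of_le (hθ hab),
    ← integral_congr_ae integral_right, ← integral_integral_swap f_integrable]
  exact setIntegral_congr_fun measurableSet_Ioc fun s hs => (integral_left hs).symm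

section Circle

variable {c : ℂ} {R : ℝ} {F : ℂ → ℂ}

theorem norm_mul_exp_ofReal_mul_I (hc : ‖c‖ = 1) (t : ℝ) : ‖c * exp (t * I)‖ = 1 := by
  rw [norm_mul, hc, norm_exp_ofReal_mul_I, one_mul]

theorem mul_exp_ofReal_mul_I_mem_ball (hc : ‖c‖ = 1) (hR : 1 < R) (t : ℝ) :
    c * exp (t * I) ∈ ball 0 R := by
  rwa [mem_ball_zero_iff, norm_mul_exp_ofReal_mul_I hc]

theorem integral_mul_comp_circle_eq_zero (hc : ‖c‖ = 1) (hR : 1 < R)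
    (hF : DifferentiableOn ℂ F (ball 0 R)) :
    ∫ t in (0 : ℝ)..2 * Real.pi, c * exp (t * I) * I * F (c * exp (t * I)) = 0 := by
  have diff : DifferentiableOn ℂ (fun z => c * F (c * z)) (closure (ball 0 1)) := by
    refine (differentiableOn_const c).mul (hF.comp (by fun_prop) fun z hz => ?_)
    rw [closure_ball (0 : ℂ) one_ne_zero, mem_closedBall_zero_iff] at hz
    rw [mem_ball_zero_iff, norm_mul, hc, one_mul]
    exact hz.trans_lt hR
  have cauchy := diff.diffContOnCl.circleIntegral_eq_zero zero_le_one
  rw [circleIntegral] at cauchy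
  rw [← cauchy]
  refine intervalIntegral.integral_congr fun t _ => ?_
  simp only [deriv_circleMap, circleMap, smul_eq_mul, ofReal_one, zero_add, one_mul]
  ring

theorem continuous_mul_comp_circle (hc : ‖c‖ = 1) (hR : 1 < R)
    (hF : DifferentiableOn ℂ F (ball 0 R)) :
    Continuous fun t : ℝ => c * exp (t * I) * I * F (c * exp (t * I)) :=
  (by fun_prop : Continuous fun t : ℝ => c * exp (t * I) * I).mul
    (hF.continuousOn.comp_continuous (by fun_prop) (mul_exp_ofReal_mul_I_mem_ball hc hR))

theorem integral_mul_deriv_comp_circle (hc : ‖c‖ = 1) (hR : 1 < R)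
    (hF : DifferentiableOn ℂ F (ball 0 R)) (τ : ℝ) :
    ∫ t in (0 : ℝ)..τ, c * exp (t * I) * I * deriv F (c * exp (t * I)) =
      F (c * exp (τ * I)) - F c := by
  have circle_mem := mul_exp_ofReal_mul_I_mem_ball hc hR
  have hasDerivAt_circle (t : ℝ) :
      HasDerivAt (fun t : ℝ => c * exp (t * I)) (c * exp (t * I) * I) t := by
    simpa [mul_assoc] using (((hasDerivAt_id t).ofReal_comp.mul_const I).cexp).const_mul c
  have hasDerivAt_comp (t : ℝ) : HasDerivAt (fun t : ℝ => F (c * exp (t * I)))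
      (c * exp (t * I) * I * deriv F (c * exp (t * I))) t := by
    rw [mul_comm]
    exact ((hF.differentiableAt (isOpen_ball.mem_nhds (circle_mem t))).hasDerivAt).comp t
      (hasDerivAt_circle t)
  rw [intervalIntegral.integral_eq_sub_of_hasDerivAt (fun t _ => hasDerivAt_comp t)
    ((continuous_mul_comp_circle hc hR (hF.deriv isOpen_ball)).intervalIntegrable _ _)]
  simp

end Circle

namespace JordanDomain

variable (D : JordanDomain)

/-- The contour integral of `f` along the boundary of `D`, in the direction of `D.γ`. -/
noncomputable def contourIntegral (f : ℂ → ℂ) : ℂ := ∫ s in 0..D.l, f (D.γ s) * deriv D.γ s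

theorem γ_l : D.γ D.l = D.γ 0 := by simpa using D.γ_periodic 0

variable {D} {f g : ℂ → ℂ}

theorem contourIntegral_sub (hf : Continuous fun s => f (D.γ s))
    (hg : Continuous fun s => g (D.γ s)) :
    D.contourIntegral (fun z => f z - g z) = D.contourIntegral f - D.contourIntegral g := by
  simp only [contourIntegral, sub_mul]
  exact intervalIntegral.integral_sub
    (intervalIntegrable_mul_deriv_of_lipschitzWith D.lipschitzWith hf.continuousOn)
    (intervalIntegrable_mul_deriv_of_lipschitzWith D.lipschitzWith hg.continuousOn)

theorem contourIntegral_eq_zero_of_hasDerivAt {U : Set ℂ} (hU : IsOpen U)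
    (hf : ∀ z ∈ U, HasDerivAt f (g z) z) (hγ : ∀ s, D.γ s ∈ U) : D.contourIntegral g = 0 := by
  rw [contourIntegral, integral_comp_mul_deriv_eq_sub D.lipschitzWith hU hf fun s _ => hγ s, γ_l,
    sub_self]

theorem contourIntegral_const (c : ℂ) : D.contourIntegral (fun _ => c) = 0 :=
  contourIntegral_eq_zero_of_hasDerivAt isOpen_univ
    (fun z _ => by simpa using (hasDerivAt_id z).const_mul c) fun _ => mem_univ _

end JordanDomain

theorem ofReal_mul_mem_ball {c : ℂ} (hc : ‖c‖ = 1) {r : ℝ} (hr : r ∈ Ioo 0 1) :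
    (r : ℂ) * c ∈ ball 0 1 := by
  rw [mem_ball_zero_iff, norm_mul, hc, mul_one, norm_real, Real.norm_of_nonneg hr.1.le]
  exact hr.2

theorem norm_inv_two_mul_one_add_lt_one {u : ℂ} (hu : ‖u‖ = 1) (hne : u ≠ 1) :
    ‖2⁻¹ * (1 + u)‖ < 1 := by
  have midpoint_lt := (norm_midpoint_lt_iff (norm_one.trans hu.symm)).2 hne.symm
  simpa [mul_add] using midpoint_lt

theorem mapsTo_ofReal_mul_ball {r : ℝ} (hr : 0 < r) :
    MapsTo (fun w : ℂ => (r : ℂ) * w) (ball 0 r⁻¹) (ball 0 1) := fun w hw => by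
  rw [mem_ball_zero_iff] at hw ⊢
  rwa [norm_mul, norm_real, Real.norm_of_nonneg hr.le, ← lt_inv_mul_iff₀ hr, mul_one]

namespace RiemannMap

variable {D : JordanDomain} {φ : ℂ → ℂ} (hφ : RiemannMap D φ)

theorem tendsto_inverse_radial {c z : ℂ} (hc : ‖c‖ = 1) (h : ∀ s, φ (D.γ s) = c → D.γ s = z) :
    Tendsto (fun r : ℝ => hφ.inverse (r * c)) (nhdsWithin 1 (Iio 1)) (nhds z) := by
  refine (hφ.tendsto_inverse_of_fibre_subset_singleton (c := c) fun x hx hxc => ?_).comp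
    (tendsto_nhdsWithin_iff.2 ⟨?_, ?_⟩)
  · rcases D.mem_or_exists_γ_eq_of_mem_closure hx with hxG | ⟨s, rfl⟩
    · exact absurd (hxc ▸ hc) (hφ.norm_lt_one hxG).ne
    · exact h s hxc
  · have : Continuous fun r : ℝ => (r : ℂ) * c := by fun_prop
    simpa using (this.tendsto 1).mono_left nhdsWithin_le_nhds
  · filter_upwards [Ioo_mem_nhdsLT one_pos] with r hr using ofReal_mul_mem_ball hc hr

theorem mapsTo_inverse_mul {r : ℝ} (hr : 0 < r) :
    MapsTo (fun w => hφ.inverse (r * w)) (ball 0 r⁻¹) D.G := fun _ hw =>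
  hφ.inverse_mem (mapsTo_ofReal_mul_ball hr hw)

theorem differentiableOn_inverse_mul {r : ℝ} (hr : 0 < r) :
    DifferentiableOn ℂ (fun w => hφ.inverse (r * w)) (ball 0 r⁻¹) :=
  hφ.differentiableOn_inverse.comp (by fun_prop) (mapsTo_ofReal_mul_ball hr)

end RiemannMap

namespace BoundaryArgument

variable {D : JordanDomain} {φ : ℂ → ℂ} {θ : ℝ → ℝ} (hφ : RiemannMap D φ)
  (hθ : BoundaryArgument D φ θ)
include hθ

theorem mapsTo_Ico : MapsTo θ (Ico 0 D.l) (Ico 0 (2 * Real.pi)) := fun s hs => by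
  rcases hs.1.eq_or_lt with rfl | hs0
  · simp [hθ.map_zero, Real.pi_pos]
  · exact Ioo_subset_Ico_self (hθ.mapsTo ⟨hs0, hs.2⟩)

include hφ

theorem apply_eq_of_map_γ_eq {s t : ℝ} (hs : s ∈ Ico 0 D.l) (ht : t ∈ Ioo 0 (2 * Real.pi))
    (h : φ (D.γ s) = φ (D.γ 0) * exp (t * I)) : s ∈ Ioo 0 D.l ∧ θ s = t := by
  rw [hθ.map_γ s ⟨hs.1, hs.2.le⟩] at h
  have θ_eq : θ s = t := by
    refine injOn_circleMap_of_abs_sub_le' (c := 0) one_ne_zero (sub_zero _).le (hθ.mapsTo_Ico hs)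
      ⟨ht.1.le, ht.2⟩ ?_
    simpa [circleMap] using mul_left_cancel₀ (hφ.map_γ_ne_zero 0) h
  refine ⟨⟨hs.1.lt_of_ne ?_, hs.2⟩, θ_eq⟩
  rintro rfl
  exact ht.1.ne (hθ.map_zero.symm.trans θ_eq)

theorem γ_eq_of_forall_apply_eq {s t x : ℝ} (ht : t ∈ Ioo 0 (2 * Real.pi))
    (hx : ∀ y ∈ Ioo 0 D.l, θ y = t → y = x)
    (h : φ (D.γ s) = φ (D.γ 0) * exp (t * I)) : D.γ s = D.γ x := by
  obtain ⟨s', hs', hγ⟩ := D.exists_mem_Ico_γ_eq 0 s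
  rw [zero_add] at hs'
  rw [← hγ] at h ⊢
  obtain ⟨hs0, θ_eq⟩ := hθ.apply_eq_of_map_γ_eq hφ hs' ht h
  rw [hx s' hs0 θ_eq]

theorem exists_apply_eq {t : ℝ} (ht : t ∈ Ioo 0 (2 * Real.pi)) : ∃ s ∈ Ioo 0 D.l, θ s = t := by
  obtain ⟨s, hs⟩ := hφ.exists_map_γ_eq (norm_mul_exp_ofReal_mul_I (hφ.norm_map_γ 0) t)
  obtain ⟨s', hs', hγ⟩ := D.exists_mem_Ico_γ_eq 0 s
  rw [zero_add] at hs'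
  exact ⟨s', hθ.apply_eq_of_map_γ_eq hφ hs' ht (by rw [hγ, hs])⟩

theorem exists_ae_inverse : ∃ σ : ℝ → ℝ, ∀ᵐ t, t ∈ Ioc 0 (2 * Real.pi) →
    σ t ∈ Ioo 0 D.l ∧ ∀ s, θ s = t ↔ s = σ t := by
  choose σ σ_mem apply_σ using fun t : Ioo 0 (2 * Real.pi) => hθ.exists_apply_eq hφ t.2
  classical
  refine ⟨fun t => if ht : t ∈ Ioo 0 (2 * Real.pi) then σ ⟨t, ht⟩ else 0, ?_⟩
  filter_upwards [hθ.monotone.countable_setOfPred_two_preimages.ae_notMem volume,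
    volume.ae_ne (2 * Real.pi)] with t hunique hne htm
  have ht : t ∈ Ioo 0 (2 * Real.pi) := ⟨htm.1, htm.2.lt_of_ne hne⟩
  rw [dif_pos ht]
  refine ⟨σ_mem _, fun s => ⟨fun hs => ?_, fun hs => hs ▸ apply_σ ⟨t, ht⟩⟩⟩
  by_contra hne
  rcases lt_or_gt_of_ne hne with h | h
  · exact hunique ⟨_, _, h, hs, apply_σ ⟨t, ht⟩⟩
  · exact hunique ⟨_, _, h, apply_σ ⟨t, ht⟩, hs⟩

variable {F : ℂ → ℂ} {R : ℝ}

/-- The boundary values of the inverse of `φ` are `γ (σ t)` at `φ (γ 0) * exp (t * I)`, so this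
is Cauchy's theorem for the disc, applied on circles of radius `r < 1`. -/
theorem integral_circle_mul_γ_eq_zero (hR : 1 < R) (hF : DifferentiableOn ℂ F (ball 0 R))
    {σ : ℝ → ℝ} (hσ : ∀ᵐ t, t ∈ Ioc 0 (2 * Real.pi) → σ t ∈ Ioo 0 D.l ∧ ∀ s, θ s = t ↔ s = σ t)
    (z : ℂ) : ∫ t in (0 : ℝ)..2 * Real.pi, φ (D.γ 0) * exp (t * I) * I *
      F (φ (D.γ 0) * exp (t * I)) * (z - D.γ (σ t)) = 0 := by
  set c := φ (D.γ 0)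
  have hc : ‖c‖ = 1 := hφ.norm_map_γ 0
  set k : ℝ → ℂ := fun t => c * exp (t * I) * I * F (c * exp (t * I)) with hk
  have k_cont : Continuous k := continuous_mul_comp_circle hc hR hF
  have radial_mem {r : ℝ} (hr : r ∈ Ioo 0 1) (t : ℝ) : (r : ℂ) * (c * exp (t * I)) ∈ ball 0 1 :=
    ofReal_mul_mem_ball (norm_mul_exp_ofReal_mul_I hc t) hr
  have inner_circle {r : ℝ} (hr : r ∈ Ioo 0 1) :
      ∫ t in (0 : ℝ)..2 * Real.pi, k t * (z - hφ.inverse (r * (c * exp (t * I)))) = 0 := by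
    have diff : DifferentiableOn ℂ (fun w => F w * (z - hφ.inverse (r * w)))
        (ball 0 (min R r⁻¹)) :=
      (hF.mono (ball_subset_ball (min_le_left _ _))).mul
        (((hφ.differentiableOn_inverse_mul hr.1).mono
          (ball_subset_ball (min_le_right _ _))).const_sub z)
    simpa only [hk, mul_assoc] using
      integral_mul_comp_circle_eq_zero hc (lt_min hR ((one_lt_inv₀ hr.1).2 hr.2)) diff
  obtain ⟨B, hB⟩ := D.bounded.exists_norm_le
  have tendsto_outer : Tendsto
      (fun r : ℝ => ∫ t in (0 : ℝ)..2 * Real.pi, k t * (z - hφ.inverse (r * (c * exp (t * I)))))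
      (nhdsWithin 1 (Iio 1)) (nhds (∫ t in (0 : ℝ)..2 * Real.pi, k t * (z - D.γ (σ t)))) := by
    refine intervalIntegral.tendsto_integral_filter_of_dominated_convergence
      (fun t => ‖k t‖ * (‖z‖ + B)) ?_ ?_ ((k_cont.norm.mul_const _).intervalIntegrable _ _) ?_
    · filter_upwards [Ioo_mem_nhdsLT one_pos] with r hr
      have inverse_cont := hφ.differentiableOn_inverse.continuousOn.comp_continuous
        (by fun_prop) (radial_mem hr)
      exact (k_cont.mul (continuous_const.sub inverse_cont)).aestronglyMeasurable
    · filter_upwards [Ioo_mem_nhdsLT one_pos] with r hr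
      refine .of_forall fun t _ => ?_
      rw [norm_mul]
      gcongr
      exact (norm_sub_le _ _).trans (by gcongr; exact hB _ (hφ.inverse_mem (radial_mem hr t)))
    · rw [uIoc_of_le Real.two_pi_pos.le]
      filter_upwards [hσ] with t ht htm
      obtain ⟨σ_mem, σ_iff⟩ := ht htm
      refine (tendsto_const_nhds.sub (hφ.tendsto_inverse_radial (norm_mul_exp_ofReal_mul_I hc t)
        fun s => hθ.γ_eq_of_forall_apply_eq hφ ?_ fun s _ => (σ_iff s).1)).const_mul _
      exact (σ_iff _).2 rfl ▸ hθ.mapsTo σ_mem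
  refine tendsto_nhds_unique tendsto_outer (tendsto_const_nhds.congr' ?_)
  filter_upwards [Ioo_mem_nhdsLT one_pos] with r hr using (inner_circle hr).symm

theorem contourIntegral_comp_eq_zero (hR : 1 < R) (hF : DifferentiableOn ℂ F (ball 0 R)) :
    D.contourIntegral (fun z => F (φ z)) = 0 := by
  obtain ⟨σ, hσ⟩ := hθ.exists_ae_inverse hφ
  have hc : ‖φ (D.γ 0)‖ = 1 := hφ.norm_map_γ 0
  have dF : DifferentiableOn ℂ (deriv F) (ball 0 R) := hF.deriv isOpen_ball
  have F_cont : Continuous fun s => F (φ (D.γ s)) :=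
    hF.continuousOn.comp_continuous hφ.continuous_comp_γ fun s => by simp [hφ.norm_map_γ, hR]
  have by_parts := integral_primitive_comp_mul_deriv D.lipschitzWith hθ.monotone D.l_pos.le
    ((continuous_mul_comp_circle hc hR dF).intervalIntegrable _ _) (σ := σ) (by
      rw [hθ.map_zero, hθ.map_length]
      exact hσ.mono fun t ht htm => ⟨Ioo_subset_Icc_self (ht htm).1, (ht htm).2⟩)
  rw [hθ.map_zero, hθ.map_length, hθ.integral_circle_mul_γ_eq_zero hφ hR dF hσ] at by_parts
  calc D.contourIntegral (fun z => F (φ z))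
      = D.contourIntegral (fun z => F (φ z) - F (φ (D.γ 0))) := by
        rw [JordanDomain.contourIntegral_sub F_cont continuous_const,
          JordanDomain.contourIntegral_const, sub_zero]
    _ = ∫ s in 0..D.l, (∫ t in 0..θ s, φ (D.γ 0) * exp (t * I) * I *
          deriv F (φ (D.γ 0) * exp (t * I))) * deriv D.γ s := by
        refine intervalIntegral.integral_congr fun s hs => ?_
        rw [uIcc_of_le D.l_pos.le] at hs
        simp only [integral_mul_deriv_comp_circle hc hR hF, ← hθ.map_γ s hs]
    _ = 0 := by_parts

/-- The peak functions `((1 + z / w) / 2) ^ n` decrease in modulus to the indicator of `{w}`. -/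
theorem integral_fibre_eq_zero {w : ℂ} (hw : ‖w‖ = 1) :
    ∫ s in Icc 0 D.l ∩ {s | φ (D.γ s) = w}, deriv D.γ s = 0 := by
  set S : Set ℝ := {s | φ (D.γ s) = w}
  have S_closed : IsClosed S := isClosed_singleton.preimage hφ.continuous_comp_γ
  have hw0 : w ≠ 0 := norm_pos_iff.1 (hw ▸ one_pos)
  set peak : ℝ → ℂ := fun s => 2⁻¹ * (1 + φ (D.γ s) / w)
  have peak_cont : Continuous peak :=
    continuous_const.mul (continuous_const.add (hφ.continuous_comp_γ.div_const w))
  have peak_eq_one {s : ℝ} (hs : s ∈ S) : peak s = 1 := by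
    simp only [peak, show φ (D.γ s) = w from hs, div_self hw0]
    norm_num
  have norm_peak_lt {s : ℝ} (hs : s ∉ S) : ‖peak s‖ < 1 :=
    norm_inv_two_mul_one_add_lt_one (by rw [norm_div, hφ.norm_map_γ, hw, div_one])
      fun h => hs ((div_eq_one_iff_eq hw0).1 h)
  have norm_peak_le (s : ℝ) : ‖peak s‖ ≤ 1 := by
    by_cases hs : s ∈ S
    · rw [peak_eq_one hs, norm_one]
    · exact (norm_peak_lt hs).le
  have limit : Tendsto (fun n : ℕ => ∫ s in Icc 0 D.l, peak s ^ n * deriv D.γ s) atTop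
      (nhds (∫ s in Icc 0 D.l, S.indicator (deriv D.γ) s)) := by
    have deriv_meas {μ : Measure ℝ} : AEStronglyMeasurable (deriv D.γ) μ :=
      (measurable_deriv D.γ).aestronglyMeasurable
    refine tendsto_integral_of_dominated_convergence (fun s => ‖deriv D.γ s‖)
      (fun n => (peak_cont.pow n).aestronglyMeasurable.mul deriv_meas) ?_
      (fun n => .of_forall fun s => ?_) (.of_forall fun s => ?_)
    · rw [integrable_norm_iff deriv_meas]
      exact (intervalIntegrable_iff_integrableOn_Icc_of_le D.l_pos.le).1
        (intervalIntegrable_deriv_of_lipschitzWith D.lipschitzWith)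
    · rw [norm_mul, norm_pow]
      exact mul_le_of_le_one_left (norm_nonneg _) (pow_le_one₀ (norm_nonneg _) (norm_peak_le s))
    · by_cases hs : s ∈ S
      · simp [peak_eq_one hs, hs]
      · simpa [hs] using (tendsto_pow_atTop_nhds_zero_of_norm_lt_one (norm_peak_lt hs)).mul_const _
  rw [← setIntegral_indicator S_closed.measurableSet]
  refine tendsto_nhds_unique limit (tendsto_const_nhds.congr fun n => ?_)
  rw [integral_Icc_eq_integral_Ioc, ← intervalIntegral.integral_of_le D.l_pos.le]
  exact (hθ.contourIntegral_comp_eq_zero hφ one_lt_two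
    (F := fun z => (2⁻¹ * (1 + z / w)) ^ n) (by fun_prop)).symm

theorem mem_fibre_iff {s : ℝ} (hs : s ∈ Ioo 0 D.l) (x : ℝ) :
    x ∈ Icc 0 D.l ∩ {x | φ (D.γ x) = φ (D.γ s)} ↔ x ∈ Ioo 0 D.l ∧ θ x = θ s := by
  refine ⟨fun ⟨hx, hxs⟩ => ?_, fun ⟨hx, hxs⟩ => ⟨Ioo_subset_Icc_self hx, ?_⟩⟩
  · rw [mem_ofPred_eq, hθ.map_γ s (Ioo_subset_Icc_self hs)] at hxs
    rcases hx.2.eq_or_lt with rfl | hxl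
    · rw [D.γ_l] at hxs
      exact absurd (hθ.apply_eq_of_map_γ_eq hφ ⟨le_rfl, D.l_pos⟩ (hθ.mapsTo hs) hxs).1.1
        (lt_irrefl 0)
    · exact hθ.apply_eq_of_map_γ_eq hφ ⟨hx.1, hxl⟩ (hθ.mapsTo hs) hxs
  · rw [mem_ofPred_eq, hθ.map_γ s (Ioo_subset_Icc_self hs), hθ.map_γ x (Ioo_subset_Icc_self hx),
      hxs]

theorem injOn : InjOn θ (Ioo 0 D.l) := by
  intro s hs t ht hst
  set S : Set ℝ := Icc 0 D.l ∩ {x | φ (D.γ x) = φ (D.γ s)}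
  have mem_S := hθ.mem_fibre_iff hφ hs
  have s_mem : s ∈ S := (mem_S s).2 ⟨hs, rfl⟩
  have t_mem : t ∈ S := (mem_S t).2 ⟨ht, hst.symm⟩
  have S_compact : IsCompact S :=
    isCompact_Icc.inter_right (isClosed_singleton.preimage hφ.continuous_comp_γ)
  have S_ordConnected : S.OrdConnected := by
    refine ⟨fun x hx y hy z hz => ?_⟩
    rw [mem_S] at hx hy ⊢
    exact ⟨⟨hx.1.1.trans_le hz.1, hz.2.trans_lt hy.1.2⟩,
      le_antisymm (hy.2 ▸ hθ.monotone hz.2) (hx.2 ▸ hθ.monotone hz.1)⟩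
  have S_eq := eq_Icc_of_connected_compact ⟨⟨s, s_mem⟩, S_ordConnected.isPreconnected⟩ S_compact
  set a := sInf S
  set b := sSup S
  have hab : a ≤ b := nonempty_Icc.1 (S_eq ▸ ⟨s, s_mem⟩)
  have γ_eq : D.γ b = D.γ a := by
    rw [← sub_eq_zero, ← integral_deriv_eq_sub_of_lipschitzWith D.lipschitzWith,
      intervalIntegral.integral_of_le hab, ← integral_Icc_eq_integral_Ioc, ← S_eq]
    exact hθ.integral_fibre_eq_zero hφ (hφ.norm_map_γ s)
  have ha := ((mem_S a).1 (S_eq.ge (left_mem_Icc.2 hab))).1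
  have hb := ((mem_S b).1 (S_eq.ge (right_mem_Icc.2 hab))).1
  have hba : b = a := D.γ_injOn (Ioo_subset_Ico_self hb) (Ioo_subset_Ico_self ha) γ_eq
  have S_subsingleton : S.Subsingleton := by
    rw [S_eq, hba, Icc_self]
    exact subsingleton_singleton
  exact S_subsingleton s_mem t_mem

theorem γ_eq_of_map_γ_eq {s t : ℝ} (h : φ (D.γ s) = φ (D.γ t)) : D.γ s = D.γ t := by
  have of_pos {s t : ℝ} (ht : t ∈ Ioo 0 D.l) (h : φ (D.γ s) = φ (D.γ t)) : D.γ s = D.γ t :=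
    hθ.γ_eq_of_forall_apply_eq hφ (hθ.mapsTo ht) (fun y hy hyt => hθ.injOn hφ hy ht hyt)
      (h.trans (hθ.map_γ t (Ioo_subset_Icc_self ht)))
  obtain ⟨s', hs, γs⟩ := D.exists_mem_Ico_γ_eq 0 s
  obtain ⟨t', ht, γt⟩ := D.exists_mem_Ico_γ_eq 0 t
  rw [zero_add] at hs ht
  rw [← γs, ← γt] at h ⊢
  rcases ht.1.eq_or_lt with rfl | ht0
  · rcases hs.1.eq_or_lt with rfl | hs0
    · rfl
    · exact (of_pos ⟨hs0, hs.2⟩ h.symm).symm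
  · exact of_pos ⟨ht0, ht.2⟩ h

theorem contourIntegral_eq_zero {f : ℂ → ℂ} (hf : ContinuousOn f (closure D.G))
    (hfd : DifferentiableOn ℂ f D.G) : D.contourIntegral f = 0 := by
  have radial_mem {r : ℝ} (hr : r ∈ Ioo 0 1) (s : ℝ) : (r : ℂ) * φ (D.γ s) ∈ ball 0 1 :=
    ofReal_mul_mem_ball (hφ.norm_map_γ s) hr
  have inner_contour {r : ℝ} (hr : r ∈ Ioo 0 1) :
      D.contourIntegral (fun z => f (hφ.inverse (r * φ z))) = 0 :=
     hθ.contourIntegral_comp_eq_zero hφ ((one_lt_inv₀ hr.1).2 hr.2)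
      (F := fun w => f (hφ.inverse (r * w)))
      (hfd.comp (hφ.differentiableOn_inverse_mul hr.1) (hφ.mapsTo_inverse_mul hr.1))
  obtain ⟨B, hB⟩ := D.isCompact_closure.exists_bound_of_continuousOn hf
  have inverse_mem {r : ℝ} (hr : r ∈ Ioo 0 1) (s : ℝ) :
      hφ.inverse (r * φ (D.γ s)) ∈ closure D.G :=
    subset_closure (hφ.inverse_mem (radial_mem hr s))
  have tendsto_outer :
      Tendsto (fun r : ℝ => D.contourIntegral (fun z => f (hφ.inverse (r * φ z))))
        (nhdsWithin 1 (Iio 1)) (nhds (D.contourIntegral f)) := by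
    refine intervalIntegral.tendsto_integral_filter_of_dominated_convergence
      (fun s => B * ‖deriv D.γ s‖) ?_ ?_ ?_ (.of_forall fun s _ => Tendsto.mul_const _ ?_)
    · filter_upwards [Ioo_mem_nhdsLT one_pos] with r hr
      refine (hf.comp_continuous ?_ (inverse_mem hr)).aestronglyMeasurable.mul
        (measurable_deriv D.γ).aestronglyMeasurable
      exact hφ.differentiableOn_inverse.continuousOn.comp_continuous
        (continuous_const.mul hφ.continuous_comp_γ) (radial_mem hr)
    · filter_upwards [Ioo_mem_nhdsLT one_pos] with r hr
      refine .of_forall fun s _ => ?_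
      rw [norm_mul]
      gcongr
      exact hB _ (inverse_mem hr s)
    · exact (intervalIntegrable_deriv_of_lipschitzWith D.lipschitzWith).norm.const_mul B
    · refine (hf (D.γ s) (D.γ_mem_closure s)).tendsto.comp (tendsto_nhdsWithin_iff.2 ⟨?_, ?_⟩)
      · exact hφ.tendsto_inverse_radial (hφ.norm_map_γ s) fun t => hθ.γ_eq_of_map_γ_eq hφ
      · filter_upwards [Ioo_mem_nhdsLT one_pos] with r hr using inverse_mem hr s
  refine tendsto_nhds_unique tendsto_outer (tendsto_const_nhds.congr' ?_)
  filter_upwards [Ioo_mem_nhdsLT one_pos] with r hr using (inner_contour hr).symm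

end BoundaryArgument

/-! ### The index of the boundary curve -/

theorem hasDerivAt_log_mul_sub {c z w : ℂ} (h : c * (w - z) ∈ slitPlane) :
    HasDerivAt (fun w => log (c * (w - z))) (w - z)⁻¹ w := by
  have hne := slitPlane_ne_zero h
  refine ((((hasDerivAt_id w).sub_const z).const_mul c).clog h).congr_deriv ?_
  rw [id, mul_one, div_mul_cancel_left₀ (left_ne_zero_of_mul hne)]

theorem log_sub_log_neg_of_im_pos {w : ℂ} (hw : 0 < w.im) : log w - log (-w) = Real.pi * I := by
  rw [log, log, arg_neg_eq_arg_sub_pi_of_im_pos hw, norm_neg]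
  push_cast
  ring

theorem log_sub_log_neg_of_im_neg {w : ℂ} (hw : w.im < 0) :
    log w - log (-w) = -(Real.pi * I) := by
  rw [log, log, arg_neg_eq_arg_add_pi_of_im_neg hw, norm_neg]
  push_cast
  ring

namespace JordanDomain

variable {D : JordanDomain} {f g : ℂ → ℂ} {z : ℂ} {s₀ : ℝ}

theorem contourIntegral_add (hf : Continuous fun s => f (D.γ s))
    (hg : Continuous fun s => g (D.γ s)) :
    D.contourIntegral (fun z => f z + g z) = D.contourIntegral f + D.contourIntegral g := by
  simp only [contourIntegral, add_mul]
  exact intervalIntegral.integral_add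
    (intervalIntegrable_mul_deriv_of_lipschitzWith D.lipschitzWith hf.continuousOn)
    (intervalIntegrable_mul_deriv_of_lipschitzWith D.lipschitzWith hg.continuousOn)

theorem contourIntegral_const_mul (c : ℂ) (f : ℂ → ℂ) :
    D.contourIntegral (fun z => c * f z) = c * D.contourIntegral f := by
  simp only [contourIntegral, mul_assoc, intervalIntegral.integral_const_mul]

theorem γ_ne_of_mem (hz : z ∈ D.G) (s : ℝ) : D.γ s ≠ z := fun h => D.γ_notMem s (h ▸ hz)

theorem continuous_inv_γ_sub (hz : ∀ s, D.γ s ≠ z) : Continuous fun s => (D.γ s - z)⁻¹ :=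
  (D.γ_cont.sub continuous_const).inv₀ fun s => sub_ne_zero.2 (hz s)

theorem continuous_inv_γ_sub_sq (hz : ∀ s, D.γ s ≠ z) :
    Continuous fun s => ((D.γ s - z) ^ 2)⁻¹ :=
  ((D.γ_cont.sub continuous_const).pow 2).inv₀ fun s => pow_ne_zero 2 (sub_ne_zero.2 (hz s))

theorem contourIntegral_inv_sub_sq (hz : ∀ s, D.γ s ≠ z) :
    D.contourIntegral (fun w => ((w - z) ^ 2)⁻¹) = 0 := by
  refine contourIntegral_eq_zero_of_hasDerivAt (f := fun w => -(w - z)⁻¹)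
    isOpen_compl_singleton (fun w hw => ?_) hz
  refine (((hasDerivAt_id w).sub_const z).inv (sub_ne_zero.2 hw)).neg.congr_deriv ?_
  simp [neg_div]

variable (D) in
/-- The winding number of the boundary curve around `z`, without the factor `(2πi)⁻¹`. -/
noncomputable def index (z : ℂ) : ℂ := D.contourIntegral fun w => (w - z)⁻¹

theorem le_norm_γ_sub {r : ℝ} (hr : ball z r ⊆ D.G) (s : ℝ) : r ≤ ‖D.γ s - z‖ := by
  by_contra! h
  exact D.γ_notMem s (hr (mem_ball_iff_norm.2 h))

theorem index_eq_of_norm_sub_lt {z₀ : ℂ} (h : ∀ s, ‖z - z₀‖ < ‖D.γ s - z₀‖) :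
    D.index z = D.index z₀ := by
  have γ_ne (s : ℝ) : D.γ s ≠ z := fun hs => (h s).ne (by rw [hs])
  have γ_ne₀ (s : ℝ) : D.γ s ≠ z₀ := fun hs => by simpa [hs] using (norm_nonneg _).trans_lt (h s)
  have sub_eq_zero : D.contourIntegral (fun w => (w - z)⁻¹ - (w - z₀)⁻¹) = 0 := by
    refine contourIntegral_eq_zero_of_hasDerivAt (U := {w | ‖z - z₀‖ < ‖w - z₀‖})
      (f := fun w => log ((w - z) / (w - z₀))) (isOpen_lt continuous_const (by fun_prop))
      (fun w (hw : ‖z - z₀‖ < ‖w - z₀‖) => ?_) h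
    have hw₀ : w - z₀ ≠ 0 := norm_pos_iff.1 ((norm_nonneg _).trans_lt hw)
    have hwz : w - z ≠ 0 := fun hwz => hw.ne (by rw [sub_eq_zero.1 hwz])
    have quotient_mem : (w - z) / (w - z₀) ∈ slitPlane := by
      have quotient_eq : (w - z) / (w - z₀) = 1 + (z₀ - z) / (w - z₀) := by field_simp; ring
      rw [quotient_eq]
      refine mem_slitPlane_of_norm_lt_one ?_
      rwa [norm_div, norm_sub_rev z₀, div_lt_one (norm_pos_iff.2 hw₀)]
    refine ((((hasDerivAt_id w).sub_const z).div ((hasDerivAt_id w).sub_const z₀) hw₀).clog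
      quotient_mem).congr_deriv ?_
    simp only [id, Pi.div_apply]
    field_simp
  rwa [contourIntegral_sub (continuous_inv_γ_sub γ_ne) (continuous_inv_γ_sub γ_ne₀),
    _root_.sub_eq_zero] at sub_eq_zero

theorem index_eq_index {w : ℂ} (hz : z ∈ D.G) (hw : w ∈ D.G) : D.index z = D.index w := by
  have isLocallyConstant : IsLocallyConstant fun x : D.G => D.index x := by
    refine (IsLocallyConstant.iff_eventually_eq _).2 fun x => ?_
    obtain ⟨r, hr, hball⟩ := Metric.isOpen_iff.1 D.isOpen x x.2
    filter_upwards [continuous_subtype_val.continuousAt.preimage_mem_nhds (ball_mem_nhds _ hr)]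
      with y hy
    exact index_eq_of_norm_sub_lt fun s => (mem_ball_iff_norm.1 hy).trans_le (le_norm_γ_sub hball s)
  have := isPreconnected_iff_preconnectedSpace.1 D.connected.isPreconnected
  exact isLocallyConstant.apply_eq_of_preconnectedSpace ⟨z, hz⟩ ⟨w, hw⟩

/-- A parameter strictly between `0` and `l` at which the boundary has a unit tangent vector. -/
structure RegularAt (D : JordanDomain) (s₀ : ℝ) : Prop where
  mem_Ioo : s₀ ∈ Ioo 0 D.l
  differentiableAt : DifferentiableAt ℝ D.γ s₀
  norm_deriv : ‖deriv D.γ s₀‖ = 1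

theorem ae_regularAt : ∀ᵐ s, s ∈ Ioo 0 D.l → D.RegularAt s := by
  filter_upwards [ae_hasDerivAt_of_lipschitzWith D.lipschitzWith, D.ae_norm_deriv_eq_one]
    with s hd hn hs using ⟨hs, hd.differentiableAt, hn⟩

variable (D) in
/-- The point at signed distance `e` from `γ s₀` on the normal line of the boundary there. -/
noncomputable def normalPoint (s₀ e : ℝ) : ℂ := D.γ s₀ + I * e * deriv D.γ s₀

theorem continuous_normalPoint : Continuous (D.normalPoint s₀) := by
  unfold normalPoint
  fun_prop

theorem normalPoint_zero : D.normalPoint s₀ 0 = D.γ s₀ := by simp [normalPoint]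

namespace RegularAt

theorem deriv_ne_zero (h : D.RegularAt s₀) : deriv D.γ s₀ ≠ 0 :=
  norm_pos_iff.1 (h.norm_deriv ▸ one_pos)

theorem eventually_norm_div_deriv_sub_le (h : D.RegularAt s₀) : ∀ᶠ s in nhds s₀,
    ‖(D.γ s - D.γ s₀) / deriv D.γ s₀ - ((s - s₀ : ℝ) : ℂ)‖ ≤ |s - s₀| / 4 := by
  have isLittleO := hasDerivAt_iff_isLittleO.1 h.differentiableAt.hasDerivAt
  filter_upwards [isLittleO.def (c := 1 / 4) (by norm_num)] with s hs
  have sub_eq : (D.γ s - D.γ s₀) / deriv D.γ s₀ - ((s - s₀ : ℝ) : ℂ) =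
      (D.γ s - D.γ s₀ - (s - s₀) • deriv D.γ s₀) / deriv D.γ s₀ := by
    have := h.deriv_ne_zero
    rw [real_smul]
    field_simp
  rw [sub_eq, norm_div, h.norm_deriv, div_one]
  exact hs.trans_eq (by rw [Real.norm_eq_abs]; ring)

theorem γ_ne (h : D.RegularAt s₀) {s : ℝ} (hs : s ∈ Icc 0 D.l) (hne : s ≠ s₀) :
    D.γ s ≠ D.γ s₀ := by
  intro hγ
  rcases hs.2.eq_or_lt with rfl | hsl
  · rw [γ_l] at hγ
    exact h.mem_Ioo.1.ne (D.γ_injOn ⟨le_rfl, D.l_pos⟩ (Ioo_subset_Ico_self h.mem_Ioo) hγ)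
  · exact hne (D.γ_injOn ⟨hs.1, hsl⟩ (Ioo_subset_Ico_self h.mem_Ioo) hγ)

theorem norm_γ_sub_normalPoint (h : D.RegularAt s₀) (s e : ℝ) :
    ‖D.γ s - D.normalPoint s₀ e‖ = ‖(D.γ s - D.γ s₀) / deriv D.γ s₀ - I * e‖ := by
  have := h.deriv_ne_zero
  rw [← div_one ‖D.γ s - D.normalPoint s₀ e‖, ← h.norm_deriv, ← norm_div, normalPoint]
  congr 1
  field_simp
  ring

theorem norm_normalPoint_sub (h : D.RegularAt s₀) (e : ℝ) :
    ‖D.normalPoint s₀ e - D.γ s₀‖ = |e| := by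
  simp [normalPoint, h.norm_deriv]

theorem exists_le_norm_γ_sub (h : D.RegularAt s₀) {δ : ℝ} (hδ : 0 < δ) :
    ∃ d > 0, ∀ s ∈ Icc 0 D.l, δ ≤ |s - s₀| → d ≤ ‖D.γ s - D.γ s₀‖ := by
  have isCompact : IsCompact (Icc 0 D.l ∩ {s | δ ≤ |s - s₀|}) :=
    isCompact_Icc.inter_right (isClosed_le continuous_const (by fun_prop))
  obtain ⟨d, hd, hle⟩ := isCompact.exists_forall_le' (f := fun s => ‖D.γ s - D.γ s₀‖) (a := 0)
    (D.γ_cont.sub continuous_const).norm.continuousOn fun s hs =>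
      norm_pos_iff.2 (sub_ne_zero.2 (h.γ_ne hs.1 fun hs₀ => hδ.not_ge (by simpa [hs₀] using hs.2)))
  exact ⟨d, hd, fun s hs hsδ => hle s ⟨hs, hsδ⟩⟩

theorem exists_mul_le_norm_γ_sub_normalPoint (h : D.RegularAt s₀) :
    ∃ k > 0, ∀ᶠ e in nhds 0, ∀ s ∈ Icc 0 D.l,
      k * (|s - s₀| + |e|) ≤ ‖D.γ s - D.normalPoint s₀ e‖ := by
  obtain ⟨δ, hδ, near⟩ := Metric.eventually_nhds_iff.1 h.eventually_norm_div_deriv_sub_le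
  obtain ⟨d, hd, away⟩ := h.exists_le_norm_γ_sub hδ
  have hl := D.l_pos
  have small : ∀ᶠ e : ℝ in nhds 0, |e| < min (d / 2) D.l :=
    (continuous_abs.tendsto' 0 0 abs_zero).eventually_lt_const (by positivity)
  refine ⟨min (1 / 4) (d / (4 * D.l)), by positivity, small.mono fun e he s hs => ?_⟩
  rw [lt_min_iff] at he
  rcases lt_or_ge |s - s₀| δ with hsδ | hsδ
  · rw [h.norm_γ_sub_normalPoint]
    set u := (D.γ s - D.γ s₀) / deriv D.γ s₀
    have line_re : |s - s₀| ≤ ‖((s - s₀ : ℝ) : ℂ) - I * e‖ := by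
      simpa using abs_re_le_norm (((s - s₀ : ℝ) : ℂ) - I * e)
    have line_im : |e| ≤ ‖((s - s₀ : ℝ) : ℂ) - I * e‖ := by
      simpa using abs_im_le_norm (((s - s₀ : ℝ) : ℂ) - I * e)
    have triangle : ‖((s - s₀ : ℝ) : ℂ) - I * e‖ ≤ ‖u - I * e‖ + |s - s₀| / 4 := by
      refine (norm_le_insert' _ (u - I * e)).trans (add_le_add_right ?_ _)
      rw [sub_sub_sub_cancel_right, norm_sub_rev]
      exact near hsδ
    calc min (1 / 4) (d / (4 * D.l)) * (|s - s₀| + |e|) ≤ 1 / 4 * (|s - s₀| + |e|) := by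
          gcongr
          exact min_le_left _ _
      _ ≤ ‖u - I * e‖ := by linarith [abs_nonneg e]
  · have hsl : |s - s₀| ≤ D.l := by
      rw [abs_le]
      constructor <;> linarith [hs.1, hs.2, h.mem_Ioo.1, h.mem_Ioo.2]
    have triangle := norm_sub_norm_le (D.γ s - D.γ s₀) (D.normalPoint s₀ e - D.γ s₀)
    rw [sub_sub_sub_cancel_right, h.norm_normalPoint_sub] at triangle
    calc min (1 / 4) (d / (4 * D.l)) * (|s - s₀| + |e|) ≤ d / (4 * D.l) * (D.l + D.l) := by
          gcongr
          exacts [min_le_right _ _, he.2.le]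
      _ = d / 2 := by field_simp; norm_num
      _ ≤ ‖D.γ s - D.normalPoint s₀ e‖ := by linarith [away s hs hsδ, he.1]

theorem exists_eventually_mul_le_norm (h : D.RegularAt s₀) :
    ∃ k > 0, ∀ᶠ e in nhdsWithin 0 (Ioi 0), ∀ s ∈ Icc 0 D.l,
      k * (|s - s₀| + e) ≤ ‖D.γ s - D.normalPoint s₀ e‖ ∧
        k * (|s - s₀| + e) ≤ ‖D.γ s - D.normalPoint s₀ (-e)‖ := by
  obtain ⟨k, hk, hle⟩ := h.exists_mul_le_norm_γ_sub_normalPoint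
  refine ⟨k, hk, ?_⟩
  have hle_neg := (continuous_neg.tendsto' (0 : ℝ) 0 neg_zero).eventually hle
  filter_upwards [nhdsWithin_le_nhds hle, nhdsWithin_le_nhds hle_neg, self_mem_nhdsWithin]
    with e hpos hneg he s hs
  simp only [abs_neg, abs_of_pos (mem_Ioi.1 he)] at hpos hneg
  exact ⟨hpos s hs, hneg s hs⟩

end RegularAt

end JordanDomain

/-! ### Cauchy's integral formulas -/

theorem JordanDomain.contourIntegral_sub_const_mul {D : JordanDomain} {f g : ℂ → ℂ}
    (hf : Continuous fun s => f (D.γ s)) (hg : Continuous fun s => g (D.γ s)) (c : ℂ) :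
    D.contourIntegral (fun w => (f w - c) * g w) =
      D.contourIntegral (fun w => f w * g w) - c * D.contourIntegral g := by
  rw [← contourIntegral_const_mul, ← contourIntegral_sub (f := fun w => f w * g w)
    (g := fun w => c * g w) (hf.mul hg) (continuous_const.mul hg)]
  simp only [sub_mul]

namespace BoundaryArgument

variable {D : JordanDomain} {φ f : ℂ → ℂ} {θ : ℝ → ℝ} {z : ℂ} (hφ : RiemannMap D φ)
  (hθ : BoundaryArgument D φ θ)
include hθ

include hφ in
theorem contourIntegral_mul_inv_sub (hf : ContinuousOn f (closure D.G))
    (hfd : DifferentiableOn ℂ f D.G) (hz : z ∈ D.G) :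
    D.contourIntegral (fun w => f w * (w - z)⁻¹) = f z * D.index z := by
  have γ_ne := D.γ_ne_of_mem hz
  have mem_nhds : D.G ∈ nhds z := D.isOpen.mem_nhds hz
  have dslope_eq (s : ℝ) : (f (D.γ s) - f z) * (D.γ s - z)⁻¹ = dslope f z (D.γ s) := by
    rw [dslope_of_ne _ (γ_ne s), slope_def_field, div_eq_mul_inv]
  have integral_dslope := hθ.contourIntegral_eq_zero hφ
    ((continuousOn_dslope (mem_of_superset mem_nhds subset_closure)).2
      ⟨hf, hfd.differentiableAt mem_nhds⟩) ((differentiableOn_dslope mem_nhds).2 hfd)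
  rw [← sub_eq_zero, JordanDomain.index, ← JordanDomain.contourIntegral_sub_const_mul
    (hf.comp_continuous D.γ_cont D.γ_mem_closure) (D.continuous_inv_γ_sub γ_ne), ← integral_dslope]
  simp only [JordanDomain.contourIntegral, dslope_eq]

include hφ in
theorem contourIntegral_mul_inv_sub_sq (hf : ContinuousOn f (closure D.G))
    (hfd : DifferentiableOn ℂ f D.G) (hz : z ∈ D.G) :
    D.contourIntegral (fun w => f w * ((w - z) ^ 2)⁻¹) = deriv f z * D.index z := by
  have γ_ne := D.γ_ne_of_mem hz
  have mem_nhds : D.G ∈ nhds z := D.isOpen.mem_nhds hz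
  have dslope_eq (s : ℝ) : (f (D.γ s) - f z) * ((D.γ s - z) ^ 2)⁻¹ =
      dslope f z (D.γ s) * (D.γ s - z)⁻¹ := by
    rw [dslope_of_ne _ (γ_ne s), slope_def_field, ← inv_pow]
    ring
  rw [← dslope_same f z, ← hθ.contourIntegral_mul_inv_sub hφ
    ((continuousOn_dslope (mem_of_superset mem_nhds subset_closure)).2
      ⟨hf, hfd.differentiableAt mem_nhds⟩) ((differentiableOn_dslope mem_nhds).2 hfd) hz,
    ← sub_zero (D.contourIntegral _), ← mul_zero (f z), ← D.contourIntegral_inv_sub_sq γ_ne,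
    ← JordanDomain.contourIntegral_sub_const_mul
      (hf.comp_continuous D.γ_cont D.γ_mem_closure) (D.continuous_inv_γ_sub_sq γ_ne)]
  simp only [JordanDomain.contourIntegral, dslope_eq]

include hφ in
theorem index_eq_zero (hz : z ∉ closure D.G) : D.index z = 0 := by
  have sub_ne_zero : ∀ w ∈ closure D.G, w - z ≠ 0 := fun w hw h => hz (sub_eq_zero.1 h ▸ hw)
  exact hθ.contourIntegral_eq_zero hφ (ContinuousOn.inv₀ (by fun_prop) sub_ne_zero)
    (DifferentiableOn.inv (by fun_prop) fun w hw => sub_ne_zero w (subset_closure hw))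

include hφ in
theorem contourIntegral_mul_inv_sub_sq_eq_zero (hf : ContinuousOn f (closure D.G))
    (hfd : DifferentiableOn ℂ f D.G) (hz : z ∉ closure D.G) :
    D.contourIntegral (fun w => f w * ((w - z) ^ 2)⁻¹) = 0 := by
  have sub_sq_ne_zero : ∀ w ∈ closure D.G, (w - z) ^ 2 ≠ 0 := fun w hw h =>
    hz (sub_eq_zero.1 (pow_eq_zero_iff two_ne_zero |>.1 h) ▸ hw)
  exact hθ.contourIntegral_eq_zero hφ (hf.mul (ContinuousOn.inv₀ (by fun_prop) sub_sq_ne_zero))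
    (hfd.mul (DifferentiableOn.inv (by fun_prop) fun w hw => sub_sq_ne_zero w (subset_closure hw)))

end BoundaryArgument

/-! ### Jumps across the boundary curve -/

theorem tendsto_neg_nhdsGT_nhdsNE :
    Tendsto (fun e : ℝ => -e) (nhdsWithin 0 (Ioi 0)) (nhdsWithin 0 {0}ᶜ) := by
  refine tendsto_nhdsWithin_iff.2
    ⟨(continuous_neg.tendsto' 0 0 neg_zero).mono_left nhdsWithin_le_nhds, ?_⟩
  filter_upwards [self_mem_nhdsWithin] with e he using neg_ne_zero.2 (ne_of_gt he)

theorem re_pos_of_norm_sub_le {u : ℂ} {x : ℝ} (hx : 0 < x) (h : ‖u - x‖ ≤ |x| / 4) : 0 < u.re := by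
  have := (abs_le.1 ((abs_re_le_norm _).trans h)).1
  rw [sub_re, ofReal_re, abs_of_pos hx] at this
  linarith

theorem re_neg_of_norm_sub_le {u : ℂ} {x : ℝ} (hx : x < 0) (h : ‖u - x‖ ≤ |x| / 4) : u.re < 0 := by
  have := re_pos_of_norm_sub_le (u := -u) (x := -x) (neg_pos.2 hx)
    (by rwa [ofReal_neg, neg_sub_neg, norm_sub_rev, abs_neg])
  rwa [neg_re, neg_pos] at this

theorem ofReal_add_I_mul_mem_slitPlane {u : ℂ} {x e : ℝ} (he : 0 < e) (h : ‖u - x‖ ≤ |x| / 4) :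
    e + I * u ∈ slitPlane := by
  rcases lt_trichotomy x 0 with hx | rfl | hx
  · exact .inr (by simpa using (re_neg_of_norm_sub_le hx h).ne)
  · have hu : u = 0 := by simpa using h
    exact .inl (by simpa [hu] using he)
  · exact .inr (by simpa using (re_pos_of_norm_sub_le hx h).ne')

namespace JordanDomain

variable {D : JordanDomain} {s₀ : ℝ}

theorem tendsto_integral_inv_sub_of_slitPlane {ι : Type*} {F : Filter ι} {z : ι → ℂ} {z₀ c : ℂ}
    {a b : ℝ} (hz : Tendsto z F (nhds z₀))
    (hslit : ∀ᶠ i in F, ∀ s ∈ uIcc a b, c * (D.γ s - z i) ∈ slitPlane)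
    (ha : c * (D.γ a - z₀) ∈ slitPlane) (hb : c * (D.γ b - z₀) ∈ slitPlane) :
    Tendsto (fun i => ∫ s in a..b, (D.γ s - z i)⁻¹ * deriv D.γ s) F
      (nhds (log (c * (D.γ b - z₀)) - log (c * (D.γ a - z₀)))) := by
  have tendsto_log {s : ℝ} (hs : c * (D.γ s - z₀) ∈ slitPlane) :
      Tendsto (fun i => log (c * (D.γ s - z i))) F (nhds (log (c * (D.γ s - z₀)))) :=
    ((tendsto_const_nhds.sub hz).const_mul c).clog hs
  refine ((tendsto_log hb).sub (tendsto_log ha)).congr' ?_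
  filter_upwards [hslit] with i hi
  exact (integral_comp_mul_deriv_eq_sub D.lipschitzWith (U := {w | c * (w - z i) ∈ slitPlane})
    (isOpen_slitPlane.preimage (by fun_prop)) (fun w hw => hasDerivAt_log_mul_sub hw) hi).symm

theorem tendsto_normalPoint : Tendsto (D.normalPoint s₀) (nhds 0) (nhds (D.γ s₀)) :=
  D.continuous_normalPoint.tendsto' 0 _ D.normalPoint_zero

namespace RegularAt

theorem eventually_γ_ne_normalPoint (h : D.RegularAt s₀) :
    ∀ᶠ e in nhdsWithin 0 {0}ᶜ, ∀ s, D.γ s ≠ D.normalPoint s₀ e := by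
  obtain ⟨k, hk, hle⟩ := h.exists_mul_le_norm_γ_sub_normalPoint
  filter_upwards [nhdsWithin_le_nhds hle, self_mem_nhdsWithin] with e he hne s hs
  obtain ⟨t, ht, hts⟩ := D.exists_mem_Ico_γ_eq 0 s
  have hpos : 0 < k * (|t - s₀| + |e|) := by
    have := abs_pos.2 hne
    positivity
  refine hpos.not_ge ((he t ⟨ht.1, by linarith [ht.2]⟩).trans_eq ?_)
  rw [hts, hs, sub_self, norm_zero]

theorem tendsto_integral_inv_sub_normalPoint (h : D.RegularAt s₀) {δ p q : ℝ} (hδ : 0 < δ)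
    (hpq : uIcc p q ⊆ Icc 0 D.l) (haway : ∀ s ∈ uIcc p q, δ ≤ |s - s₀|) :
    Tendsto (fun e => ∫ s in p..q, (D.γ s - D.normalPoint s₀ e)⁻¹ * deriv D.γ s)
      (nhdsWithin 0 {0}ᶜ) (nhds (∫ s in p..q, (D.γ s - D.γ s₀)⁻¹ * deriv D.γ s)) := by
  obtain ⟨k, hk, hle⟩ := h.exists_mul_le_norm_γ_sub_normalPoint
  refine intervalIntegral.tendsto_integral_filter_of_dominated_convergence (fun _ => (k * δ)⁻¹)
    ?_ ?_ intervalIntegrable_const (.of_forall fun s hs => Tendsto.mul_const _ ?_)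
  · filter_upwards [h.eventually_γ_ne_normalPoint] with e he
    exact (D.continuous_inv_γ_sub he).aestronglyMeasurable.mul
      (measurable_deriv D.γ).aestronglyMeasurable
  · filter_upwards [nhdsWithin_le_nhds hle] with e he
    filter_upwards [D.ae_norm_deriv_eq_one] with s hs hsI
    have hsI := uIoc_subset_uIcc hsI
    rw [norm_mul, hs, mul_one, norm_inv]
    gcongr
    calc k * δ ≤ k * (|s - s₀| + |e|) := by
          gcongr
          linarith [haway s hsI, abs_nonneg e]
      _ ≤ _ := he s (hpq hsI)
  · have hs := uIoc_subset_uIcc hs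
    have γ_ne : D.γ s - D.γ s₀ ≠ 0 := sub_ne_zero.2 (h.γ_ne (hpq hs) fun hss => by
      have := haway s hs
      simp only [hss, sub_self, abs_zero] at this
      exact hδ.not_ge this)
    exact (tendsto_const_nhds.sub
      (D.tendsto_normalPoint.mono_left nhdsWithin_le_nhds)).inv₀ γ_ne

theorem exists_Icc_subset_Ioo (h : D.RegularAt s₀) : ∃ δ > 0, Icc (s₀ - δ) (s₀ + δ) ⊆ Ioo 0 D.l ∧
    ∀ s ∈ Icc (s₀ - δ) (s₀ + δ),
      ‖(D.γ s - D.γ s₀) / deriv D.γ s₀ - ((s - s₀ : ℝ) : ℂ)‖ ≤ |s - s₀| / 4 := by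
  obtain ⟨δ, hδ, hball⟩ := Metric.nhds_basis_closedBall.eventually_iff.1
    ((isOpen_Ioo.eventually_mem h.mem_Ioo).and h.eventually_norm_div_deriv_sub_le)
  rw [Real.closedBall_eq_Icc] at hball
  exact ⟨δ, hδ, fun s hs => (hball hs).1, fun s hs => (hball hs).2⟩

theorem div_mul_sub_normalPoint (h : D.RegularAt s₀) (s e : ℝ) :
    I / deriv D.γ s₀ * (D.γ s - D.normalPoint s₀ e) =
      e + I * ((D.γ s - D.γ s₀) / deriv D.γ s₀) := by
  have := h.deriv_ne_zero
  rw [normalPoint]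
  field_simp
  linear_combination -(deriv D.γ s₀ * e) * I_sq

-- Multiplying by `I / γ'(s₀)` makes the tangent vertical, which keeps the arc off the branch cut.
theorem div_mul_sub_normalPoint_mem_slitPlane (h : D.RegularAt s₀) {s e : ℝ} (he : 0 < e)
    (hs : ‖(D.γ s - D.γ s₀) / deriv D.γ s₀ - ((s - s₀ : ℝ) : ℂ)‖ ≤ |s - s₀| / 4) :
    I / deriv D.γ s₀ * (D.γ s - D.normalPoint s₀ e) ∈ slitPlane := by
  rw [h.div_mul_sub_normalPoint]
  exact ofReal_add_I_mul_mem_slitPlane he hs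

theorem neg_div_mul_sub_normalPoint_mem_slitPlane (h : D.RegularAt s₀) {s e : ℝ} (he : 0 < e)
    (hs : ‖(D.γ s - D.γ s₀) / deriv D.γ s₀ - ((s - s₀ : ℝ) : ℂ)‖ ≤ |s - s₀| / 4) :
    -(I / deriv D.γ s₀) * (D.γ s - D.normalPoint s₀ (-e)) ∈ slitPlane := by
  have neg_mul_sub : -(I / deriv D.γ s₀) * (D.γ s - D.normalPoint s₀ (-e)) =
      e + I * -((D.γ s - D.γ s₀) / deriv D.γ s₀) := by
    rw [neg_mul, h.div_mul_sub_normalPoint]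
    push_cast
    ring
  rw [neg_mul_sub]
  refine ofReal_add_I_mul_mem_slitPlane (x := -(s - s₀)) he ?_
  rwa [ofReal_neg, neg_sub_neg, norm_sub_rev, abs_neg]

theorem tendsto_integral_inv_sub_jump (h : D.RegularAt s₀) {δ : ℝ} (hδ : 0 < δ)
    (hnear : ∀ s ∈ Icc (s₀ - δ) (s₀ + δ),
      ‖(D.γ s - D.γ s₀) / deriv D.γ s₀ - ((s - s₀ : ℝ) : ℂ)‖ ≤ |s - s₀| / 4) :
    Tendsto (fun e => (∫ s in (s₀ - δ)..(s₀ + δ), (D.γ s - D.normalPoint s₀ e)⁻¹ * deriv D.γ s) -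
        ∫ s in (s₀ - δ)..(s₀ + δ), (D.γ s - D.normalPoint s₀ (-e))⁻¹ * deriv D.γ s)
      (nhdsWithin 0 (Ioi 0)) (nhds (2 * Real.pi * I)) := by
  set c : ℂ := I / deriv D.γ s₀
  have mul_sub_im (s : ℝ) : (c * (D.γ s - D.γ s₀)).im =
      ((D.γ s - D.γ s₀) / deriv D.γ s₀).re := by
    rw [← I_mul_im]
    simpa [normalPoint_zero] using congrArg im (h.div_mul_sub_normalPoint s 0)
  have left_im : (c * (D.γ (s₀ - δ) - D.γ s₀)).im < 0 := by
    rw [mul_sub_im]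
    exact re_neg_of_norm_sub_le (by linarith) (hnear _ (left_mem_Icc.2 (by linarith)))
  have right_im : 0 < (c * (D.γ (s₀ + δ) - D.γ s₀)).im := by
    rw [mul_sub_im]
    exact re_pos_of_norm_sub_le (by linarith) (hnear _ (right_mem_Icc.2 (by linarith)))
  rw [← uIcc_of_le (by linarith)] at hnear
  have tendsto_pos := D.tendsto_integral_inv_sub_of_slitPlane (F := nhdsWithin 0 (Ioi 0))
    (D.tendsto_normalPoint.mono_left nhdsWithin_le_nhds)
    (eventually_mem_nhdsWithin.mono fun e he s hs =>
      h.div_mul_sub_normalPoint_mem_slitPlane he (hnear s hs))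
    (.inr left_im.ne) (.inr right_im.ne')
  have tendsto_neg := D.tendsto_integral_inv_sub_of_slitPlane (c := -c)
    (D.tendsto_normalPoint.comp (tendsto_neg_nhdsGT_nhdsNE.mono_right nhdsWithin_le_nhds))
    (eventually_mem_nhdsWithin.mono fun e he s hs =>
      h.neg_div_mul_sub_normalPoint_mem_slitPlane he (hnear s hs))
    (.inr (by rw [neg_mul, neg_im]; exact (neg_pos.2 left_im).ne'))
    (.inr (by rw [neg_mul, neg_im]; exact (neg_neg_of_pos right_im).ne))
  have limit_eq : 2 * Real.pi * I =
      log (c * (D.γ (s₀ + δ) - D.γ s₀)) - log (c * (D.γ (s₀ - δ) - D.γ s₀)) -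
        (log (-c * (D.γ (s₀ + δ) - D.γ s₀)) - log (-c * (D.γ (s₀ - δ) - D.γ s₀))) := by
    rw [neg_mul, neg_mul]
    linear_combination log_sub_log_neg_of_im_neg left_im - log_sub_log_neg_of_im_pos right_im
  rw [limit_eq]
  exact tendsto_pos.sub tendsto_neg

theorem tendsto_integral_inv_sub_jump_zero (h : D.RegularAt s₀) {δ p q : ℝ} (hδ : 0 < δ)
    (hpq : p ≤ q) (hp : 0 ≤ p) (hq : q ≤ D.l) (haway : ∀ s ∈ Icc p q, δ ≤ |s - s₀|) :
    Tendsto (fun e => (∫ s in p..q, (D.γ s - D.normalPoint s₀ e)⁻¹ * deriv D.γ s) -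
        ∫ s in p..q, (D.γ s - D.normalPoint s₀ (-e))⁻¹ * deriv D.γ s)
      (nhdsWithin 0 (Ioi 0)) (nhds 0) := by
  rw [← uIcc_of_le hpq] at haway
  have tendsto_outer := h.tendsto_integral_inv_sub_normalPoint hδ
    (uIcc_of_le hpq ▸ Icc_subset_Icc hp hq) haway
  simpa using (tendsto_outer.mono_left (nhdsGT_le_nhdsNE 0)).sub
    (tendsto_outer.comp tendsto_neg_nhdsGT_nhdsNE)

theorem tendsto_index_sub_index (h : D.RegularAt s₀) :
    Tendsto (fun e => D.index (D.normalPoint s₀ e) - D.index (D.normalPoint s₀ (-e)))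
      (nhdsWithin 0 (Ioi 0)) (nhds (2 * Real.pi * I)) := by
  obtain ⟨δ, hδ, hIoo, hnear⟩ := h.exists_Icc_subset_Ioo
  have left_mem : 0 < s₀ - δ := (hIoo (left_mem_Icc.2 (by linarith))).1
  have right_mem : s₀ + δ < D.l := (hIoo (right_mem_Icc.2 (by linarith))).2
  have left_jump := h.tendsto_integral_inv_sub_jump_zero hδ left_mem.le le_rfl (by linarith)
    fun s hs => le_abs.2 (.inr (by linarith [hs.2]))
  have right_jump := h.tendsto_integral_inv_sub_jump_zero hδ right_mem.le (by linarith) le_rfl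
    fun s hs => le_abs.2 (.inl (by linarith [hs.1]))
  have total := (left_jump.add (h.tendsto_integral_inv_sub_jump hδ hnear)).add right_jump
  rw [zero_add, add_zero] at total
  have index_eq {e : ℝ} (he : ∀ s, D.γ s ≠ D.normalPoint s₀ e) : D.index (D.normalPoint s₀ e) =
      (∫ s in 0..s₀ - δ, (D.γ s - D.normalPoint s₀ e)⁻¹ * deriv D.γ s) +
      (∫ s in (s₀ - δ)..(s₀ + δ), (D.γ s - D.normalPoint s₀ e)⁻¹ * deriv D.γ s) +
      ∫ s in (s₀ + δ)..D.l, (D.γ s - D.normalPoint s₀ e)⁻¹ * deriv D.γ s := by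
    have integrable (p q : ℝ) : IntervalIntegrable
        (fun s => (D.γ s - D.normalPoint s₀ e)⁻¹ * deriv D.γ s) volume p q :=
      intervalIntegrable_mul_deriv_of_lipschitzWith D.lipschitzWith
        (D.continuous_inv_γ_sub he).continuousOn
    rw [intervalIntegral.integral_add_adjacent_intervals (integrable _ _) (integrable _ _),
      intervalIntegral.integral_add_adjacent_intervals (integrable _ _) (integrable _ _)]
    rfl
  refine total.congr' ?_
  filter_upwards [h.eventually_γ_ne_normalPoint.filter_mono (nhdsGT_le_nhdsNE 0),
    tendsto_neg_nhdsGT_nhdsNE.eventually h.eventually_γ_ne_normalPoint] with e hpos hneg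
  rw [index_eq hpos, index_eq hneg]
  ring

end RegularAt

end JordanDomain

theorem exists_norm_le_mul_add_mul_pow {f : ℝ → ℂ} {s₀ η : ℝ} {K : Set ℝ} (hK : IsCompact K)
    (hf : ContinuousOn f K) (hf₀ : f s₀ = 0) (hf' : HasDerivAt f 0 s₀) (hη : 0 < η) :
    ∃ B ≥ 0, ∀ s ∈ K, ‖f s‖ ≤ η * |s - s₀| + B * |s - s₀| ^ 3 := by
  have isLittleO := hasDerivAt_iff_isLittleO.1 hf'
  obtain ⟨δ, hδ, near⟩ := Metric.eventually_nhds_iff.1 (isLittleO.def hη)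
  simp only [hf₀, sub_zero, smul_zero, Real.norm_eq_abs] at near
  obtain ⟨M, hM⟩ := hK.exists_bound_of_continuousOn hf
  refine ⟨|M| / δ ^ 3, by positivity, fun s hs => ?_⟩
  rcases lt_or_ge |s - s₀| δ with hsδ | hsδ
  · exact (near hsδ).trans (le_add_of_nonneg_right (by positivity))
  · calc ‖f s‖ ≤ |M| / δ ^ 3 * δ ^ 3 := by
          rw [div_mul_cancel₀ _ (by positivity)]
          exact (hM s hs).trans (le_abs_self M)
      _ ≤ |M| / δ ^ 3 * |s - s₀| ^ 3 := by gcongr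
      _ ≤ η * |s - s₀| + |M| / δ ^ 3 * |s - s₀| ^ 3 := le_add_of_nonneg_left (by positivity)

theorem continuous_poisson {e : ℝ} (he : 0 < e) (s₀ : ℝ) :
    Continuous fun s => e / ((s - s₀) ^ 2 + e ^ 2) :=
  continuous_const.div (by fun_prop) fun s => by positivity

theorem integral_poisson_le_pi {e : ℝ} (he : 0 < e) (s₀ a b : ℝ) :
    ∫ s in a..b, e / ((s - s₀) ^ 2 + e ^ 2) ≤ Real.pi := by
  have hasDerivAt_arctan (s : ℝ) :
      HasDerivAt (fun s => Real.arctan ((s - s₀) / e)) (e / ((s - s₀) ^ 2 + e ^ 2)) s := by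
    refine (((hasDerivAt_id s).sub_const s₀).div_const e).arctan.congr_deriv ?_
    simp only [id]
    field_simp
    ring
  rw [intervalIntegral.integral_eq_sub_of_hasDerivAt (fun s _ => hasDerivAt_arctan s)
    ((continuous_poisson he s₀).intervalIntegrable a b)]
  linarith [Real.arctan_lt_pi_div_two ((b - s₀) / e), Real.neg_pi_div_two_lt_arctan ((a - s₀) / e)]

namespace JordanDomain

variable {D : JordanDomain} {f : ℂ → ℂ} {κ : ℂ} {s₀ : ℝ}

namespace RegularAt

theorem norm_inv_sq_sub_inv_sq_le (h : D.RegularAt s₀) {k e s : ℝ} (hk : 0 < k) (he : 0 < e)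
    (hpos : k * (|s - s₀| + e) ≤ ‖D.γ s - D.normalPoint s₀ e‖)
    (hneg : k * (|s - s₀| + e) ≤ ‖D.γ s - D.normalPoint s₀ (-e)‖) :
    ‖((D.γ s - D.normalPoint s₀ e) ^ 2)⁻¹ - ((D.γ s - D.normalPoint s₀ (-e)) ^ 2)⁻¹‖ ≤
      4 * e * |s - s₀| / (k * (|s - s₀| + e)) ^ 4 := by
  have dist_pos : 0 < k * (|s - s₀| + e) := by positivity
  set A := D.γ s - D.normalPoint s₀ e
  set B := D.γ s - D.normalPoint s₀ (-e)
  have hA : A ≠ 0 := norm_pos_iff.1 (dist_pos.trans_le hpos)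
  have hB : B ≠ 0 := norm_pos_iff.1 (dist_pos.trans_le hneg)
  have sub_eq : (A ^ 2)⁻¹ - (B ^ 2)⁻¹ = (B - A) * (B + A) / (A ^ 2 * B ^ 2) := by
    field_simp
    ring
  have norm_sub : ‖B - A‖ = 2 * e := by
    have : B - A = 2 * (D.normalPoint s₀ e - D.γ s₀) := by simp [A, B, normalPoint]; ring
    rw [this, norm_mul, h.norm_normalPoint_sub, abs_of_pos he, RCLike.norm_ofNat]
  have norm_add : ‖B + A‖ ≤ 2 * |s - s₀| := by
    have : B + A = 2 * (D.γ s - D.γ s₀) := by simp [A, B, normalPoint]; ring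
    rw [this, norm_mul, RCLike.norm_ofNat]
    gcongr
    simpa [dist_eq_norm] using D.lipschitzWith.dist_le_mul s s₀
  rw [sub_eq, norm_div, norm_mul, norm_mul, norm_pow, norm_pow, norm_sub]
  calc 2 * e * ‖B + A‖ / (‖A‖ ^ 2 * ‖B‖ ^ 2)
      ≤ 2 * e * (2 * |s - s₀|) / ((k * (|s - s₀| + e)) ^ 2 * (k * (|s - s₀| + e)) ^ 2) := by gcongr
    _ = 4 * e * |s - s₀| / (k * (|s - s₀| + e)) ^ 4 := by ring

end RegularAt

theorem mul_kernel_bound_le {k e x η B : ℝ} (hk : 0 < k) (he : 0 < e) (hx : 0 ≤ x) (hη : 0 ≤ η)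
    (hB : 0 ≤ B) : (η * x + B * x ^ 3) * (4 * e * x / (k * (x + e)) ^ 4) ≤
      4 / k ^ 4 * (η * (e / (x ^ 2 + e ^ 2)) + B * e) := by
  have linear_part : x ^ 2 * e / (x + e) ^ 4 ≤ e / (x ^ 2 + e ^ 2) := by
    rw [div_le_div_iff₀ (by positivity) (by positivity)]
    have sq_le : x ^ 2 ≤ (x + e) ^ 2 := by gcongr; linarith
    have sum_sq_le : x ^ 2 + e ^ 2 ≤ (x + e) ^ 2 := by nlinarith
    calc x ^ 2 * e * (x ^ 2 + e ^ 2) ≤ (x + e) ^ 2 * e * (x + e) ^ 2 := by gcongr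
      _ = e * (x + e) ^ 4 := by ring
  have cubic_part : x ^ 4 / (x + e) ^ 4 ≤ 1 :=
    div_le_one_of_le₀ (by gcongr; linarith) (by positivity)
  calc (η * x + B * x ^ 3) * (4 * e * x / (k * (x + e)) ^ 4)
      = 4 / k ^ 4 * (η * (x ^ 2 * e / (x + e) ^ 4) + B * e * (x ^ 4 / (x + e) ^ 4)) := by
        field_simp
    _ ≤ 4 / k ^ 4 * (η * (e / (x ^ 2 + e ^ 2)) + B * e * 1) := by gcongr
    _ = 4 / k ^ 4 * (η * (e / (x ^ 2 + e ^ 2)) + B * e) := by rw [mul_one]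

namespace RegularAt

theorem norm_contourIntegral_kernel_sub_le (h : D.RegularAt s₀) {k e η B : ℝ} (hk : 0 < k)
    (he : 0 < e) (hη : 0 ≤ η) (hB : 0 ≤ B)
    (hdist : ∀ s ∈ Icc 0 D.l, k * (|s - s₀| + e) ≤ ‖D.γ s - D.normalPoint s₀ e‖ ∧
      k * (|s - s₀| + e) ≤ ‖D.γ s - D.normalPoint s₀ (-e)‖)
    (hf : ∀ s ∈ Icc 0 D.l, ‖f (D.γ s)‖ ≤ η * |s - s₀| + B * |s - s₀| ^ 3) :
    ‖D.contourIntegral fun w => f w *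
      (((w - D.normalPoint s₀ e) ^ 2)⁻¹ - ((w - D.normalPoint s₀ (-e)) ^ 2)⁻¹)‖ ≤
      4 / k ^ 4 * (η * Real.pi + B * e * D.l) := by
  have poisson_integrable (c : ℝ) : IntervalIntegrable
      (fun s => c * (e / ((s - s₀) ^ 2 + e ^ 2))) volume 0 D.l :=
    ((continuous_poisson he s₀).const_mul c).intervalIntegrable 0 D.l
  have majorant_integrable : IntervalIntegrable (fun s =>
      4 / k ^ 4 * (η * (e / ((s - s₀) ^ 2 + e ^ 2)) + B * e)) volume 0 D.l :=
    ((poisson_integrable η).add intervalIntegrable_const).const_mul _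
  refine (intervalIntegral.norm_integral_le_of_norm_le D.l_pos.le ?_ majorant_integrable).trans ?_
  · filter_upwards [D.ae_norm_deriv_eq_one] with s hs hsI
    have hsI := Ioc_subset_Icc_self hsI
    rw [norm_mul, hs, mul_one, norm_mul, ← sq_abs (s - s₀)]
    refine le_trans ?_ (mul_kernel_bound_le hk he (abs_nonneg (s - s₀)) hη hB)
    gcongr
    exacts [hf s hsI, h.norm_inv_sq_sub_inv_sq_le hk he (hdist s hsI).1 (hdist s hsI).2]
  · rw [intervalIntegral.integral_const_mul, intervalIntegral.integral_add (poisson_integrable η)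
      intervalIntegrable_const, intervalIntegral.integral_const_mul,
      intervalIntegral.integral_const, sub_zero, smul_eq_mul, mul_comm D.l]
    gcongr
    exact integral_poisson_le_pi he s₀ 0 D.l

theorem tendsto_contourIntegral_kernel_sub_zero (h : D.RegularAt s₀)
    (hf : Continuous fun s => f (D.γ s)) (hf₀ : f (D.γ s₀) = 0)
    (hf' : HasDerivAt (fun s => f (D.γ s)) 0 s₀) :
    Tendsto (fun e => D.contourIntegral fun w => f w *
      (((w - D.normalPoint s₀ e) ^ 2)⁻¹ - ((w - D.normalPoint s₀ (-e)) ^ 2)⁻¹))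
      (nhdsWithin 0 (Ioi 0)) (nhds 0) := by
  obtain ⟨k, hk, hdist⟩ := h.exists_eventually_mul_le_norm
  rw [Metric.tendsto_nhds]
  intro ε hε
  set η := ε * k ^ 4 / (8 * Real.pi)
  have hη : 0 < η := by positivity
  obtain ⟨B, hB, hbound⟩ :=
    exists_norm_le_mul_add_mul_pow (isCompact_Icc (a := 0) (b := D.l)) hf.continuousOn hf₀ hf' hη
  have limit_lt : 4 / k ^ 4 * (η * Real.pi + B * 0 * D.l) < ε := by
    have : 4 / k ^ 4 * (η * Real.pi + B * 0 * D.l) = ε / 2 := by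
      simp only [η]
      field_simp
      ring
    linarith
  have majorant_lt : ∀ᶠ e in nhdsWithin 0 (Ioi 0),
      4 / k ^ 4 * (η * Real.pi + B * e * D.l) < ε := by
    have : Continuous fun e => 4 / k ^ 4 * (η * Real.pi + B * e * D.l) := by fun_prop
    exact nhdsWithin_le_nhds (this.continuousAt.eventually_lt_const limit_lt)
  filter_upwards [hdist, majorant_lt, self_mem_nhdsWithin] with e hdist_e hlt he
  rw [dist_zero_right]
  exact (h.norm_contourIntegral_kernel_sub_le hk he hη.le hB hdist_e hbound).trans_lt hlt

end RegularAt

end JordanDomain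

namespace JordanDomain

variable {D : JordanDomain} {f : ℂ → ℂ} {κ z : ℂ} {s₀ : ℝ}

theorem contourIntegral_mul_inv_sub_sq_eq (hf : Continuous fun s => f (D.γ s))
    (hz : ∀ s, D.γ s ≠ z) (a κ w₀ : ℂ) : D.contourIntegral (fun w => f w * ((w - z) ^ 2)⁻¹) =
      D.contourIntegral (fun w => (f w - a - κ * (w - w₀)) * ((w - z) ^ 2)⁻¹) + κ * D.index z := by
  have split (s : ℝ) : f (D.γ s) * ((D.γ s - z) ^ 2)⁻¹ =
      (f (D.γ s) - a - κ * (D.γ s - w₀)) * ((D.γ s - z) ^ 2)⁻¹ +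
        (κ * (D.γ s - z)⁻¹ + (a + κ * (z - w₀)) * ((D.γ s - z) ^ 2)⁻¹) := by
    have := sub_ne_zero.2 (hz s)
    field_simp
    ring
  have continuous_simple : Continuous fun s => κ * (D.γ s - z)⁻¹ :=
    continuous_const.mul (D.continuous_inv_γ_sub hz)
  have continuous_double (c : ℂ) : Continuous fun s => c * ((D.γ s - z) ^ 2)⁻¹ :=
    continuous_const.mul (D.continuous_inv_γ_sub_sq hz)
  have continuous_remainder : Continuous fun s =>
      (f (D.γ s) - a - κ * (D.γ s - w₀)) * ((D.γ s - z) ^ 2)⁻¹ :=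
    ((hf.sub continuous_const).sub (continuous_const.mul (D.γ_cont.sub continuous_const))).mul
      (D.continuous_inv_γ_sub_sq hz)
  have integral_poles := D.contourIntegral_add (f := fun w => κ * (w - z)⁻¹)
    (g := fun w => (a + κ * (z - w₀)) * ((w - z) ^ 2)⁻¹) continuous_simple (continuous_double _)
  rw [contourIntegral_const_mul, contourIntegral_const_mul, D.contourIntegral_inv_sub_sq hz,
    mul_zero, add_zero] at integral_poles
  calc D.contourIntegral (fun w => f w * ((w - z) ^ 2)⁻¹)
      = D.contourIntegral (fun w => (f w - a - κ * (w - w₀)) * ((w - z) ^ 2)⁻¹ +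
          (κ * (w - z)⁻¹ + (a + κ * (z - w₀)) * ((w - z) ^ 2)⁻¹)) := by
        simp only [contourIntegral, split]
    _ = D.contourIntegral (fun w => (f w - a - κ * (w - w₀)) * ((w - z) ^ 2)⁻¹) +
          D.contourIntegral fun w => κ * (w - z)⁻¹ + (a + κ * (z - w₀)) * ((w - z) ^ 2)⁻¹ :=
        contourIntegral_add (f := fun w => (f w - a - κ * (w - w₀)) * ((w - z) ^ 2)⁻¹)
          continuous_remainder (continuous_simple.add (continuous_double _))
    _ = _ := by rw [integral_poles, index]

namespace RegularAt

theorem tendsto_contourIntegral_sub (h : D.RegularAt s₀) (hf : Continuous fun s => f (D.γ s))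
    (hf' : HasDerivAt (fun s => f (D.γ s)) (κ * deriv D.γ s₀) s₀) :
    Tendsto (fun e => D.contourIntegral (fun w => f w * ((w - D.normalPoint s₀ e) ^ 2)⁻¹) -
        D.contourIntegral fun w => f w * ((w - D.normalPoint s₀ (-e)) ^ 2)⁻¹)
      (nhdsWithin 0 (Ioi 0)) (nhds (κ * (2 * Real.pi * I))) := by
  set R : ℂ → ℂ := fun w => f w - f (D.γ s₀) - κ * (w - D.γ s₀)
  have continuous_R : Continuous fun s => R (D.γ s) :=
    (hf.sub continuous_const).sub (continuous_const.mul (D.γ_cont.sub continuous_const))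
  have hasDerivAt_R : HasDerivAt (fun s => R (D.γ s)) 0 s₀ :=
    ((hf'.sub_const _).sub ((h.differentiableAt.hasDerivAt.sub_const _).const_mul κ)).congr_deriv
      (sub_self _)
  have limit := (h.tendsto_contourIntegral_kernel_sub_zero continuous_R (by simp [R])
    hasDerivAt_R).add (h.tendsto_index_sub_index.const_mul κ)
  rw [zero_add] at limit
  refine limit.congr' ?_
  filter_upwards [h.eventually_γ_ne_normalPoint.filter_mono (nhdsGT_le_nhdsNE 0),
    tendsto_neg_nhdsGT_nhdsNE.eventually h.eventually_γ_ne_normalPoint] with e hpos hneg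
  have expand {z : ℂ} (hz : ∀ s, D.γ s ≠ z) : D.contourIntegral (fun w => f w * ((w - z) ^ 2)⁻¹) =
      D.contourIntegral (fun w => R w * ((w - z) ^ 2)⁻¹) + κ * D.index z :=
    contourIntegral_mul_inv_sub_sq_eq hf hz (f (D.γ s₀)) κ (D.γ s₀)
  rw [expand hpos, expand hneg]
  simp only [mul_sub]
  rw [contourIntegral_sub (continuous_R.mul (D.continuous_inv_γ_sub_sq hpos))
    (continuous_R.mul (D.continuous_inv_γ_sub_sq hneg))]
  ring

end RegularAt

open scoped Classical in
variable (D) in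
/-- Of the two points at distance `e > 0` from `γ s₀` on the normal line, the one in the domain.
For small `e` there is exactly one; the choice made otherwise is irrelevant. -/
noncomputable def innerNormalPoint (s₀ e : ℝ) : ℂ :=
  if D.normalPoint s₀ e ∈ D.G then D.normalPoint s₀ e else D.normalPoint s₀ (-e)

namespace RegularAt

theorem norm_innerNormalPoint_sub (h : D.RegularAt s₀) (e : ℝ) :
    ‖D.innerNormalPoint s₀ e - D.γ s₀‖ = |e| := by
  unfold innerNormalPoint
  split_ifs
  · exact h.norm_normalPoint_sub e
  · rw [h.norm_normalPoint_sub, abs_neg]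

theorem tendsto_innerNormalPoint (h : D.RegularAt s₀) :
    Tendsto (D.innerNormalPoint s₀) (nhds 0) (nhds (D.γ s₀)) := by
  rw [tendsto_iff_norm_sub_tendsto_zero]
  simp only [h.norm_innerNormalPoint_sub]
  exact continuous_abs.tendsto' 0 0 abs_zero

theorem exists_mul_le_infDist (h : D.RegularAt s₀) : ∃ k > 0, ∀ᶠ e in nhdsWithin 0 (Ioi 0),
    k * e ≤ infDist (D.innerNormalPoint s₀ e) (frontier D.G) := by
  obtain ⟨k, hk, hle⟩ := h.exists_eventually_mul_le_norm
  refine ⟨k, hk, hle.mono fun e he => ?_⟩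
  rw [← D.γ_boundary]
  refine (le_infDist ⟨_, mem_image_of_mem _ (left_mem_Ico.2 D.l_pos)⟩).2 ?_
  rintro - ⟨s, hs, rfl⟩
  have hs := he s (Ico_subset_Icc_self hs)
  have mul_le : k * e ≤ k * (|s - s₀| + e) := by
    gcongr
    exact le_add_of_nonneg_left (abs_nonneg _)
  rw [dist_comm, dist_eq_norm]
  unfold innerNormalPoint
  split_ifs
  exacts [mul_le.trans hs.1, mul_le.trans hs.2]

end RegularAt

end JordanDomain

namespace BoundaryArgument

variable {D : JordanDomain} {φ f : ℂ → ℂ} {θ : ℝ → ℝ} {κ : ℂ} {s₀ : ℝ} (hφ : RiemannMap D φ)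
  (hθ : BoundaryArgument D φ θ)
include hφ hθ

theorem eventually_mem_and_notMem_closure (h : D.RegularAt s₀) :
    ∀ᶠ e in nhdsWithin 0 (Ioi 0),
      D.normalPoint s₀ e ∈ D.G ∧ D.normalPoint s₀ (-e) ∉ closure D.G ∨
        D.normalPoint s₀ e ∉ closure D.G ∧ D.normalPoint s₀ (-e) ∈ D.G := by
  -- The index is constant on `G` and vanishes off its closure, but it jumps by `2πi`.
  filter_upwards [h.eventually_γ_ne_normalPoint.filter_mono (nhdsGT_le_nhdsNE 0),
    tendsto_neg_nhdsGT_nhdsNE.eventually h.eventually_γ_ne_normalPoint,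
    h.tendsto_index_sub_index.eventually_ne two_pi_I_ne_zero] with e hpos hneg hjump
  have notMem_closure {z : ℂ} (hz : z ∉ D.G) (γ_ne : ∀ s, D.γ s ≠ z) : z ∉ closure D.G :=
    fun hzc => (D.mem_or_exists_γ_eq_of_mem_closure hzc).elim hz fun ⟨s, hs⟩ => γ_ne s hs
  by_cases hposG : D.normalPoint s₀ e ∈ D.G <;> by_cases hnegG : D.normalPoint s₀ (-e) ∈ D.G
  · exact absurd (sub_eq_zero.2 (JordanDomain.index_eq_index hposG hnegG)) hjump
  · exact .inl ⟨hposG, notMem_closure hnegG hneg⟩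
  · exact .inr ⟨notMem_closure hposG hpos, hnegG⟩
  · rw [hθ.index_eq_zero hφ (notMem_closure hposG hpos),
      hθ.index_eq_zero hφ (notMem_closure hnegG hneg), sub_zero] at hjump
    exact absurd rfl hjump

theorem eventually_innerNormalPoint_mem (h : D.RegularAt s₀) :
    ∀ᶠ e in nhdsWithin 0 (Ioi 0), D.innerNormalPoint s₀ e ∈ D.G := by
  filter_upwards [hθ.eventually_mem_and_notMem_closure hφ h] with e he
  rw [JordanDomain.innerNormalPoint]
  split_ifs with hG
  · exact hG
  · exact (he.resolve_left fun h => hG h.1).2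

theorem tendsto_deriv_innerNormalPoint (h : D.RegularAt s₀) (hf : ContinuousOn f (closure D.G))
    (hfd : DifferentiableOn ℂ f D.G)
    (hf' : HasDerivAt (fun s => f (D.γ s)) (κ * deriv D.γ s₀) s₀) :
    Tendsto (fun e => deriv f (D.innerNormalPoint s₀ e)) (nhdsWithin 0 (Ioi 0)) (nhds κ) := by
  have limit := (h.tendsto_contourIntegral_sub (hf.comp_continuous D.γ_cont D.γ_mem_closure)
    hf').div h.tendsto_index_sub_index two_pi_I_ne_zero
  rw [mul_div_cancel_right₀ _ two_pi_I_ne_zero] at limit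
  refine limit.congr' ?_
  filter_upwards [hθ.eventually_mem_and_notMem_closure hφ h,
    h.tendsto_index_sub_index.eventually_ne two_pi_I_ne_zero] with e he hjump
  rw [Pi.div_apply]
  rcases he with ⟨hposG, hnegC⟩ | ⟨hposC, hnegG⟩
  · rw [hθ.index_eq_zero hφ hnegC, sub_zero] at hjump ⊢
    rw [hθ.contourIntegral_mul_inv_sub_sq hφ hf hfd hposG,
      hθ.contourIntegral_mul_inv_sub_sq_eq_zero hφ hf hfd hnegC, sub_zero,
      mul_div_cancel_right₀ _ hjump, JordanDomain.innerNormalPoint, if_pos hposG]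
  · rw [hθ.index_eq_zero hφ hposC, zero_sub] at hjump ⊢
    rw [hθ.contourIntegral_mul_inv_sub_sq hφ hf hfd hnegG,
      hθ.contourIntegral_mul_inv_sub_sq_eq_zero hφ hf hfd hposC, zero_sub, ← mul_neg,
      mul_div_cancel_right₀ _ hjump, JordanDomain.innerNormalPoint,
      if_neg fun hposG => hposC (subset_closure hposG)]

theorem tendsto_innerNormalPoint_of_NTLim (h : D.RegularAt s₀) {g : ℂ → ℂ} {v : ℂ}
    (hg : NTLim D.G g (D.γ s₀) v) :
    Tendsto (fun e => g (D.innerNormalPoint s₀ e)) (nhdsWithin 0 (Ioi 0)) (nhds v) := by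
  obtain ⟨k, hk, hle⟩ := h.exists_mul_le_infDist
  refine (hg (k⁻¹ + 1) (lt_add_of_pos_left 1 (inv_pos.2 hk))).comp
    (tendsto_nhdsWithin_iff.2 ⟨h.tendsto_innerNormalPoint.mono_left nhdsWithin_le_nhds, ?_⟩)
  filter_upwards [hle, hθ.eventually_innerNormalPoint_mem hφ h, self_mem_nhdsWithin]
    with e he hmem hpos
  refine ⟨hmem, ?_⟩
  calc ‖D.innerNormalPoint s₀ e - D.γ s₀‖ = k⁻¹ * (k * e) := by
        rw [h.norm_innerNormalPoint_sub, abs_of_pos hpos, inv_mul_cancel_left₀ hk.ne']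
    _ ≤ k⁻¹ * infDist (D.innerNormalPoint s₀ e) (frontier D.G) := by gcongr
    _ ≤ (k⁻¹ + 1) * infDist (D.innerNormalPoint s₀ e) (frontier D.G) := by
        gcongr
        · exact infDist_nonneg
        · exact le_add_of_nonneg_right zero_le_one

end BoundaryArgument

/-! ### The theorem of F. and M. Riesz -/

namespace JordanDomain

variable {D : JordanDomain} {f : ℂ → ℂ}

theorem norm_contourIntegral_le (hf : Continuous fun s => f (D.γ s)) :
    ‖D.contourIntegral f‖ ≤ ∫ s in 0..D.l, ‖f (D.γ s)‖ := by
  refine intervalIntegral.norm_integral_le_of_norm_le D.l_pos.le (ae_of_all _ fun s _ => ?_)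
    (hf.norm.intervalIntegrable _ _)
  rw [norm_mul]
  exact mul_le_of_le_one_right (norm_nonneg _) (norm_deriv_le_of_lipschitz D.lipschitzWith)

theorem exists_regularAt : ∃ s, D.RegularAt s := by
  have pos : (volume.restrict (Ioo 0 D.l)) ≠ 0 := by simp [Measure.restrict_eq_zero, D.l_pos]
  have : (ae (volume.restrict (Ioo 0 D.l))).NeBot := ae_neBot.2 pos
  exact ((ae_restrict_iff' measurableSet_Ioo).2 D.ae_regularAt).exists

end JordanDomain

theorem circleAverage_re_polynomial_eval (P : Polynomial ℂ) :
    Real.circleAverage (fun z => (P.eval z).re) 0 1 = (P.eval 0).re := by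
  have mean := (P.differentiable.diffContOnCl (s := ball 0 |1|)).circleAverage
  rw [← mean]
  exact ContinuousLinearMap.circleAverage_comp_comm reCLM
    P.continuous.continuousOn.circleIntegrable'

theorem circleAverage_le_re_polynomial_eval_add {u : ℂ → ℝ} (hu : Continuous u) {ε : ℝ}
    {P : Polynomial ℂ} (hP : ∀ z ∈ sphere (0 : ℂ) 1, |u z - (P.eval z).re| ≤ ε) :
    Real.circleAverage u 0 1 ≤ (P.eval 0).re + ε := by
  have re_continuous : Continuous fun z => (P.eval z).re := continuous_re.comp P.continuous
  rw [← circleAverage_re_polynomial_eval, ← Real.circleAverage_const ε 0 1,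
    ← Real.circleAverage_fun_add re_continuous.continuousOn.circleIntegrable'
      continuous_const.continuousOn.circleIntegrable']
  refine Real.circleAverage_mono hu.continuousOn.circleIntegrable'
    (re_continuous.add continuous_const).continuousOn.circleIntegrable' fun z hz => ?_
  rw [abs_one] at hz
  linarith [(abs_le.1 (hP z hz)).2]

theorem exists_polynomial_eq_of_mem_span_fourier {T : C(AddCircle (2 * Real.pi), ℂ)}
    (hT : T ∈ Submodule.span ℂ (range (@fourier (2 * Real.pi)))) : ∃ P Q : Polynomial ℂ,
    ∀ x, T x = P.eval (AddCircle.toCircle x : ℂ) +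
      (starRingEnd ℂ) (Q.eval (AddCircle.toCircle x : ℂ)) := by
  induction hT using Submodule.span_induction with
  | mem _ h =>
    obtain ⟨n, rfl⟩ := h
    rcases Int.eq_nat_or_neg n with ⟨m, rfl | rfl⟩
    · exact ⟨Polynomial.X ^ m, 0, fun x => by simp [fourier_apply, AddCircle.toCircle_nsmul]⟩
    · refine ⟨0, Polynomial.X ^ m, fun x => ?_⟩
      rw [fourier_neg]
      simp [fourier_apply, AddCircle.toCircle_nsmul]
  | zero => exact ⟨0, 0, fun x => by simp⟩
  | add T₁ T₂ _ _ h₁ h₂ =>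
    obtain ⟨P₁, Q₁, h₁⟩ := h₁
    obtain ⟨P₂, Q₂, h₂⟩ := h₂
    refine ⟨P₁ + P₂, Q₁ + Q₂, fun x => ?_⟩
    simp only [ContinuousMap.add_apply, h₁, h₂, Polynomial.eval_add, map_add]
    ring
  | smul a T _ h =>
    obtain ⟨P, Q, h⟩ := h
    refine ⟨Polynomial.C a * P, Polynomial.C ((starRingEnd ℂ) a) * Q, fun x => ?_⟩
    simp only [ContinuousMap.smul_apply, h, smul_eq_mul, Polynomial.eval_mul, Polynomial.eval_C,
      map_mul, conj_conj]
    ring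

theorem exists_polynomial_abs_sub_re_le {u : ℂ → ℝ} (hu : Continuous u) {ε : ℝ} (hε : 0 < ε) :
    ∃ P : Polynomial ℂ, ∀ z ∈ sphere (0 : ℂ) 1, |u z - (P.eval z).re| ≤ ε := by
  have : Fact (0 < 2 * Real.pi) := ⟨Real.two_pi_pos⟩
  let F : C(AddCircle (2 * Real.pi), ℂ) := ⟨fun x => (u (AddCircle.toCircle x : ℂ) : ℂ),
    continuous_ofReal.comp (hu.comp (continuous_subtype_val.comp AddCircle.continuous_toCircle))⟩
  have hF : F ∈ (Submodule.span ℂ (range (@fourier (2 * Real.pi)))).topologicalClosure := by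
    rw [span_fourier_closure_eq_top]
    trivial
  obtain ⟨T, hT, hFT⟩ := Metric.mem_closure_iff.1 hF ε hε
  obtain ⟨P, Q, hPQ⟩ := exists_polynomial_eq_of_mem_span_fourier hT
  refine ⟨P + Q, fun z hz => ?_⟩
  obtain ⟨x, hx⟩ := (AddCircle.homeomorphCircle Real.two_pi_pos.ne').surjective
    ⟨z, mem_sphere_zero_iff_norm.2 (mem_sphere_zero_iff_norm.1 hz)⟩
  have x_eq : (AddCircle.toCircle x : ℂ) = z := by
    rw [← AddCircle.homeomorphCircle_apply Real.two_pi_pos.ne', hx]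
  have near : ‖F x - T x‖ ≤ ε := by
    rw [← dist_eq_norm]
    exact (ContinuousMap.dist_apply_le_dist x).trans hFT.le
  have near_re := (abs_re_le_norm _).trans near
  simpa [F, hPQ, x_eq] using near_re

namespace BoundaryArgument

variable {D : JordanDomain} {φ : ℂ → ℂ} {θ : ℝ → ℝ} (hφ : RiemannMap D φ)
  (hθ : BoundaryArgument D φ θ)
include hφ hθ

theorem index_ne_zero {z : ℂ} (hz : z ∈ D.G) : D.index z ≠ 0 := by
  obtain ⟨s₀, h⟩ := D.exists_regularAt
  obtain ⟨e, hjump, ⟨hposG, hnegC⟩ | ⟨hposC, hnegG⟩⟩ :=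
    ((h.tendsto_index_sub_index.eventually_ne two_pi_I_ne_zero).and
      (hθ.eventually_mem_and_notMem_closure hφ h)).exists
  · rwa [hθ.index_eq_zero hφ hnegC, sub_zero, JordanDomain.index_eq_index hposG hz] at hjump
  · rwa [hθ.index_eq_zero hφ hposC, zero_sub, neg_ne_zero,
      JordanDomain.index_eq_index hnegG hz] at hjump

theorem exists_norm_le_mul_integral_norm {z : ℂ} (hz : z ∈ D.G) : ∃ C > 0, ∀ f : ℂ → ℂ,
    ContinuousOn f (closure D.G) → DifferentiableOn ℂ f D.G →
      ‖f z‖ ≤ C * ∫ s in 0..D.l, ‖f (D.γ s)‖ := by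
  obtain ⟨r, hr, hball⟩ := Metric.isOpen_iff.1 D.isOpen z hz
  have index_pos : 0 < ‖D.index z‖ := norm_pos_iff.2 (hθ.index_ne_zero hφ hz)
  refine ⟨r⁻¹ / ‖D.index z‖, by positivity, fun f hf hfd => ?_⟩
  have hfγ : Continuous fun s => f (D.γ s) := hf.comp_continuous D.γ_cont D.γ_mem_closure
  have hkernel : Continuous fun s => f (D.γ s) * (D.γ s - z)⁻¹ :=
    hfγ.mul (D.continuous_inv_γ_sub fun s => D.γ_ne_of_mem hz s)
  rw [div_mul_eq_mul_div, le_div_iff₀ index_pos]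
  calc ‖f z‖ * ‖D.index z‖ = ‖D.contourIntegral fun w => f w * (w - z)⁻¹‖ := by
        rw [hθ.contourIntegral_mul_inv_sub hφ hf hfd hz, norm_mul]
    _ ≤ ∫ s in 0..D.l, ‖f (D.γ s) * (D.γ s - z)⁻¹‖ := JordanDomain.norm_contourIntegral_le hkernel
    _ ≤ ∫ s in 0..D.l, r⁻¹ * ‖f (D.γ s)‖ := by
        refine intervalIntegral.integral_mono_on D.l_pos.le (hkernel.norm.intervalIntegrable _ _)
          ((continuous_const.mul hfγ.norm).intervalIntegrable _ _) fun s _ => ?_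
        rw [norm_mul, norm_inv, mul_comm]
        gcongr
        exact D.le_norm_γ_sub hball s
    _ = r⁻¹ * ∫ s in 0..D.l, ‖f (D.γ s)‖ := intervalIntegral.integral_const_mul _ _

theorem exists_exp_circleAverage_le : ∃ C > 0, ∀ u : ℂ → ℝ, Continuous u →
    Real.exp (Real.circleAverage u 0 1) ≤ C * ∫ s in 0..D.l, Real.exp (u (φ (D.γ s))) := by
  have zero_mem : (0 : ℂ) ∈ ball 0 1 := mem_ball_self one_pos
  obtain ⟨C, hC, mean_le⟩ := hθ.exists_norm_le_mul_integral_norm hφ (hφ.inverse_mem zero_mem)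
  refine ⟨C, hC, fun u hu => ?_⟩
  set J := ∫ s in 0..D.l, Real.exp (u (φ (D.γ s))) with hJ
  have approx (ε : ℝ) (hε : 0 < ε) :
      Real.exp (Real.circleAverage u 0 1) ≤ Real.exp (2 * ε) * (C * J) := by
    obtain ⟨P, hP⟩ := exists_polynomial_abs_sub_re_le hu hε
    have average_le := circleAverage_le_re_polynomial_eval_add hu hP
    have exp_le : Real.exp (P.eval 0).re ≤
        C * ∫ s in 0..D.l, Real.exp (P.eval (φ (D.γ s))).re := by
      have h := mean_le (fun z => exp (P.eval (φ z)))
        (continuous_exp.comp_continuousOn (P.continuous.comp_continuousOn hφ.continuousOn))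
        (differentiable_exp.comp_differentiableOn
          (P.differentiable.comp_differentiableOn hφ.differentiableOn))
      simpa only [norm_exp, hφ.map_inverse zero_mem] using h
    have integral_le : ∫ s in 0..D.l, Real.exp (P.eval (φ (D.γ s))).re ≤ Real.exp ε * J := by
      rw [hJ, ← intervalIntegral.integral_const_mul]
      have hγ := hφ.continuous_comp_γ
      refine intervalIntegral.integral_mono_on D.l_pos.le
        ((Real.continuous_exp.comp
          (continuous_re.comp (P.continuous.comp hγ))).intervalIntegrable _ _)
        ((continuous_const.mul (Real.continuous_exp.comp (hu.comp hγ))).intervalIntegrable _ _)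
        fun s _ => ?_
      rw [← Real.exp_add]
      have := (abs_le.1 (hP _ (mem_sphere_zero_iff_norm.2 (hφ.norm_map_γ s)))).1
      exact Real.exp_le_exp.2 (by linarith)
    calc Real.exp (Real.circleAverage u 0 1) ≤ Real.exp ((P.eval 0).re + ε) :=
          Real.exp_le_exp.2 average_le
      _ = Real.exp ε * Real.exp (P.eval 0).re := by rw [Real.exp_add, mul_comm]
      _ ≤ Real.exp ε * (C * (Real.exp ε * J)) := by
          gcongr
          exact exp_le.trans (by gcongr)
      _ = Real.exp (2 * ε) * (C * J) := by rw [two_mul, Real.exp_add]; ring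
  have limit : Tendsto (fun ε => Real.exp (2 * ε) * (C * J)) (nhdsWithin 0 (Ioi 0))
      (nhds (C * J)) :=
    (Continuous.tendsto' (by fun_prop) _ _ (by simp)).mono_left nhdsWithin_le_nhds
  exact ge_of_tendsto limit (eventually_nhdsWithin_of_forall approx)

end BoundaryArgument

theorem dist_eq_volume_real_Ioo_of_monotone {f : ℝ → ℝ} (hf : Monotone f) (x y : ℝ) :
    dist (f x) (f y) = volume.real (Ioo (f (min x y)) (f (max x y))) := by
  rw [Real.volume_real_Ioo_of_le (hf min_le_max), hf.map_max, hf.map_min, max_sub_min_eq_abs,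
    dist_comm, Real.dist_eq]

theorem absolutelyContinuousOnInterval_of_volume_image_lt {f : ℝ → ℝ} {a b : ℝ} (hab : a ≤ b)
    (hf : Monotone f)
    (hf_image : ∀ x ∈ Icc a b, ∀ y ∈ Icc a b, Ioo (f x) (f y) ⊆ f '' Ioo x y)
    (h : ∀ ε > 0, ∃ δ > 0, ∀ U ⊆ Ioo a b, IsOpen U → volume.real U < δ →
      volume.real (f '' U) < ε) : AbsolutelyContinuousOnInterval f a b := by
  rw [absolutelyContinuousOnInterval_iff]
  intro ε hε
  obtain ⟨δ, hδ, image_lt⟩ := h ε hε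
  refine ⟨δ, hδ, fun ⟨n, J⟩ ⟨J_mem, J_disjoint⟩ sum_lt => ?_⟩
  rw [uIcc_of_le hab] at J_mem
  set s : ℕ → ℝ := fun i => min (J i).1 (J i).2
  set t : ℕ → ℝ := fun i => max (J i).1 (J i).2
  have s_mem : ∀ i ∈ Finset.range n, s i ∈ Icc a b := fun i hi =>
    ⟨le_min (J_mem i hi).1.1 (J_mem i hi).2.1, (min_le_left _ _).trans (J_mem i hi).1.2⟩
  have t_mem : ∀ i ∈ Finset.range n, t i ∈ Icc a b := fun i hi =>
    ⟨(J_mem i hi).1.1.trans (le_max_left _ _), max_le (J_mem i hi).1.2 (J_mem i hi).2.2⟩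
  let U := ⋃ i ∈ Finset.range n, Ioo (s i) (t i)
  have U_subset : U ⊆ Ioo a b :=
    iUnion₂_subset fun i hi => Ioo_subset_Ioo (s_mem i hi).1 (t_mem i hi).2
  have volume_U_lt : volume.real U < δ := by
    refine (measureReal_biUnion_finset_le _ _).trans_lt (lt_of_eq_of_lt ?_ sum_lt)
    exact Finset.sum_congr rfl fun i _ => (dist_eq_volume_real_Ioo_of_monotone monotone_id _ _).symm
  have images_disjoint :
      (Finset.range n : Set ℕ).PairwiseDisjoint fun i => Ioo (f (s i)) (f (t i)) := by
    intro i hi j hj hij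
    refine Ioo_disjoint_Ioo.2 ?_
    rw [← hf.map_min, ← hf.map_max]
    exact hf (Ioc_disjoint_Ioc.1 (J_disjoint hi hj hij))
  have images_subset : ⋃ i ∈ Finset.range n, Ioo (f (s i)) (f (t i)) ⊆ f '' U :=
    iUnion₂_subset fun i hi => (hf_image _ (s_mem i hi) _ (t_mem i hi)).trans
      (image_mono (subset_biUnion_of_mem (u := fun i => Ioo (s i) (t i)) hi))
  have image_bounded : f '' U ⊆ Icc (f a) (f b) := image_subset_iff.2 fun x hx =>
    ⟨hf (U_subset hx).1.le, hf (U_subset hx).2.le⟩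
  calc ∑ i ∈ Finset.range n, dist (f (J i).1) (f (J i).2)
      = volume.real (⋃ i ∈ Finset.range n, Ioo (f (s i)) (f (t i))) := by
        rw [measureReal_biUnion_finset images_disjoint (fun _ _ => measurableSet_Ioo)
          fun _ _ => measure_Ioo_lt_top.ne]
        exact Finset.sum_congr rfl fun i _ => dist_eq_volume_real_Ioo_of_monotone hf _ _
    _ ≤ volume.real (f '' U) := measureReal_mono images_subset
        ((measure_mono image_bounded).trans_lt measure_Icc_lt_top).ne
    _ < ε := image_lt U U_subset (isOpen_biUnion fun i _ => isOpen_Ioo) volume_U_lt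

theorem circleAverage_indicator_const {F : Set ℂ} (hF : MeasurableSet F) {c : ℂ} (hc : ‖c‖ = 1)
    (N : ℝ) : Real.circleAverage (F.indicator fun _ => N) 0 1 =
      N * (volume.real (Ioc 0 (2 * Real.pi) ∩ {t : ℝ | c * exp (t * I) ∈ F}) / (2 * Real.pi)) := by
  have circleMap_eq (t : ℝ) : circleMap 0 1 (t + arg c) = c * exp (t * I) := by
    conv_rhs => rw [← norm_mul_exp_arg_mul_I c, hc]
    rw [circleMap, zero_add, ofReal_add, add_mul, exp_add]
    ring
  have preimage_measurable : MeasurableSet {t : ℝ | c * exp (t * I) ∈ F} :=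
    hF.preimage (by fun_prop)
  have indicator_eq (t : ℝ) : F.indicator (fun _ => N) (circleMap 0 1 (t + arg c)) =
      {t : ℝ | c * exp (t * I) ∈ F}.indicator (fun _ => N) t := by
    rw [circleMap_eq]
    rfl
  rw [Real.circleAverage_eq_integral_add (arg c),
    intervalIntegral.integral_of_le Real.two_pi_pos.le]
  simp only [indicator_eq]
  rw [setIntegral_indicator preimage_measurable, setIntegral_const, smul_eq_mul, smul_eq_mul]
  ring

theorem JordanDomain.integral_exp_indicator_le {D : JordanDomain} {φ : ℂ → ℂ} {U : Set ℝ}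
    (hU : U ⊆ Ioo 0 D.l) (hUm : MeasurableSet U) {N : ℝ} (hN : 0 ≤ N) : ∫ s in 0..D.l, Real.exp
        (((fun s => φ (D.γ s)) '' (Icc 0 D.l \ U)).indicator (fun _ => -N) (φ (D.γ s))) ≤
      Real.exp (-N) * D.l + volume.real U := by
  set F := (fun s => φ (D.γ s)) '' (Icc 0 D.l \ U)
  have exp_indicator_le : ∀ s ∈ Ioc 0 D.l, Real.exp (F.indicator (fun _ => -N) (φ (D.γ s))) ≤
      Real.exp (-N) + U.indicator 1 s := fun s hs => by
    by_cases hsU : s ∈ U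
    · have nonpos : F.indicator (fun _ => -N) (φ (D.γ s)) ≤ 0 :=
        indicator_apply_nonpos fun _ => neg_nonpos.2 hN
      rw [indicator_of_mem hsU, Pi.one_apply]
      exact (Real.exp_le_one_iff.2 nonpos).trans (le_add_of_nonneg_left (Real.exp_pos _).le)
    · have mem : φ (D.γ s) ∈ F := mem_image_of_mem _ ⟨Ioc_subset_Icc_self hs, hsU⟩
      rw [indicator_of_notMem hsU, add_zero, indicator_of_mem mem]
  have indicator_integrable : IntegrableOn (U.indicator (1 : ℝ → ℝ)) (Ioc 0 D.l) :=
    (integrable_const (1 : ℝ)).indicator hUm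
  rw [intervalIntegral.integral_of_le D.l_pos.le]
  calc ∫ s in Ioc 0 D.l, Real.exp (F.indicator (fun _ => -N) (φ (D.γ s)))
      ≤ ∫ s in Ioc 0 D.l, (Real.exp (-N) + U.indicator 1 s) :=
        integral_mono_of_nonneg (ae_of_all _ fun s => (Real.exp_pos _).le)
          ((integrable_const _).add indicator_integrable)
          ((ae_restrict_iff' measurableSet_Ioc).2 (ae_of_all _ exp_indicator_le))
    _ = Real.exp (-N) * D.l + volume.real U := by
        rw [integral_add (integrable_const _) indicator_integrable, setIntegral_const,
          setIntegral_indicator hUm, inter_eq_right.2 (hU.trans Ioo_subset_Ioc_self)]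
        simp [D.l_pos.le, mul_comm]

namespace BoundaryArgument

variable {D : JordanDomain} {φ : ℂ → ℂ} {θ : ℝ → ℝ} (hφ : RiemannMap D φ)
  (hθ : BoundaryArgument D φ θ)
include hφ hθ

theorem exists_exp_circleAverage_indicator_le : ∃ C > 0, ∀ F : Set ℂ, IsClosed F → ∀ N : ℝ,
    Real.exp (Real.circleAverage (F.indicator fun _ => N) 0 1) ≤
      C * ∫ s in 0..D.l, Real.exp (F.indicator (fun _ => N) (φ (D.γ s))) := by
  obtain ⟨C, hC, exp_le⟩ := hθ.exists_exp_circleAverage_le hφ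
  refine ⟨C, hC, fun F hF N => ?_⟩
  let u (n : ℕ) (z : ℂ) : ℝ := N * hF.apprSeq n z
  have u_continuous (n : ℕ) : Continuous (u n) := by fun_prop
  have u_le (n : ℕ) (z : ℂ) : |u n z| ≤ |N| := by
    rw [abs_mul, abs_of_nonneg (hF.apprSeq n z).coe_nonneg]
    exact mul_le_of_le_one_right (abs_nonneg N) (HasOuterApproxClosed.apprSeq_apply_le_one hF n z)
  have u_tendsto (z : ℂ) : Tendsto (u · z) atTop (nhds (F.indicator (fun _ => N) z)) := by
    have h := (NNReal.tendsto_coe.2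
      (tendsto_pi_nhds.1 (HasOuterApproxClosed.tendsto_apprSeq hF) z)).const_mul N
    convert h using 2
    by_cases hz : z ∈ F <;> simp [hz]
  have average_tendsto : Tendsto (fun n => Real.circleAverage (u n) 0 1) atTop
      (nhds (Real.circleAverage (F.indicator fun _ => N) 0 1)) := by
    refine Tendsto.const_smul (intervalIntegral.tendsto_integral_filter_of_dominated_convergence
      (fun _ => |N|) (.of_forall fun n => ?_) (.of_forall fun n => ae_of_all _ fun t _ => ?_)
      intervalIntegrable_const (ae_of_all _ fun t _ => u_tendsto _)) _
    · exact ((u_continuous n).comp (continuous_circleMap 0 1)).aestronglyMeasurable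
    · exact u_le n _
  have integral_tendsto : Tendsto (fun n => ∫ s in 0..D.l, Real.exp (u n (φ (D.γ s)))) atTop
      (nhds (∫ s in 0..D.l, Real.exp (F.indicator (fun _ => N) (φ (D.γ s))))) := by
    refine intervalIntegral.tendsto_integral_filter_of_dominated_convergence
      (fun _ => Real.exp |N|) (.of_forall fun n => ?_)
      (.of_forall fun n => ae_of_all _ fun s _ => ?_) intervalIntegrable_const
      (ae_of_all _ fun s _ => (Real.continuous_exp.tendsto _).comp (u_tendsto _))
    · exact (Real.continuous_exp.comp
        ((u_continuous n).comp hφ.continuous_comp_γ)).aestronglyMeasurable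
    · rw [Real.norm_of_nonneg (Real.exp_pos _).le]
      exact Real.exp_le_exp.2 ((le_abs_self _).trans (u_le n _))
  exact le_of_tendsto_of_tendsto' ((Real.continuous_exp.tendsto _).comp average_tendsto)
    (integral_tendsto.const_mul C) fun n => exp_le (u n) (u_continuous n)

theorem volume_real_image_le {U : Set ℝ} (hU : U ⊆ Ioo 0 D.l) {F : Set ℂ} (hF : MeasurableSet F)
    (hUF : F ⊆ (fun s => φ (D.γ s)) '' (Icc 0 D.l \ U)) : volume.real (θ '' U) ≤ 2 * Real.pi -
      volume.real (Ioc 0 (2 * Real.pi) ∩ {t : ℝ | φ (D.γ 0) * exp (t * I) ∈ F}) := by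
  set S := {t : ℝ | φ (D.γ 0) * exp (t * I) ∈ F}
  have S_measurable : MeasurableSet S := hF.preimage (by fun_prop)
  have image_subset : θ '' U ⊆ Ioc 0 (2 * Real.pi) \ S := by
    rintro - ⟨s, hs, rfl⟩
    refine ⟨Ioo_subset_Ioc_self (hθ.mapsTo (hU hs)), fun hmem => ?_⟩
    obtain ⟨x, hx, hxs⟩ := hUF hmem
    have s_mem := hU hs
    rw [← hθ.map_γ s (Ioo_subset_Icc_self s_mem)] at hxs
    obtain ⟨hx_mem, hθx⟩ := (hθ.mem_fibre_iff hφ s_mem x).1 ⟨hx.1, hxs⟩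
    exact hx.2 (hθ.injOn hφ hx_mem s_mem hθx ▸ hs)
  have diff_eq := measureReal_inter_add_sdiff (μ := volume) (s := Ioc 0 (2 * Real.pi)) S_measurable
    measure_Ioc_lt_top.ne
  rw [Real.volume_real_Ioc_of_le Real.two_pi_pos.le, sub_zero] at diff_eq
  linarith [measureReal_mono (μ := volume) image_subset
    ((measure_mono sdiff_subset).trans_lt measure_Ioc_lt_top).ne]

theorem exists_exp_mul_volume_image_le : ∃ C > 0, ∀ U ⊆ Ioo 0 D.l, IsOpen U → ∀ N, 0 ≤ N →
    Real.exp (N * (volume.real (θ '' U) / (2 * Real.pi))) ≤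
      C * (D.l + Real.exp N * volume.real U) := by
  obtain ⟨C, hC, exp_le⟩ := hθ.exists_exp_circleAverage_indicator_le hφ
  refine ⟨C, hC, fun U hU hUo N hN => ?_⟩
  set F := (fun s => φ (D.γ s)) '' (Icc 0 D.l \ U)
  have F_closed : IsClosed F := ((isCompact_Icc.diff hUo).image hφ.continuous_comp_γ).isClosed
  have average_ge : N * (volume.real (θ '' U) / (2 * Real.pi)) - N ≤
      Real.circleAverage (F.indicator fun _ => -N) 0 1 := by
    rw [circleAverage_indicator_const F_closed.measurableSet (hφ.norm_map_γ 0)]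
    have h := hθ.volume_real_image_le hφ hU F_closed.measurableSet subset_rfl
    field_simp
    nlinarith
  have integral_le := JordanDomain.integral_exp_indicator_le (φ := φ) hU hUo.measurableSet hN
  calc Real.exp (N * (volume.real (θ '' U) / (2 * Real.pi)))
      = Real.exp N * Real.exp (N * (volume.real (θ '' U) / (2 * Real.pi)) - N) := by
        rw [← Real.exp_add, add_sub_cancel]
    _ ≤ Real.exp N * (C * (Real.exp (-N) * D.l + volume.real U)) := by
        gcongr
        exact ((Real.exp_le_exp.2 average_ge).trans (exp_le F F_closed (-N))).trans (by gcongr)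
    _ = C * (D.l + Real.exp N * volume.real U) := by
        rw [Real.exp_neg]
        field_simp

theorem absolutelyContinuousOnInterval : AbsolutelyContinuousOnInterval θ 0 D.l := by
  obtain ⟨C, hC, exp_le⟩ := hθ.exists_exp_mul_volume_image_le hφ
  refine absolutelyContinuousOnInterval_of_volume_image_lt D.l_pos.le hθ.monotone
    (fun x hx y hy t ht => ?_) fun ε hε => ?_
  · have t_mem : t ∈ Ioo 0 (2 * Real.pi) :=
      ⟨(hθ.map_zero ▸ hθ.monotone hx.1).trans_lt ht.1,
        ht.2.trans_le (hθ.map_length ▸ hθ.monotone hy.2)⟩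
    obtain ⟨s, -, rfl⟩ := hθ.exists_apply_eq hφ t_mem
    exact ⟨s, ⟨hθ.monotone.reflect_lt ht.1, hθ.monotone.reflect_lt ht.2⟩, rfl⟩
  have exp_tendsto : Tendsto (fun N => Real.exp (N * (ε / (2 * Real.pi)))) atTop atTop :=
    Real.tendsto_exp_atTop.comp (tendsto_id.atTop_mul_const (by positivity))
  obtain ⟨N, hN, lt_exp⟩ :=
    ((eventually_ge_atTop 0).and (exp_tendsto.eventually_gt_atTop (C * (D.l + 1)))).exists
  refine ⟨Real.exp (-N), Real.exp_pos _, fun U hU hUo volume_lt => ?_⟩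
  by_contra! image_ge
  have exp_mul_le : Real.exp N * volume.real U ≤ 1 := by
    rw [Real.exp_neg] at volume_lt
    exact (le_inv_mul_iff₀ (Real.exp_pos N)).1 (by simpa using volume_lt.le)
  refine lt_irrefl (C * (D.l + 1)) ?_
  calc C * (D.l + 1) < Real.exp (N * (ε / (2 * Real.pi))) := lt_exp
    _ ≤ Real.exp (N * (volume.real (θ '' U) / (2 * Real.pi))) := by gcongr
    _ ≤ C * (D.l + Real.exp N * volume.real U) := exp_le U hU hUo N hN
    _ ≤ C * (D.l + 1) := by gcongr

end BoundaryArgument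

/-! ### The boundary values of the square root of the derivative -/

/-- `V` restricts to the nontangential boundary values of `g`, at almost every point of the boundary
with respect to arclength. -/
def JordanDomain.IsNontangentialTrace (D : JordanDomain) (g V : ℂ → ℂ) : Prop :=
  ∀ᵐ s, NTLim D.G g (D.γ s) (V (D.γ s))

namespace BoundaryArgument

variable {D : JordanDomain} {φ : ℂ → ℂ} {θ : ℝ → ℝ} (hφ : RiemannMap D φ)
  (hθ : BoundaryArgument D φ θ) {g V : ℂ → ℂ}
include hθ

theorem hasDerivAt_map_γ {s : ℝ} (hs : s ∈ Ioo 0 D.l) (hd : DifferentiableAt ℝ θ s) :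
    HasDerivAt (fun s => φ (D.γ s)) (φ (D.γ 0) * (exp (θ s * I) * (deriv θ s * I))) s := by
  have hasDerivAt_exp : HasDerivAt (fun s => φ (D.γ 0) * exp (θ s * I))
      (φ (D.γ 0) * (exp (θ s * I) * (deriv θ s * I))) s :=
    (hd.hasDerivAt.ofReal_comp.mul_const I).cexp.const_mul _
  exact hasDerivAt_exp.congr_of_eventuallyEq <|
    eventually_of_mem (Ioo_mem_nhds hs.1 hs.2) fun t ht => hθ.map_γ t (Ioo_subset_Icc_self ht)

include hφ

theorem sq_eq_of_NTLim {s₀ : ℝ} (h : D.RegularAt s₀) {κ v : ℂ}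
    (hφ' : HasDerivAt (fun s => φ (D.γ s)) (κ * deriv D.γ s₀) s₀)
    (hg : ∀ z ∈ D.G, g z ^ 2 = deriv φ z) (hv : NTLim D.G g (D.γ s₀) v) : v ^ 2 = κ := by
  refine tendsto_nhds_unique ((hθ.tendsto_innerNormalPoint_of_NTLim hφ h hv).pow 2) ?_
  refine (hθ.tendsto_deriv_innerNormalPoint hφ h hφ.continuousOn hφ.differentiableOn hφ').congr' ?_
  filter_upwards [hθ.eventually_innerNormalPoint_mem hφ h] with e he using (hg _ he).symm

theorem ae_hasDerivAt_map_γ (hg : ∀ z ∈ D.G, g z ^ 2 = deriv φ z)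
    (hV : D.IsNontangentialTrace g V) : ∀ᵐ s, s ∈ Ioo 0 D.l →
      HasDerivAt (fun s => φ (D.γ s)) (V (D.γ s) ^ 2 * deriv D.γ s) s ∧
        ‖V (D.γ s)‖ ^ 2 = deriv θ s := by
  filter_upwards [hV, D.ae_regularAt, hθ.monotone.ae_differentiableAt] with s hs regular hd s_mem
  have h := regular s_mem
  have deriv_γ_ne : deriv D.γ s ≠ 0 := norm_ne_zero_iff.1 (h.norm_deriv.symm ▸ one_ne_zero)
  obtain ⟨κ, hκ⟩ : ∃ κ, κ * deriv D.γ s = φ (D.γ 0) * (exp (θ s * I) * (deriv θ s * I)) :=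
    ⟨_, div_mul_cancel₀ _ deriv_γ_ne⟩
  have hasDerivAt := hκ ▸ hθ.hasDerivAt_map_γ s_mem hd
  have sq_eq := hθ.sq_eq_of_NTLim hφ h hasDerivAt hg hs
  refine ⟨sq_eq ▸ hasDerivAt, ?_⟩
  have norm_eq := congrArg norm hκ
  rw [norm_mul, norm_mul, norm_mul, norm_mul, h.norm_deriv, hφ.norm_map_γ,
    norm_exp_ofReal_mul_I, norm_I, mul_one, mul_one, one_mul, one_mul,
    norm_real, Real.norm_of_nonneg hθ.monotone.deriv_nonneg] at norm_eq
  rw [← norm_pow, sq_eq, norm_eq]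

theorem integral_trace_sq_mul_deriv (hg : ∀ z ∈ D.G, g z ^ 2 = deriv φ z)
    (hV : D.IsNontangentialTrace g V) {a b : ℝ} (ha : a ∈ Icc 0 D.l) (hb : b ∈ Icc 0 D.l) :
    IntervalIntegrable (fun s => V (D.γ s) ^ 2 * deriv D.γ s) volume a b ∧
      ∫ s in a..b, V (D.γ s) ^ 2 * deriv D.γ s = φ (D.γ b) - φ (D.γ a) := by
  have subset : uIcc a b ⊆ uIcc 0 D.l := uIcc_of_le D.l_pos.le ▸ uIcc_subset_Icc ha hb
  have argument_ac : AbsolutelyContinuousOnInterval (fun s => (θ s : ℂ)) a b :=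
    absolutelyContinuousOnInterval_comp_of_lipschitzOnWith (ofRealCLM.lipschitz.lipschitzOnWith)
      ((hθ.absolutelyContinuousOnInterval hφ).mono subset) (mapsTo_univ _ _)
  have exp_ac : AbsolutelyContinuousOnInterval (fun s => φ (D.γ 0) * exp (θ s * I)) a b :=
    absolutelyContinuousOnInterval_comp_of_differentiableOn
      (F := fun w => φ (D.γ 0) * exp (w * I)) isOpen_univ (by fun_prop) argument_ac
      (mapsTo_univ _ _)
  rw [hθ.map_γ a ha, hθ.map_γ b hb]
  refine intervalIntegrable_and_integral_eq_sub exp_ac ?_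
  filter_upwards [hθ.ae_hasDerivAt_map_γ hφ hg hV, Measure.ae_ne volume 0,
    Measure.ae_ne volume D.l] with s hs hs0 hsl hmem
  have s_mem : s ∈ Icc 0 D.l := uIcc_of_le D.l_pos.le ▸ subset hmem
  have s_mem_Ioo : s ∈ Ioo 0 D.l := ⟨s_mem.1.lt_of_ne' hs0, s_mem.2.lt_of_ne hsl⟩
  exact (hs s_mem_Ioo).1.congr_of_eventuallyEq <| eventually_of_mem
    (Ioo_mem_nhds s_mem_Ioo.1 s_mem_Ioo.2) fun t ht => (hθ.map_γ t (Ioo_subset_Icc_self ht)).symm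

theorem aemeasurable_trace (hg : ContinuousOn g D.G) (hV : D.IsNontangentialTrace g V) :
    AEMeasurable (fun s => V (D.γ s)) (volume.restrict (Ioc 0 D.l)) := by
  classical
  have piecewise_measurable : Measurable (D.G.piecewise g 0) :=
    hg.measurable_piecewise continuousOn_const D.isOpen.measurableSet
  have normalPoint_measurable (e : ℝ) : Measurable fun s => D.normalPoint s e :=
    D.γ_cont.measurable.add ((measurable_deriv D.γ).const_mul _)
  have approx_measurable (n : ℕ) :
      Measurable fun s => D.G.piecewise g 0 (D.innerNormalPoint s (1 / ((n : ℝ) + 1))) :=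
    piecewise_measurable.comp <| .ite
      (D.isOpen.measurableSet.preimage (normalPoint_measurable _)) (normalPoint_measurable _)
      (normalPoint_measurable _)
  have seq_tendsto : Tendsto (fun n : ℕ => 1 / ((n : ℝ) + 1)) atTop (nhdsWithin 0 (Ioi 0)) :=
    tendsto_nhdsWithin_iff.2 ⟨tendsto_one_div_add_atTop_nhds_zero_nat,
      .of_forall fun _ => mem_Ioi.2 Nat.one_div_pos_of_nat⟩
  refine aemeasurable_of_tendsto_metrizable_ae atTop
    (fun n => (approx_measurable n).aemeasurable) ?_
  rw [← restrict_Ioo_eq_restrict_Ioc, ae_restrict_iff' measurableSet_Ioo]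
  filter_upwards [hV, D.ae_regularAt] with s hs regular s_mem
  have h := regular s_mem
  suffices Tendsto (fun e => D.G.piecewise g 0 (D.innerNormalPoint s e)) (nhdsWithin 0 (Ioi 0))
      (nhds (V (D.γ s))) from this.comp seq_tendsto
  refine (hθ.tendsto_innerNormalPoint_of_NTLim hφ h hs).congr' ?_
  filter_upwards [hθ.eventually_innerNormalPoint_mem hφ h] with e he
  exact (piecewise_eq_of_mem _ _ _ he).symm

theorem ae_norm_trace_sq_eq (hg : ∀ z ∈ D.G, g z ^ 2 = deriv φ z)
    (hV : D.IsNontangentialTrace g V) :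
    (fun s => ‖V (D.γ s)‖ ^ 2) =ᵐ[volume.restrict (Ioc 0 D.l)] deriv θ := by
  rw [EventuallyEq, ← restrict_Ioo_eq_restrict_Ioc, ae_restrict_iff' measurableSet_Ioo]
  filter_upwards [hθ.ae_hasDerivAt_map_γ hφ hg hV] with s hs s_mem using (hs s_mem).2

theorem memLp_trace (hgc : ContinuousOn g D.G) (hg : ∀ z ∈ D.G, g z ^ 2 = deriv φ z)
    (hV : D.IsNontangentialTrace g V) :
    MemLp (fun s => V (D.γ s)) 2 (volume.restrict (Ioc 0 D.l)) := by
  rw [memLp_two_iff_integrable_sq_norm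
    (hθ.aemeasurable_trace hφ hgc hV).aestronglyMeasurable,
    integrable_congr (hθ.ae_norm_trace_sq_eq hφ hg hV)]
  exact (hθ.monotone.monotoneOn (uIcc 0 D.l)).intervalIntegrable_deriv.1

theorem integral_norm_trace_sq_le (hg : ∀ z ∈ D.G, g z ^ 2 = deriv φ z)
    (hV : D.IsNontangentialTrace g V) : ∫ s in 0..D.l, ‖V (D.γ s)‖ ^ 2 ≤ 2 * Real.pi := by
  have h := (hθ.monotone.monotoneOn (uIcc 0 D.l)).intervalIntegral_deriv_mem_uIcc
  rw [hθ.map_zero, hθ.map_length, sub_zero, uIcc_of_le Real.two_pi_pos.le] at h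
  rw [intervalIntegral.integral_of_le D.l_pos.le] at h ⊢
  rw [integral_congr_ae (hθ.ae_norm_trace_sq_eq hφ hg hV)]
  exact h.2

end BoundaryArgument

/-! ### The sup-norm estimate -/

section

variable {α E : Type*} [MeasurableSpace α] {μ : Measure α} [NormedAddCommGroup E] {u v : α → E}

theorem sq_integral_norm_mul_norm_le (hu : MemLp u 2 μ) (hv : MemLp v 2 μ) :
    (∫ x, ‖u x‖ * ‖v x‖ ∂μ) ^ 2 ≤ (∫ x, ‖u x‖ ^ 2 ∂μ) * ∫ x, ‖v x‖ ^ 2 ∂μ := by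
  have holder := integral_mul_norm_le_Lp_mul_Lq Real.HolderConjugate.two_two
    (by simpa using hu) (by simpa using hv)
  simp only [Real.rpow_ofNat, ← Real.sqrt_eq_rpow] at holder
  rw [← Real.sqrt_mul (integral_nonneg fun x => sq_nonneg _)] at holder
  refine (Real.le_sqrt (integral_nonneg fun x => by positivity) ?_).1 holder
  exact mul_nonneg (integral_nonneg fun x => sq_nonneg _) (integral_nonneg fun x => sq_nonneg _)

theorem integral_norm_add_sq_le (hu : MemLp u 2 μ) (hv : MemLp v 2 μ) :
    ∫ x, ‖u x + v x‖ ^ 2 ∂μ ≤ 2 * ((∫ x, ‖u x‖ ^ 2 ∂μ) + ∫ x, ‖v x‖ ^ 2 ∂μ) := by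
  have hu_sq := (memLp_two_iff_integrable_sq_norm hu.1).1 hu
  have hv_sq := (memLp_two_iff_integrable_sq_norm hv.1).1 hv
  rw [← integral_add hu_sq hv_sq, ← integral_const_mul]
  refine integral_mono_of_nonneg (ae_of_all _ fun x => sq_nonneg _)
    ((hu_sq.add hv_sq).const_mul 2) (ae_of_all _ fun x => ?_)
  exact (pow_le_pow_left₀ (norm_nonneg _) (norm_add_le _ _) 2).trans add_sq_le

end

theorem norm_sub_le_half_integral_of_closed {E : Type*} [NormedAddCommGroup E] {F : ℝ → E}
    {K : ℝ → ℝ} {a b : ℝ} (hF : F a = F b) (hK : IntervalIntegrable K volume a b)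
    (h : ∀ s ∈ Icc a b, ∀ t ∈ Icc a b, s ≤ t → ‖F t - F s‖ ≤ ∫ x in s..t, K x) {s t : ℝ}
    (hs : s ∈ Icc a b) (ht : t ∈ Icc a b) : ‖F t - F s‖ ≤ (∫ x in a..b, K x) / 2 := by
  wlog hst : s ≤ t generalizing s t
  · rw [norm_sub_rev]
    exact this ht hs (le_of_not_ge hst)
  have hab : a ≤ b := hs.1.trans hs.2
  have integrable {c d : ℝ} (hc : c ∈ Icc a b) (hd : d ∈ Icc a b) :
      IntervalIntegrable K volume c d :=
    hK.mono_set (uIcc_of_le hab ▸ uIcc_subset_Icc hc hd)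
  have a_mem : a ∈ Icc a b := left_mem_Icc.2 hab
  have b_mem : b ∈ Icc a b := right_mem_Icc.2 hab
  have split_integral : ∫ x in a..b, K x =
      (∫ x in a..s, K x) + (∫ x in s..t, K x) + ∫ x in t..b, K x := by
    rw [intervalIntegral.integral_add_adjacent_intervals (integrable a_mem hs) (integrable hs ht),
      intervalIntegral.integral_add_adjacent_intervals (integrable a_mem ht) (integrable ht b_mem)]
  have complementary_arc : ‖F t - F s‖ ≤ ‖F s - F a‖ + ‖F b - F t‖ := by
    rw [norm_sub_rev (F b), norm_sub_rev (F t), hF]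
    exact norm_sub_le_norm_sub_add_norm_sub _ _ _ |>.trans (by rw [norm_sub_rev (F b)])
  linarith [h s hs t ht hst, h a a_mem s hs hs.1, h t ht b b_mem ht.2]

theorem norm_le_of_forall_mem_frontier_norm_sub_le {G : Set ℂ} (hG : Bornology.IsBounded G)
    {F : ℂ → ℂ} (hF : DiffContOnCl ℂ F G) {ζ : ℂ} (hζ : ζ ∈ G) (hFζ : F ζ = 0) {C : ℝ}
    (hC : ∀ z ∈ frontier G, ∀ w ∈ frontier G, ‖F z - F w‖ ≤ C) {z : ℂ} (hz : z ∈ closure G) :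
    ‖F z‖ ≤ C := by
  refine norm_le_of_forall_mem_frontier_norm_le hG hF (fun w hw => ?_) hz
  have center := norm_le_of_forall_mem_frontier_norm_le hG (hF.sub_const (F w))
    (fun z hz => hC z hz w hw) (subset_closure hζ)
  simpa only [hFζ, zero_sub, norm_neg] using center

namespace JordanDomain

variable {D : JordanDomain}

theorem memLp_comp_γ {E : Type*} [NormedAddCommGroup E] {Q : ℂ → E} (hQ : Continuous Q) :
    MemLp (fun s => Q (D.γ s)) 2 (volume.restrict (Ioc 0 D.l)) := by
  have continuous_comp : Continuous fun s => Q (D.γ s) := hQ.comp D.γ_cont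
  exact (memLp_two_iff_integrable_sq_norm continuous_comp.aestronglyMeasurable).2
    (continuous_comp.norm.pow 2).integrableOn_Ioc

theorem integral_translate {E : Type*} [NormedAddCommGroup E] [NormedSpace ℝ E]
    (f : ℂ → E) (a : ℝ) :
    ∫ s in 0..(D.translate a).l, f ((D.translate a).γ s) = ∫ s in 0..D.l, f (D.γ s) := by
  have periodic : Function.Periodic (fun s => f (D.γ s)) D.l := D.γ_periodic.comp f
  change ∫ s in 0..D.l, f (D.γ (a + s)) = _
  rw [intervalIntegral.integral_comp_add_left (fun s => f (D.γ s)), add_zero,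
    periodic.intervalIntegral_add_eq a 0, zero_add]

theorem integral_reverse {E : Type*} [NormedAddCommGroup E] [NormedSpace ℝ E] (f : ℂ → E) :
    ∫ s in 0..D.reverse.l, f (D.reverse.γ s) = ∫ s in 0..D.l, f (D.γ s) := by
  have periodic : Function.Periodic (fun s => f (D.γ s)) D.l := D.γ_periodic.comp f
  change ∫ s in 0..D.l, f (D.γ (-s)) = _
  rw [intervalIntegral.integral_comp_neg fun s => f (D.γ s), neg_zero]
  simpa only [neg_add_cancel, zero_add] using periodic.intervalIntegral_add_eq (-D.l) 0

theorem IsNontangentialTrace.translate {g V : ℂ → ℂ} (h : D.IsNontangentialTrace g V) (a : ℝ) :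
    (D.translate a).IsNontangentialTrace g V :=
  (measurePreserving_add_left volume a).quasiMeasurePreserving.ae h

theorem IsNontangentialTrace.reverse {g V : ℂ → ℂ} (h : D.IsNontangentialTrace g V) :
    D.reverse.IsNontangentialTrace g V :=
  (Measure.measurePreserving_neg volume).quasiMeasurePreserving.ae h

end JordanDomain

namespace BoundaryArgument

variable {D : JordanDomain} {φ : ℂ → ℂ} {θ : ℝ → ℝ} (hφ : RiemannMap D φ)
  (hθ : BoundaryArgument D φ θ) {g V J Q : ℂ → ℂ} (hgc : ContinuousOn g D.G)
  (hg : ∀ z ∈ D.G, g z ^ 2 = deriv φ z) (hV : D.IsNontangentialTrace g V) (hQ : Continuous Q)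
  (hJ : ∀ z, HasDerivAt J (Q z ^ 2) z)
include hφ hθ hgc hg hV hQ

theorem sq_integral_norm_sub_mul_norm_add_le
    (hQ_norm : ∫ s in 0..D.l, ‖Q (D.γ s)‖ ^ 2 ≤ 2 * Real.pi) :
    (∫ s in 0..D.l, ‖V (D.γ s) - Q (D.γ s)‖ * ‖V (D.γ s) + Q (D.γ s)‖) ^ 2 ≤
      8 * Real.pi * ∫ s in 0..D.l, ‖V (D.γ s) - Q (D.γ s)‖ ^ 2 := by
  have trace_memLp := hθ.memLp_trace hφ hgc hg hV
  have Q_memLp := D.memLp_comp_γ hQ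
  have trace_norm := hθ.integral_norm_trace_sq_le hφ hg hV
  rw [intervalIntegral.integral_of_le D.l_pos.le] at hQ_norm trace_norm ⊢
  rw [intervalIntegral.integral_of_le D.l_pos.le]
  have add_norm : ∫ s in Ioc 0 D.l, ‖V (D.γ s) + Q (D.γ s)‖ ^ 2 ≤ 8 * Real.pi :=
    (integral_norm_add_sq_le trace_memLp Q_memLp).trans (by linarith)
  calc _ ≤ (∫ s in Ioc 0 D.l, ‖V (D.γ s) - Q (D.γ s)‖ ^ 2) *
        ∫ s in Ioc 0 D.l, ‖V (D.γ s) + Q (D.γ s)‖ ^ 2 :=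
      sq_integral_norm_mul_norm_le (trace_memLp.sub Q_memLp) (trace_memLp.add Q_memLp)
    _ ≤ (∫ s in Ioc 0 D.l, ‖V (D.γ s) - Q (D.γ s)‖ ^ 2) * (8 * Real.pi) :=
      mul_le_mul_of_nonneg_left add_norm (integral_nonneg fun s => sq_nonneg _)
    _ = _ := mul_comm _ _

theorem intervalIntegrable_norm_sub_mul_norm_add : IntervalIntegrable
    (fun s => ‖V (D.γ s) - Q (D.γ s)‖ * ‖V (D.γ s) + Q (D.γ s)‖) volume 0 D.l := by
  have trace_memLp := hθ.memLp_trace hφ hgc hg hV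
  have Q_memLp := D.memLp_comp_γ hQ
  rw [intervalIntegrable_iff_integrableOn_Ioc_of_le D.l_pos.le]
  exact (trace_memLp.sub Q_memLp).norm.integrable_mul (trace_memLp.add Q_memLp).norm

include hJ

theorem norm_sub_le_integral {a b : ℝ} (ha : a ∈ Icc 0 D.l) (hb : b ∈ Icc 0 D.l) (hab : a ≤ b) :
    ‖(φ (D.γ b) - J (D.γ b)) - (φ (D.γ a) - J (D.γ a))‖ ≤
      ∫ s in a..b, ‖V (D.γ s) - Q (D.γ s)‖ * ‖V (D.γ s) + Q (D.γ s)‖ := by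
  obtain ⟨trace_integrable, trace_integral⟩ := hθ.integral_trace_sq_mul_deriv hφ hg hV ha hb
  have Q_integrable : IntervalIntegrable (fun s => Q (D.γ s) ^ 2 * deriv D.γ s) volume a b :=
    intervalIntegrable_mul_deriv_of_lipschitzWith D.lipschitzWith
      ((hQ.comp D.γ_cont).pow 2).continuousOn
  have Q_integral : ∫ s in a..b, Q (D.γ s) ^ 2 * deriv D.γ s = J (D.γ b) - J (D.γ a) :=
    integral_comp_mul_deriv_eq_sub D.lipschitzWith isOpen_univ (fun z _ => hJ z)
      (mapsTo_univ _ _)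
  rw [sub_sub_sub_comm, ← trace_integral, ← Q_integral,
    ← intervalIntegral.integral_sub trace_integrable Q_integrable]
  refine intervalIntegral.norm_integral_le_of_norm_le hab ?_ <|
    (hθ.intervalIntegrable_norm_sub_mul_norm_add hφ hgc hg hV hQ).mono_set <|
      uIcc_of_le D.l_pos.le ▸ uIcc_subset_Icc ha hb
  filter_upwards [D.ae_norm_deriv_eq_one] with s norm_deriv _
  rw [← sub_mul, norm_mul, norm_deriv, mul_one, sq_sub_sq, norm_mul, mul_comm]

theorem norm_sub_le_of_mem_frontier {z w : ℂ} (hz : z ∈ frontier D.G) (hw : w ∈ frontier D.G) :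
    ‖(φ z - J z) - (φ w - J w)‖ ≤
      (∫ s in 0..D.l, ‖V (D.γ s) - Q (D.γ s)‖ * ‖V (D.γ s) + Q (D.γ s)‖) / 2 := by
  rw [← D.γ_boundary] at hz hw
  obtain ⟨t, ht, rfl⟩ := hz
  obtain ⟨s, hs, rfl⟩ := hw
  exact norm_sub_le_half_integral_of_closed (F := fun s => φ (D.γ s) - J (D.γ s))
    (by simp only [D.γ_l])
    (hθ.intervalIntegrable_norm_sub_mul_norm_add hφ hgc hg hV hQ)
    (fun s hs t ht => hθ.norm_sub_le_integral hφ hgc hg hV hQ hJ hs ht)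
    (Ico_subset_Icc_self hs) (Ico_subset_Icc_self ht)

theorem norm_sub_le (hQ_norm : ∫ s in 0..D.l, ‖Q (D.γ s)‖ ^ 2 ≤ 2 * Real.pi) {ζ z : ℂ}
    (hζ : ζ ∈ D.G) (hφJ : φ ζ = J ζ) (hz : z ∈ closure D.G) :
    ‖φ z - J z‖ ≤ √(2 * Real.pi * ∫ s in 0..D.l, ‖V (D.γ s) - Q (D.γ s)‖ ^ 2) := by
  have J_differentiable : Differentiable ℂ J := fun z => (hJ z).differentiableAt
  have oscillation := norm_le_of_forall_mem_frontier_norm_sub_le (F := fun z => φ z - J z) D.bounded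
    ⟨hφ.differentiableOn.sub J_differentiable.differentiableOn,
      hφ.continuousOn.sub J_differentiable.continuous.continuousOn⟩
    hζ (sub_eq_zero.2 hφJ)
    (fun z hz w hw => hθ.norm_sub_le_of_mem_frontier hφ hgc hg hV hQ hJ hz hw) hz
  refine oscillation.trans (Real.le_sqrt_of_sq_le ?_)
  rw [div_pow]
  linarith [hθ.sq_integral_norm_sub_mul_norm_add_le hφ hgc hg hV hQ hQ_norm]

end BoundaryArgument

theorem RiemannMap.norm_sub_le {D : JordanDomain} {φ g V J Q : ℂ → ℂ} (hφ : RiemannMap D φ)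
    (hgc : ContinuousOn g D.G) (hg : ∀ z ∈ D.G, g z ^ 2 = deriv φ z)
    (hV : D.IsNontangentialTrace g V) (hQ : Continuous Q) (hJ : ∀ z, HasDerivAt J (Q z ^ 2) z)
    (hQ_norm : ∫ s in 0..D.l, ‖Q (D.γ s)‖ ^ 2 ≤ 2 * Real.pi) {ζ z : ℂ} (hζ : ζ ∈ D.G)
    (hφJ : φ ζ = J ζ) (hz : z ∈ closure D.G) :
    ‖φ z - J z‖ ≤ √(2 * Real.pi * ∫ s in 0..D.l, ‖V (D.γ s) - Q (D.γ s)‖ ^ 2) := by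
  obtain ⟨a, θ, hθ | hθ⟩ := hφ.exists_boundaryArgument
  · rw [← D.integral_translate (fun w => ‖Q w‖ ^ 2) a] at hQ_norm
    rw [← D.integral_translate (fun w => ‖V w - Q w‖ ^ 2) a]
    exact hθ.norm_sub_le (hφ.translate a) hgc hg (hV.translate a) hQ hJ hQ_norm hζ hφJ hz
  · rw [← D.integral_translate (fun w => ‖Q w‖ ^ 2) a,
      ← (D.translate a).integral_reverse (fun w => ‖Q w‖ ^ 2)] at hQ_norm
    rw [← D.integral_translate (fun w => ‖V w - Q w‖ ^ 2) a,
      ← (D.translate a).integral_reverse (fun w => ‖V w - Q w‖ ^ 2)]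
    exact hθ.norm_sub_le (hφ.translate a).reverse hgc hg (hV.translate a).reverse hQ hJ hQ_norm
      hζ hφJ hz

theorem ae_comp_of_periodic {α : Type*} {f : ℝ → α} {c : ℝ} (hf : Function.Periodic f c)
    (hc : 0 < c) {P : α → Prop} (h : ∀ᵐ s ∂volume.restrict (Ioc 0 c), P (f s)) :
    ∀ᵐ s, P (f s) := by
  rw [ae_restrict_iff' measurableSet_Ioc] at h
  have translates : ∀ᵐ s, ∀ n : ℤ, s - n • c ∈ Ioc 0 c → P (f (s - n • c)) :=
    ae_all_iff.2 fun n => (measurePreserving_sub_right volume (n • c)).quasiMeasurePreserving.ae h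
  filter_upwards [translates] with s hs
  have mem_Ioc : s - toIocDiv hc 0 s • c ∈ Ioc 0 c := by simpa using toIocMod_mem_Ioc hc 0 s
  simpa only [hf.sub_zsmul_eq] using hs _ mem_Ioc

/-- The function on the boundary curve with value `v s` at `γ s`; its values away from the boundary
carry no information. -/
noncomputable def JordanDomain.boundaryFunction (D : JordanDomain) (v : ℝ → ℂ) (w : ℂ) : ℂ :=
  v (Function.invFunOn D.γ (Ioc 0 D.l) w)

namespace JordanDomain

variable {D : JordanDomain}

theorem boundaryFunction_γ {v : ℝ → ℂ} {s : ℝ} (hs : s ∈ Ioc 0 D.l) :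
    D.boundaryFunction v (D.γ s) = v s := by
  have injOn : InjOn D.γ (Ioc 0 D.l) := by simpa only [zero_add] using D.injOn_Ioc 0
  exact congrArg v (injOn.leftInvOn_invFunOn hs)

theorem isNontangentialTrace_boundaryFunction {g : ℂ → ℂ} {v : ℝ → ℂ}
    (h : ∀ᵐ s ∂volume.restrict (Ioc 0 D.l), NTLim D.G g (D.γ s) (v s)) :
    D.IsNontangentialTrace g (D.boundaryFunction v) := by
  refine ae_comp_of_periodic (P := fun w => NTLim D.G g w (D.boundaryFunction v w)) D.γ_periodic
    D.l_pos ?_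
  filter_upwards [h, ae_restrict_mem measurableSet_Ioc] with s hs s_mem
  rwa [boundaryFunction_γ s_mem]

theorem integral_boundaryFunction {E : Type*} [NormedAddCommGroup E] [NormedSpace ℝ E]
    (F : ℂ → ℂ → E) (v : ℝ → ℂ) :
    ∫ s in 0..D.l, F (D.boundaryFunction v (D.γ s)) (D.γ s) = ∫ s in 0..D.l, F (v s) (D.γ s) := by
  refine intervalIntegral.integral_congr_ae (ae_of_all _ fun s hs => ?_)
  rw [uIoc_of_le D.l_pos.le] at hs
  rw [boundaryFunction_γ hs]

end JordanDomain

/-! ### The extremal polynomials -/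

section

variable {D : JordanDomain} {p : ℕ → Polynomial ℂ} {ζ : ℂ} {n : ℕ}

theorem Jfun_center : Jfun D p ζ n ζ = 0 := by
  simp [Jfun]

theorem continuous_partialSum : Continuous (partialSum p ζ n) :=
  continuous_finsetSum _ fun k _ => continuous_const.mul (p k).continuous

theorem continuous_Qfun : Continuous (Qfun D p ζ n) :=
  continuous_const.mul continuous_partialSum

theorem eval_sum_C_mul_sq (z : ℂ) :
    ((∑ k ∈ Finset.range (n + 1), Polynomial.C ((starRingEnd ℂ) ((p k).eval ζ)) * p k) ^ 2).eval z =
      partialSum p ζ n z ^ 2 := by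
  simp only [Polynomial.eval_pow, Polynomial.eval_finsetSum, Polynomial.eval_mul,
    Polynomial.eval_C, partialSum]

end

theorem hasDerivAt_sum_coeff_mul_pow_sub_pow_div (S : Polynomial ℂ) (ζ z : ℂ) :
    HasDerivAt (fun z => ∑ i ∈ Finset.range (S.natDegree + 1),
      S.coeff i * ((z ^ (i + 1) - ζ ^ (i + 1)) / ((i : ℂ) + 1))) (S.eval z) z := by
  rw [Polynomial.eval_eq_sum_range]
  refine HasDerivAt.fun_sum fun i _ => HasDerivAt.const_mul _ ?_
  have hasDerivAt := ((hasDerivAt_pow (i + 1) z).sub_const (ζ ^ (i + 1))).div_const ((i : ℂ) + 1)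
  rwa [Nat.cast_succ, add_tsub_cancel_right, mul_div_cancel_left₀ _ i.cast_add_one_ne_zero]
    at hasDerivAt

namespace JordanDomain.IsONPolys

variable {D : JordanDomain} {p : ℕ → Polynomial ℂ} (hp : D.IsONPolys p) (ζ : ℂ) (n : ℕ)
include hp

theorem eval_zero_ne_zero : (p 0).eval ζ ≠ 0 := by
  obtain ⟨c, c_pos, hc⟩ := hp.2.1 0
  have p_zero_eq := Polynomial.eq_C_of_natDegree_eq_zero (hp.1 0)
  rw [Polynomial.leadingCoeff, hp.1 0] at hc
  rw [p_zero_eq, hc, Polynomial.eval_C]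
  exact ofReal_ne_zero.2 c_pos.ne'

theorem sum_norm_eval_sq_pos : 0 < ∑ k ∈ Finset.range (n + 1), ‖(p k).eval ζ‖ ^ 2 :=
  Finset.sum_pos' (fun k _ => sq_nonneg _)
    ⟨0, by simp, pow_pos (norm_pos_iff.2 (hp.eval_zero_ne_zero ζ)) 2⟩

theorem hasDerivAt_Jfun (z : ℂ) : HasDerivAt (Jfun D p ζ n) (Qfun D p ζ n z ^ 2) z := by
  have sum_pos := hp.sum_norm_eval_sq_pos ζ n
  have l_pos := D.l_pos
  have Q_sq_eq : Qfun D p ζ n z ^ 2 = (((2 * Real.pi / D.l : ℝ) : ℂ) /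
      (∑ k ∈ Finset.range (n + 1), ((‖(p k).eval ζ‖ : ℂ)) ^ 2)) * partialSum p ζ n z ^ 2 := by
    rw [Qfun, mul_pow, inv_pow, ← ofReal_pow, Real.sq_sqrt (by positivity)]
    push_cast
    rw [mul_inv, inv_div, div_eq_mul_inv _ (Finset.sum _ _)]
  rw [Q_sq_eq, ← eval_sum_C_mul_sq]
  exact (hasDerivAt_sum_coeff_mul_pow_sub_pow_div _ ζ z).const_mul _

theorem integral_eval_mul_conj_eval (j k : ℕ) :
    ∫ s in 0..D.l, (p j).eval (D.γ s) * (starRingEnd ℂ) ((p k).eval (D.γ s)) =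
      if j = k then (D.l : ℂ) else 0 := by
  have l_ne : (D.l : ℂ) ≠ 0 := ofReal_ne_zero.2 D.l_pos.ne'
  have orthonormal := hp.2.2 j k
  rwa [one_div, inv_mul_eq_iff_eq_mul₀ l_ne, mul_ite, mul_one, mul_zero] at orthonormal

theorem integral_norm_partialSum_sq : ∫ s in 0..D.l, ‖partialSum p ζ n (D.γ s)‖ ^ 2 =
    D.l * ∑ k ∈ Finset.range (n + 1), ‖(p k).eval ζ‖ ^ 2 := by
  let term (j k : ℕ) (s : ℝ) : ℂ := (starRingEnd ℂ) ((p j).eval ζ) * (p k).eval ζ *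
    ((p j).eval (D.γ s) * (starRingEnd ℂ) ((p k).eval (D.γ s)))
  have expand_square (s : ℝ) : ((‖partialSum p ζ n (D.γ s)‖ ^ 2 : ℝ) : ℂ) =
      ∑ j ∈ Finset.range (n + 1), ∑ k ∈ Finset.range (n + 1), term j k s := by
    rw [ofReal_pow, ← mul_conj', partialSum, map_sum, Finset.sum_mul_sum]
    refine Finset.sum_congr rfl fun j _ => Finset.sum_congr rfl fun k _ => ?_
    rw [map_mul, conj_conj]
    ring
  have continuous_eval (k : ℕ) : Continuous fun s => (p k).eval (D.γ s) :=
    (p k).continuous.comp D.γ_cont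
  have continuous_term (j k : ℕ) : Continuous (term j k) := by fun_prop
  have integral_term (j k : ℕ) : ∫ s in 0..D.l, term j k s =
      if j = k then ((D.l * ‖(p j).eval ζ‖ ^ 2 : ℝ) : ℂ) else 0 := by
    rw [intervalIntegral.integral_const_mul, hp.integral_eval_mul_conj_eval, mul_ite, mul_zero]
    split_ifs with hjk
    · rw [← hjk, conj_mul', mul_comm, ofReal_mul, ofReal_pow]
    · rfl
  apply ofReal_injective
  rw [← intervalIntegral.integral_ofReal]
  simp_rw [expand_square]
  rw [intervalIntegral.integral_finsetSum fun j _ =>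
    (continuous_finsetSum _ fun k _ => continuous_term j k).intervalIntegrable _ _,
    Finset.mul_sum, ofReal_sum]
  refine Finset.sum_congr rfl fun j hj => ?_
  rw [intervalIntegral.integral_finsetSum fun k _ => (continuous_term j k).intervalIntegrable _ _]
  simp_rw [integral_term, Finset.sum_ite_eq, if_pos hj]

theorem integral_norm_Qfun_sq : ∫ s in 0..D.l, ‖Qfun D p ζ n (D.γ s)‖ ^ 2 = 2 * Real.pi := by
  have sum_pos := hp.sum_norm_eval_sq_pos ζ n
  have l_pos := D.l_pos
  simp_rw [Qfun, norm_mul, mul_pow, norm_inv, norm_real, Real.norm_eq_abs, inv_pow, sq_abs]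
  rw [intervalIntegral.integral_const_mul, hp.integral_norm_partialSum_sq,
    Real.sq_sqrt (by positivity)]
  field_simp

end JordanDomain.IsONPolys

/-- inequality (3.1). Let `G` be a Jordan domain with rectifiable
boundary of length `l`, `ζ ∈ G`, and `Q_n` as above (so `J'_{2n+1} = Q_n²`). Then
`‖φ - J_{2n+1}‖_∞ ≤ √(2πl)·‖√(φ') - Q_n‖₂`, where `g = √(φ')` is the analytic branch
of the square root of `φ'` on `G` with `√(φ'(ζ)) > 0`, and `gb` is its nontangential
boundary trace. -/
theorem sup_norm_le_sqrt_deriv_L2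
    (D : JordanDomain)
    (p : ℕ → Polynomial ℂ) (hp : D.IsONPolys p)
    (ζ : ℂ) (hζ : ζ ∈ D.G)
    (φ : ℂ → ℂ) (hφ : ConformalOnto D.G φ ζ) (hφc : ContinuousOn φ (closure D.G))
    (g : ℂ → ℂ) (hgd : DifferentiableOn ℂ g D.G)
    (hgsq : ∀ z ∈ D.G, g z ^ 2 = deriv φ z)
    (hgζ : ∃ c : ℝ, 0 < c ∧ g ζ = (c : ℂ))
    (gb : ℝ → ℂ)
    (hgb : ∀ᵐ s ∂(volume.restrict (Ioc (0 : ℝ) D.l)), NTLim D.G g (D.γ s) (gb s)) :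
    ∀ n : ℕ,
      supNormOn (closure D.G) (fun z => φ z - Jfun D p ζ n z) ≤
        Real.sqrt (2 * Real.pi * D.l) *
          D.bnorm (fun s => gb s - Qfun D p ζ n (D.γ s)) := by
  intro n
  have riemannMap : RiemannMap D φ :=
    ⟨fun z hz => (hφ.differentiable z hz).differentiableWithinAt, hφ.bijOn, hφc⟩
  have center : φ ζ = Jfun D p ζ n ζ := hφ.map_center.trans Jfun_center.symm
  have rhs_eq : Real.sqrt (2 * Real.pi * D.l) * D.bnorm (fun s => gb s - Qfun D p ζ n (D.γ s)) =
      √(2 * Real.pi * ∫ s in 0..D.l, ‖gb s - Qfun D p ζ n (D.γ s)‖ ^ 2) := by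
    have l_pos := D.l_pos
    rw [JordanDomain.bnorm, ← Real.sqrt_mul (by positivity)]
    congr 1
    field_simp
  have : Nonempty (closure D.G) := ⟨⟨ζ, subset_closure hζ⟩⟩
  refine ciSup_le fun z => ?_
  rw [rhs_eq, ← D.integral_boundaryFunction fun v w => ‖v - Qfun D p ζ n w‖ ^ 2]
  exact riemannMap.norm_sub_le hgd.continuousOn hgsq
    (D.isNontangentialTrace_boundaryFunction hgb) continuous_Qfun (hp.hasDerivAt_Jfun ζ n)
    (hp.integral_norm_Qfun_sq ζ n).le hζ center z.2
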